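/- arXiv:2303.10665 — 2 statements merged into one kernel-verified Lean document; each statement's English description precedes it below -/
import Mathlib

section
/- (Approximate optimality of M3FC solutions.) Let 𝒳, 𝒰, 𝒳⁰, 𝒰⁰ be compact metric spaces, with p, p⁰, r Lipschitz, γ ∈ (0,1), and equi-Lipschitz policy classes Π, Π⁰. Let (π̂*, π⁰*) be optimal deterministic policies for the limiting M3FC MDP, i.e., (π̂*, π⁰*) ∈ argmax J(π̂, π⁰) where J(π̂,π⁰) = E[Σ_t γ^t r(x⁰_t, u⁰_t, μ_t)], and suppose the induced agent-level policy satisfies Φ(π̂*) ∈ Π. Then (Φ(π̂*), π⁰*) is ε-optimal in the N-agent system: J^N(Φ(π̂*), π⁰*) ≥ sup_{(π,π⁰) ∈ Π × Π⁰} J^N(π, π⁰) − ε, with ε = ε(N) → 0 as N → ∞. -/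
open MeasureTheory

noncomputable instance {X : Type*} [MeasurableSpace X] : MeasurableSpace (ProbabilityMeasure X) :=
  inferInstanceAs (MeasurableSpace {μ : Measure X // IsProbabilityMeasure μ})

/-- `W₁` distance on probability measures, via Kantorovich duality. -/
noncomputable def W1 {X : Type*} [MeasurableSpace X] [PseudoMetricSpace X]
    (μ ν : ProbabilityMeasure X) : ℝ :=
  ⨆ f : {f : X → ℝ // LipschitzWith 1 f},
    |∫ x, (f : X → ℝ) x ∂(μ : Measure X) - ∫ x, (f : X → ℝ) x ∂(ν : Measure X)|

/-- Empirical measure of `N` points (an arbitrary probability measure if `N = 0`). -/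
noncomputable def emp {X : Type*} [MeasurableSpace X] [Nonempty X] (N : ℕ) (x : Fin N → X) :
    ProbabilityMeasure X := by
  classical
  exact if hN : N = 0 then ⟨Measure.dirac (Classical.arbitrary X), inferInstance⟩
  else ⟨(N : ENNReal)⁻¹ • ∑ i : Fin N, Measure.dirac (x i), by
    constructor
    simp only [Measure.smul_apply, Measure.coe_finset_sum, Finset.sum_apply,
      Measure.dirac_apply' _ MeasurableSet.univ, smul_eq_mul]
    simp only [Set.indicator_univ, Pi.one_apply, Finset.sum_const, Finset.card_univ,
      Fintype.card_fin, nsmul_eq_mul, mul_one]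
    exact ENNReal.inv_mul_cancel (by exact_mod_cast hN) (by simp)⟩

/-- Law of `(x⁰_t, u⁰_t, (x^{i,N}_t)_i)` in the `N`-agent M3FC system: minor agents start
i.i.d. `μ0`, the major agent starts at `x00`; minor actions are sampled from the shared policy
`π`, the major action from `π0`, and states transition through `p` and `p⁰`, all driven by the
empirical mean field. -/
noncomputable def m3LawN {X U X0 U0 : Type*} [MeasurableSpace X] [Nonempty X]
    [MeasurableSpace U] [MeasurableSpace X0] [MeasurableSpace U0]
    (p : X → U → X0 → U0 → ProbabilityMeasure X → ProbabilityMeasure X)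
    (p0 : X0 → U0 → ProbabilityMeasure X → ProbabilityMeasure X0)
    (π : ℕ → X → X0 → ProbabilityMeasure X → ProbabilityMeasure U)
    (π0 : ℕ → X0 → ProbabilityMeasure X → ProbabilityMeasure U0)
    (μ0 : ProbabilityMeasure X) (x00 : X0) (N : ℕ) :
    ℕ → Measure (X0 × U0 × (Fin N → X))
  | 0 => (Measure.pi fun _ : Fin N => (μ0 : Measure X)).bind fun x =>
      ((π0 0 x00 (emp N x) : Measure U0)).map fun u0 => (x00, u0, x)
  | t + 1 => (m3LawN p p0 π π0 μ0 x00 N t).bind fun s =>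
      (((p0 s.1 s.2.1 (emp N s.2.2) : Measure X0)).prod
        (Measure.pi fun i => ((π t (s.2.2 i) s.1 (emp N s.2.2) : Measure U)).bind
          fun u => (p (s.2.2 i) u s.1 s.2.1 (emp N s.2.2) : Measure X))).bind
        fun y => ((π0 (t + 1) y.1 (emp N y.2) : Measure U0)).map fun u0 => (y.1, u0, y.2)

/-- Law of `(x⁰_t, u⁰_t, μ_t)` in the limiting M3FC process, where `Tq t x⁰ u⁰ μ` is the
(closed-loop) deterministic mean field transition. -/
noncomputable def m3LimLaw {X U0 X0 : Type*} [MeasurableSpace X]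
    [MeasurableSpace X0] [MeasurableSpace U0]
    (p0 : X0 → U0 → ProbabilityMeasure X → ProbabilityMeasure X0)
    (π0 : ℕ → X0 → ProbabilityMeasure X → ProbabilityMeasure U0)
    (Tq : ℕ → X0 → U0 → ProbabilityMeasure X → ProbabilityMeasure X)
    (μ0 : ProbabilityMeasure X) (x00 : X0) :
    ℕ → Measure (X0 × U0 × ProbabilityMeasure X)
  | 0 => ((π0 0 x00 μ0 : Measure U0)).map fun u0 => (x00, u0, μ0)
  | t + 1 => (m3LimLaw p0 π0 Tq μ0 x00 t).bind fun s =>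
      ((p0 s.1 s.2.1 s.2.2 : Measure X0)).bind fun y0 =>
        ((π0 (t + 1) y0 (Tq t s.1 s.2.1 s.2.2) : Measure U0)).map
          fun u0 => (y0, u0, Tq t s.1 s.2.1 s.2.2)


/-- The action set `ℋ(μ)`: joint distributions on `𝒳 × 𝒰` with first marginal `μ`. -/
def Hset {X U : Type*} [MeasurableSpace X] [MeasurableSpace U]
    (μ : ProbabilityMeasure X) : Set (ProbabilityMeasure (X × U)) :=
  {h | (h : Measure (X × U)).map Prod.fst = (μ : Measure X)}

/-- Law of the M3FC MDP state `(x⁰_t, μ_t)` under a (time-variant, deterministic) M3FC policy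
`pol` choosing actions `(h, u⁰) ∈ ℋ(μ) × 𝒰⁰`, with mean field transition `T` and major kernel
`p⁰`, started at `s0`. -/
noncomputable def m3Law {X U X0 U0 : Type*} [MeasurableSpace X] [MeasurableSpace U]
    [MeasurableSpace X0] [MeasurableSpace U0]
    (p0 : X0 → U0 → ProbabilityMeasure X → ProbabilityMeasure X0)
    (T : X0 → U0 → ProbabilityMeasure X → ProbabilityMeasure (X × U) → ProbabilityMeasure X)
    (pol : ℕ → X0 × ProbabilityMeasure X → ProbabilityMeasure (X × U) × U0)
    (s0 : X0 × ProbabilityMeasure X) : ℕ → Measure (X0 × ProbabilityMeasure X)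
  | 0 => Measure.dirac s0
  | t + 1 => (m3Law p0 T pol s0 t).bind fun s =>
      ((p0 s.1 (pol t s).2 s.2 : Measure X0)).map fun y =>
        (y, T s.1 (pol t s).2 s.2 (pol t s).1)


namespace M3
open ProbabilityTheory Filter Topology
set_option linter.unusedSectionVars false

section gen
variable {A B : Type*} [MeasurableSpace A] [MeasurableSpace B]

lemma int_bdd {m : Measure A} [IsFiniteMeasure m] {F : A → ℝ} (hF : Measurable F)
    {C : ℝ} (hC : ∀ a, |F a| ≤ C) : Integrable F m :=
  Integrable.of_bound hF.aestronglyMeasurable C (ae_of_all _ (by simpa using hC))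

lemma abs_int_le {m : Measure A} [IsProbabilityMeasure m] {F : A → ℝ}
    {C : ℝ} (hC : ∀ a, |F a| ≤ C) : |∫ a, F a ∂m| ≤ C := by
  have := norm_integral_le_of_norm_le_const (μ := m) (f := F) (C := C)
    (ae_of_all _ (by simpa using hC))
  simpa using this

lemma integral_bind {m : Measure A} [IsFiniteMeasure m] {κ : A → Measure B} (hκ : Measurable κ)
    (hκ1 : ∀ a, IsProbabilityMeasure (κ a)) {F : B → ℝ} (hF : Measurable F)
    {C : ℝ} (hC : ∀ a, |F a| ≤ C) :
    ∫ b, F b ∂(m.bind κ) = ∫ a, ∫ b, F b ∂(κ a) ∂m := by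
  let η : Kernel A B := ⟨κ, hκ⟩
  have : IsMarkovKernel η := ⟨hκ1⟩
  have h1 : (η ∘ₖ Kernel.const Unit m) () = m.bind κ := by
    rw [Kernel.comp_apply]; rfl
  have h2 : Integrable F ((η ∘ₖ Kernel.const Unit m) ()) := int_bdd hF hC
  have := Kernel.integral_comp h2
  rw [h1] at this
  rw [this]; rfl

lemma isProb_bind {m : Measure A} [IsProbabilityMeasure m] {κ : A → Measure B} (hκ : Measurable κ)
    (hκ1 : ∀ a, IsProbabilityMeasure (κ a)) : IsProbabilityMeasure (m.bind κ) := by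
  constructor
  rw [Measure.bind_apply MeasurableSet.univ hκ.aemeasurable]
  simp

lemma meas_integral {κ : A → Measure B} (hκ : Measurable κ)
    (hκ1 : ∀ a, IsProbabilityMeasure (κ a)) {F : A → B → ℝ} (hF : Measurable (Function.uncurry F)) :
    Measurable fun a => ∫ b, F a b ∂(κ a) := by
  let η : Kernel A B := ⟨κ, hκ⟩
  have : IsMarkovKernel η := ⟨hκ1⟩
  exact (StronglyMeasurable.integral_kernel_prod_right (κ := η) hF.stronglyMeasurable).measurable

lemma meas_map {C : Type*} [MeasurableSpace C] {κ : A → Measure B} (hκ : Measurable κ)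
    (hκ1 : ∀ a, IsProbabilityMeasure (κ a)) {F : A → B → C} (hF : Measurable (Function.uncurry F)) :
    Measurable fun a => (κ a).map (F a) := by
  let η : Kernel A B := ⟨κ, hκ⟩
  have : IsMarkovKernel η := ⟨hκ1⟩
  refine Measure.measurable_of_measurable_coe _ fun s hs => ?_
  have : ∀ a, (κ a).map (F a) s = η a (Prod.mk a ⁻¹' (Function.uncurry F ⁻¹' s)) := by
    intro a
    have hFa : Measurable (F a) := hF.comp measurable_prodMk_left
    rw [Measure.map_apply hFa hs]; rfl
  simp_rw [this]
  exact Kernel.measurable_kernel_prodMk_left (hF hs)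

lemma meas_pi {ι : Type*} [Fintype ι] {κ : ι → A → Measure B} (hκ : ∀ i, Measurable (κ i))
    (hκ1 : ∀ i a, IsProbabilityMeasure (κ i a)) :
    Measurable fun a => Measure.pi (fun i => κ i a) := by
  refine Measurable.measure_of_isPiSystem_of_isProbabilityMeasure generateFrom_pi.symm
    isPiSystem_pi ?_
  rintro s ⟨t, ht, rfl⟩
  simp_rw [Measure.pi_pi]
  refine Finset.measurable_fun_prod _ fun i _ => ?_
  exact (Measure.measurable_coe (ht i (Set.mem_univ _))).comp (hκ i)

lemma meas_prod {C : Type*} [MeasurableSpace C] {κ : A → Measure B} (hκ : Measurable κ)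
    (hκ1 : ∀ a, IsProbabilityMeasure (κ a)) {κ' : A → Measure C} (hκ' : Measurable κ')
    (hκ1' : ∀ a, IsProbabilityMeasure (κ' a)) :
    Measurable fun a => (κ a).prod (κ' a) := by
  refine Measurable.measure_of_isPiSystem_of_isProbabilityMeasure generateFrom_prod.symm
    isPiSystem_prod ?_
  rintro s ⟨t, ht, u, hu, rfl⟩
  simp_rw [Measure.prod_prod]
  exact ((Measure.measurable_coe ht).comp hκ).mul ((Measure.measurable_coe hu).comp hκ')

lemma meas_bind {C : Type*} [MeasurableSpace C] {κ : A → Measure B} (hκ : Measurable κ)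
    (hκ1 : ∀ a, IsProbabilityMeasure (κ a)) {κ' : A → B → Measure C}
    (hκ' : Measurable (Function.uncurry κ')) (hκ1' : ∀ a b, IsProbabilityMeasure (κ' a b)) :
    Measurable fun a => (κ a).bind (κ' a) := by
  let η : Kernel A B := ⟨κ, hκ⟩
  have : IsMarkovKernel η := ⟨hκ1⟩
  refine Measure.measurable_of_measurable_coe _ fun s hs => ?_
  have : ∀ a, (κ a).bind (κ' a) s = ∫⁻ b, κ' a b s ∂(η a) := by
    intro a
    have hFa : Measurable (κ' a) := hκ'.comp measurable_prodMk_left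
    rw [Measure.bind_apply hs hFa.aemeasurable]; rfl
  simp_rw [this]
  exact Measurable.lintegral_kernel_prod_right ((Measure.measurable_coe hs).comp hκ')

lemma meas_coe : Measurable fun μ : ProbabilityMeasure A => (μ : Measure A) :=
  measurable_subtype_coe

lemma meas_mk {g : A → ProbabilityMeasure B} (h : Measurable fun a => (g a : Measure B)) :
    Measurable g := Measurable.subtype_mk (h := fun a => (g a).2) h

end gen

section lip
variable {X : Type*} [MetricSpace X] [CompactSpace X] [MeasurableSpace X] [BorelSpace X]

lemma lip_cont {f : X → ℝ} {K : ℝ} (h : ∀ x y, |f x - f y| ≤ K * dist x y) : Continuous f := by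
  have : LipschitzWith K.toNNReal f := LipschitzWith.of_dist_le_mul fun x y => by
    rw [Real.dist_eq]
    refine (h x y).trans (mul_le_mul_of_nonneg_right ?_ dist_nonneg)
    exact Real.le_coe_toNNReal K
  exact this.continuous

lemma cont_bdd {f : X → ℝ} (h : Continuous f) : ∃ C, ∀ x, |f x| ≤ C := by
  obtain ⟨C, hC⟩ := isCompact_univ.exists_bound_of_continuousOn h.continuousOn
  exact ⟨C, fun x => by simpa using hC x trivial⟩

lemma cont_int {f : X → ℝ} (h : Continuous f) (m : Measure X) [IsFiniteMeasure m] :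
    Integrable f m := by
  obtain ⟨C, hC⟩ := cont_bdd h
  exact int_bdd h.measurable hC

lemma lip_iff {f : X → ℝ} : LipschitzWith 1 f ↔ ∀ x y, |f x - f y| ≤ dist x y := by
  rw [lipschitzWith_iff_dist_le_mul]; simp [Real.dist_eq]

lemma dist_le_D (x y : X) : dist x y ≤ Metric.diam (Set.univ : Set X) :=
  Metric.dist_le_diam_of_mem isCompact_univ.isBounded trivial trivial

/-- any difference of integrals of a 1-Lipschitz function is bounded by twice the diameter -/
lemma lip_diff_le {f : X → ℝ} (hf : LipschitzWith 1 f) (μ ν : ProbabilityMeasure X) :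
    |∫ x, f x ∂(μ : Measure X) - ∫ x, f x ∂(ν : Measure X)|
      ≤ 2 * Metric.diam (Set.univ : Set X) := by
  obtain ⟨a⟩ : Nonempty X := by
    by_contra h
    rw [not_nonempty_iff] at h
    have := measure_univ (μ := (μ : Measure X))
    simp [Measure.eq_zero_of_isEmpty] at this
  have key : ∀ ρ : ProbabilityMeasure X,
      |∫ x, f x ∂(ρ : Measure X) - f a| ≤ Metric.diam (Set.univ : Set X) := by
    intro ρ
    have : ∫ x, f x ∂(ρ : Measure X) - f a = ∫ x, (f x - f a) ∂(ρ : Measure X) := by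
      rw [integral_sub (cont_int hf.continuous _) (integrable_const _)]; simp
    rw [this]
    exact abs_int_le fun x => (lip_iff.1 hf x a).trans (dist_le_D _ _)
  have h1 := abs_le.1 (key μ)
  have h2 := abs_le.1 (key ν)
  rw [abs_le]; constructor <;> linarith

lemma le_W1 {f : X → ℝ} (hf : LipschitzWith 1 f) (μ ν : ProbabilityMeasure X) :
    |∫ x, f x ∂(μ : Measure X) - ∫ x, f x ∂(ν : Measure X)| ≤ W1 μ ν := by
  refine le_ciSup (f := fun f : {f : X → ℝ // LipschitzWith 1 f} =>
    |∫ x, (f : X → ℝ) x ∂(μ : Measure X) - ∫ x, (f : X → ℝ) x ∂(ν : Measure X)|) ?_ ⟨f, hf⟩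
  refine ⟨2 * Metric.diam (Set.univ : Set X), ?_⟩
  rintro _ ⟨g, rfl⟩
  exact lip_diff_le g.2 _ _

lemma W1_le {μ ν : ProbabilityMeasure X} {c : ℝ} (h : ∀ f : X → ℝ, LipschitzWith 1 f →
    |∫ x, f x ∂(μ : Measure X) - ∫ x, f x ∂(ν : Measure X)| ≤ c) : W1 μ ν ≤ c := by
  have : Nonempty {f : X → ℝ // LipschitzWith 1 f} := ⟨⟨fun _ => 0, LipschitzWith.const' 0⟩⟩
  exact ciSup_le fun f => h f.1 f.2

lemma W1_nonneg (μ ν : ProbabilityMeasure X) : 0 ≤ W1 μ ν :=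
  (abs_nonneg _).trans (le_W1 (LipschitzWith.const' (0 : ℝ)) μ ν)

lemma W1_self (μ : ProbabilityMeasure X) : W1 μ μ = 0 :=
  le_antisymm (W1_le fun f _ => by simp) (W1_nonneg _ _)

lemma W1_le_D (μ ν : ProbabilityMeasure X) : W1 μ ν ≤ 2 * Metric.diam (Set.univ : Set X) :=
  W1_le fun _ hf => lip_diff_le hf _ _

lemma scale {μ ν : ProbabilityMeasure X} {c : ℝ} (h : ∀ f : X → ℝ, LipschitzWith 1 f →
    |∫ x, f x ∂(μ : Measure X) - ∫ x, f x ∂(ν : Measure X)| ≤ c) {K : ℝ} (hK : 0 ≤ K)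
    {f : X → ℝ} (hf : ∀ x y, |f x - f y| ≤ K * dist x y) :
    |∫ x, f x ∂(μ : Measure X) - ∫ x, f x ∂(ν : Measure X)| ≤ K * c := by
  rcases hK.eq_or_lt with rfl | hK
  · have hc : ∀ x y, f x = f y := fun x y => by
      have := hf x y
      simp only [zero_mul, abs_nonpos_iff] at this
      linarith
    by_cases hX : Nonempty X
    · obtain ⟨a⟩ := hX
      have : f = fun _ => f a := funext fun x => hc x a
      rw [this]; simp
    · rw [not_nonempty_iff] at hX
      simp [Measure.eq_zero_of_isEmpty]
  · have h1 := h (fun x => K⁻¹ * f x) (lip_iff.2 fun x y => by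
      rw [← mul_sub, abs_mul, abs_of_pos (inv_pos.2 hK), inv_mul_le_iff₀ hK]
      exact hf x y)
    rw [integral_const_mul, integral_const_mul, ← mul_sub, abs_mul, abs_of_pos (inv_pos.2 hK),
      inv_mul_le_iff₀ hK] at h1
    exact h1

lemma scale_W1 {μ ν : ProbabilityMeasure X} {K : ℝ} (hK : 0 ≤ K)
    {f : X → ℝ} (hf : ∀ x y, |f x - f y| ≤ K * dist x y) :
    |∫ x, f x ∂(μ : Measure X) - ∫ x, f x ∂(ν : Measure X)| ≤ K * W1 μ ν :=
  scale (fun _ hf => le_W1 hf μ ν) hK hf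

/-- finite nets of test functions -/
lemma exists_net (X : Type*) [MetricSpace X] [CompactSpace X] [MeasurableSpace X] [BorelSpace X]
    {δ : ℝ} (hδ : 0 < δ) : ∃ t : Finset (X → ℝ), (∀ f ∈ t, LipschitzWith 1 f) ∧
    ∀ μ ν : ProbabilityMeasure X, ∃ f ∈ t,
      W1 μ ν ≤ δ + |∫ x, f x ∂(μ : Measure X) - ∫ x, f x ∂(ν : Measure X)| := by
  classical
  by_cases hX : Nonempty X
  swap
  · refine ⟨{fun _ => 0}, ?_, ?_⟩
    · intro f hf
      rw [Finset.mem_singleton] at hf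
      subst hf
      exact LipschitzWith.const' 0
    · intro μ
      rw [not_nonempty_iff] at hX
      have := measure_univ (μ := (μ : Measure X))
      simp [Measure.eq_zero_of_isEmpty] at this
  obtain ⟨a⟩ := hX
  set D := Metric.diam (Set.univ : Set X)
  let S : Set (BoundedContinuousFunction X ℝ) := {f | LipschitzWith 1 f ∧ f a = 0}
  have hS : IsCompact S := by
    refine BoundedContinuousFunction.arzela_ascoli₂ (Set.Icc (-D) D) isCompact_Icc S ?_ ?_ ?_
    · have : S = (⋂ x, ⋂ y, {f : BoundedContinuousFunction X ℝ | |f x - f y| ≤ dist x y})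
          ∩ {f | f a = 0} := by
        ext f; simp [S, lip_iff]
      rw [this]
      refine IsClosed.inter (isClosed_iInter fun x => isClosed_iInter fun y => ?_) ?_
      · exact isClosed_le (by fun_prop) continuous_const
      · exact isClosed_eq (by fun_prop) continuous_const
    · rintro f x ⟨hf, h0⟩
      have := (lip_iff.1 hf x a).trans (dist_le_D _ _)
      rw [h0, sub_zero] at this
      exact abs_le.1 this
    · exact (LipschitzWith.uniformEquicontinuous _ 1 fun f : S => f.2.1).equicontinuous
  obtain ⟨t, htS, htf, hcov⟩ := hS.finite_cover_balls (e := δ / 4) (by positivity)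
  refine ⟨Finset.image (fun f : BoundedContinuousFunction X ℝ => (⇑f : X → ℝ)) htf.toFinset, ?_, ?_⟩
  · intro f hf
    simp only [Finset.mem_image, Set.Finite.mem_toFinset] at hf
    obtain ⟨g, hg, rfl⟩ := hf
    exact (htS hg).1
  · intro μ ν
    have hW : W1 μ ν - δ / 2 < W1 μ ν := by linarith
    obtain ⟨f, hf, hlt⟩ : ∃ f : X → ℝ, LipschitzWith 1 f ∧ W1 μ ν - δ / 2 <
        |∫ x, f x ∂(μ : Measure X) - ∫ x, f x ∂(ν : Measure X)| := by
      by_contra hcon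
      push Not at hcon
      have := W1_le hcon
      linarith
    let g : BoundedContinuousFunction X ℝ :=
      BoundedContinuousFunction.mkOfCompact ⟨fun x => f x - f a, by
        exact hf.continuous.sub continuous_const⟩
    have hg : ∀ x, g x = f x - f a := fun x => rfl
    have hgS : g ∈ S := by
      refine ⟨lip_iff.2 fun x y => ?_, by simp [hg]⟩
      rw [hg, hg]
      simpa using lip_iff.1 hf x y
    obtain ⟨h, hht, hgh⟩ : ∃ h ∈ t, g ∈ Metric.ball h (δ / 4) := by
      simpa using hcov hgS
    refine ⟨h, Finset.mem_image.2 ⟨h, by simpa using hht, rfl⟩, ?_⟩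
    have hpt : ∀ x, |g x - h x| ≤ δ / 4 := fun x => by
      rw [← Real.dist_eq]
      exact (BoundedContinuousFunction.dist_coe_le_dist x).trans (le_of_lt hgh)
    have key : ∀ ρ : ProbabilityMeasure X,
        |(∫ x, f x ∂(ρ : Measure X)) - f a - ∫ x, h x ∂(ρ : Measure X)| ≤ δ / 4 := by
      intro ρ
      have e : (∫ x, f x ∂(ρ : Measure X)) - f a - ∫ x, h x ∂(ρ : Measure X)
          = ∫ x, (g x - h x) ∂(ρ : Measure X) := by
        rw [integral_sub (cont_int g.continuous _) (cont_int h.continuous _)]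
        simp_rw [hg]
        rw [integral_sub (cont_int hf.continuous _) (integrable_const _)]; simp
      rw [e]; exact abs_int_le hpt
    have k1 := abs_le.1 (key μ)
    have k2 := abs_le.1 (key ν)
    have : |∫ x, f x ∂(μ : Measure X) - ∫ x, f x ∂(ν : Measure X)| ≤
        δ / 2 + |∫ x, h x ∂(μ : Measure X) - ∫ x, h x ∂(ν : Measure X)| := by
      have := le_abs_self (∫ x, h x ∂(μ : Measure X) - ∫ x, h x ∂(ν : Measure X))
      have := neg_abs_le (∫ x, h x ∂(μ : Measure X) - ∫ x, h x ∂(ν : Measure X))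
      rw [abs_le]; constructor <;> linarith
    linarith

lemma meas_int_coe {f : X → ℝ} (hf : Measurable f) :
    Measurable fun μ : ProbabilityMeasure X => ∫ x, f x ∂(μ : Measure X) :=
  meas_integral (F := fun _ x => f x) meas_coe (fun μ => μ.2) (hf.comp measurable_snd)

lemma meas_W1 (ν : ProbabilityMeasure X) : Measurable fun μ => W1 μ ν := by
  have hn : ∀ n : ℕ, (0 : ℝ) < 1 / (n + 1) := fun n => by positivity
  choose t ht1 ht2 using fun n : ℕ => exists_net X (hn n)
  let I := Σ n : ℕ, {f // f ∈ t n}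
  have : (fun μ => W1 μ ν) = fun μ : ProbabilityMeasure X => ⨆ i : I,
      |∫ x, i.2.1 x ∂(μ : Measure X) - ∫ x, i.2.1 x ∂(ν : Measure X)| := by
    funext μ
    obtain ⟨f0, hf0, -⟩ := ht2 0 μ ν
    have : Nonempty I := ⟨⟨0, f0, hf0⟩⟩
    have hb : BddAbove (Set.range fun i : I =>
      |∫ x, i.2.1 x ∂(μ : Measure X) - ∫ x, i.2.1 x ∂(ν : Measure X)|) := by
      refine ⟨W1 μ ν, ?_⟩
      rintro _ ⟨i, rfl⟩
      exact le_W1 (ht1 _ _ i.2.2) _ _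
    refine le_antisymm ?_ (ciSup_le fun i => le_W1 (ht1 _ _ i.2.2) _ _)
    refine le_of_forall_pos_le_add fun ε hε => ?_
    obtain ⟨n, hnε⟩ := exists_nat_one_div_lt hε
    obtain ⟨f, hf, h⟩ := ht2 n μ ν
    have := le_ciSup hb ⟨n, f, hf⟩
    linarith
  rw [this]
  refine Measurable.iSup fun i => ?_
  have hm := (ht1 _ _ i.2.2).continuous.measurable
  exact ((meas_int_coe hm).sub_const _).abs

lemma exists_dense (X : Type*) [MetricSpace X] [CompactSpace X] [MeasurableSpace X]
    [BorelSpace X] : ∃ D : Set (ProbabilityMeasure X), D.Countable ∧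
    ∀ μ, ∀ ε > 0, ∃ ν ∈ D, W1 μ ν < ε := by
  have hn : ∀ n : ℕ, (0 : ℝ) < 1 / (n + 1) := fun n => by positivity
  choose t ht1 ht2 using fun n : ℕ => exists_net X (hn n)
  let Ψ : ∀ n, ProbabilityMeasure X → ({f // f ∈ t n} → ℝ) :=
    fun n μ f => ∫ x, f.1 x ∂(μ : Measure X)
  have hc : ∀ n, ∃ D : Set (ProbabilityMeasure X), D.Countable ∧
      ∀ μ, ∃ ν ∈ D, dist (Ψ n μ) (Ψ n ν) < 1 / (n + 1) := by
    intro n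
    obtain ⟨E, hE, hd⟩ := TopologicalSpace.exists_countable_dense (Set.range (Ψ n))
    choose g hg using fun e : Set.range (Ψ n) => e.2
    refine ⟨g '' E, hE.image g, fun μ => ?_⟩
    obtain ⟨e, he, hde⟩ := hd.exists_dist_lt ⟨Ψ n μ, μ, rfl⟩ (hn n)
    refine ⟨g e, ⟨e, he, rfl⟩, ?_⟩
    rw [hg]; exact hde
  choose D hD1 hD2 using hc
  refine ⟨⋃ n, D n, Set.countable_iUnion hD1, fun μ ε hε => ?_⟩
  obtain ⟨n, hnε⟩ := exists_nat_one_div_lt (half_pos hε)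
  obtain ⟨ν, hν, hd⟩ := hD2 n μ
  refine ⟨ν, Set.mem_iUnion.2 ⟨n, hν⟩, ?_⟩
  obtain ⟨f, hf, h⟩ := ht2 n μ ν
  have := dist_le_pi_dist (Ψ n μ) (Ψ n ν) ⟨f, hf⟩
  rw [Real.dist_eq] at this
  simp only [Ψ] at this hd
  linarith

/-- Lipschitz functions are measurable for the product of Borel and Giry sigma-algebras. -/
lemma meas_lip {S : Type*} [MetricSpace S] [CompactSpace S] [MeasurableSpace S] [BorelSpace S]
    {F : S → ProbabilityMeasure X → ℝ} {L : ℝ} (hL : 0 ≤ L)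
    (hF : ∀ s s' μ μ', |F s μ - F s' μ'| ≤ L * (dist s s' + W1 μ μ')) :
    Measurable fun z : S × ProbabilityMeasure X => F z.1 z.2 := by
  obtain ⟨D, hD, hd⟩ := exists_dense X
  obtain ⟨E, hE, hde⟩ := TopologicalSpace.exists_countable_dense S
  have : Countable D := hD
  have : Countable E := hE
  have : (fun z : S × ProbabilityMeasure X => F z.1 z.2) = fun z =>
      ⨅ i : E × D, (F i.1 i.2 + L * (dist z.1 (i.1 : S) + W1 z.2 i.2)) := by
    funext z
    obtain ⟨ν0, hν0, -⟩ := hd z.2 1 one_pos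
    obtain ⟨s0, hs0, -⟩ := hde.exists_dist_lt z.1 one_pos
    have : Nonempty (E × D) := ⟨⟨⟨s0, hs0⟩, ⟨ν0, hν0⟩⟩⟩
    have hlow : ∀ i : E × D, F z.1 z.2 ≤ F i.1 i.2 + L * (dist z.1 (i.1 : S) + W1 z.2 i.2) := by
      intro i
      have := (abs_le.1 (hF z.1 i.1 z.2 i.2)).2
      linarith
    refine le_antisymm (le_ciInf hlow) ?_
    refine le_of_forall_pos_le_add fun ε hε => ?_
    have hη : 0 < ε / (4 * (L + 1)) := by positivity
    obtain ⟨ν, hν, hν'⟩ := hd z.2 _ hη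
    obtain ⟨s, hs, hs'⟩ := hde.exists_dist_lt z.1 hη
    refine (ciInf_le ⟨F z.1 z.2, ?_⟩ (⟨⟨s, hs⟩, ⟨ν, hν⟩⟩ : E × D)).trans ?_
    · rintro _ ⟨i, rfl⟩; exact hlow i
    · have h1 := (abs_le.1 (hF z.1 s z.2 ν)).1
      have h2 : L * (dist z.1 s + W1 z.2 ν) ≤ L * (2 * (ε / (4 * (L + 1)))) :=
        mul_le_mul_of_nonneg_left (by linarith) hL
      have h3 : L * (2 * (ε / (4 * (L + 1)))) ≤ ε / 2 := by
        have : (L + 1) * (2 * (ε / (4 * (L + 1)))) = ε / 2 := by field_simp; norm_num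
        nlinarith
      simp only
      linarith
  rw [this]
  refine Measurable.iInf fun i => ?_
  refine measurable_const.add (measurable_const.mul ?_)
  refine Measurable.add ?_ ((meas_W1 _).comp measurable_snd)
  exact (measurable_fst.dist measurable_const)

/-- measurability of a family of probability measures from Lipschitz test functions -/
lemma meas_test {S : Type*} [MeasurableSpace S] {g : S → ProbabilityMeasure X}
    (h : ∀ f : X → ℝ, LipschitzWith 1 f → Measurable fun s => ∫ x, f x ∂(g s : Measure X)) :
    Measurable fun s => (g s : Measure X) := by
  have h' : ∀ (K : NNReal) (f : X → ℝ), LipschitzWith K f →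
      Measurable fun s => ∫ x, f x ∂(g s : Measure X) := by
    intro K f hf
    have h1 : LipschitzWith 1 fun x => ((K : ℝ) + 1)⁻¹ * f x := by
      refine lip_iff.2 fun x y => ?_
      have hK : (0 : ℝ) < K + 1 := by positivity
      rw [← mul_sub, abs_mul, abs_of_pos (inv_pos.2 hK), inv_mul_le_iff₀ hK]
      have := hf.dist_le_mul x y
      rw [Real.dist_eq] at this
      nlinarith [dist_nonneg (x := x) (y := y)]
    have h2 := (h _ h1).const_mul ((K : ℝ) + 1)
    have hK : ((K : ℝ) + 1) ≠ 0 := by positivity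
    simpa [integral_const_mul, mul_inv_cancel_left₀ hK] using h2
  refine Measurable.measure_of_isPiSystem_of_isProbabilityMeasure
    (S := {s | IsClosed s}) ?_ isPiSystem_isClosed ?_
  · rw [← borel_eq_generateFrom_isClosed]; exact BorelSpace.measurable_eq
  · intro F hF
    have hδ : ∀ n : ℕ, (0 : ℝ) < 1 / (n + 1) := fun n => by positivity
    have hlim : Tendsto (fun n : ℕ => (1 : ℝ) / (n + 1)) atTop (𝓝 0) :=
      tendsto_one_div_add_atTop_nhds_zero_nat
    have hr : Measurable fun s => (g s : Measure X).real F := by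
      refine measurable_of_tendsto_metrizable
        (f := fun n s => ∫ x, (thickenedIndicator (hδ n) F x : ℝ) ∂(g s : Measure X)) ?_ ?_
      · intro n
        exact h' _ _ (NNReal.isometry_coe.lipschitz.comp (lipschitzWith_thickenedIndicator (hδ n) F))
      · rw [tendsto_pi_nhds]
        intro s
        exact tendsto_integral_thickenedIndicator_of_isClosed _ hF hδ hlim
    have := hr.ennreal_ofReal
    simpa using this

end lip
end M3

namespace M3
open ProbabilityTheory Filter Topology
set_option linter.unusedSectionVars false

section lln
variable {X : Type*} [MetricSpace X] [CompactSpace X] [MeasurableSpace X] [BorelSpace X] [Nonempty X]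

lemma emp_coe {N : ℕ} (hN : N ≠ 0) (x : Fin N → X) :
    (emp N x : Measure X) = (N : ENNReal)⁻¹ • ∑ i : Fin N, Measure.dirac (x i) := by
  unfold emp
  simp [hN]

lemma integral_emp {N : ℕ} (hN : N ≠ 0) (x : Fin N → X) {f : X → ℝ} (hf : Continuous f) :
    ∫ y, f y ∂(emp N x : Measure X) = (N : ℝ)⁻¹ * ∑ i, f (x i) := by
  rw [emp_coe hN, integral_smul_measure, integral_finsetSum_measure]
  · simp [integral_dirac]
  · intro i _
    exact cont_int hf _

lemma meas_emp {N : ℕ} (hN : N ≠ 0) : Measurable fun x : Fin N → X => emp N x := by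
  refine meas_mk ?_
  refine meas_test fun f hf => ?_
  simp_rw [integral_emp hN _ hf.continuous]
  have := hf.continuous.measurable
  fun_prop

lemma lln_single {N : ℕ} (hN : N ≠ 0) (κ : Fin N → Measure X) [∀ i, IsProbabilityMeasure (κ i)]
    {f : X → ℝ} (hf : LipschitzWith 1 f) {η : ℝ} (hη : 0 < η) :
    ∫ x, |∫ y, f y ∂(emp N x : Measure X) - (N : ℝ)⁻¹ * ∑ i, ∫ y, f y ∂(κ i)| ∂(Measure.pi κ)
      ≤ η + (Metric.diam (Set.univ : Set X)) ^ 2 / N / η := by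
  set D := Metric.diam (Set.univ : Set X)
  obtain ⟨C, hC⟩ := cont_bdd hf.continuous
  have hfm := hf.continuous.measurable
  obtain ⟨a⟩ : Nonempty X := inferInstance
  simp_rw [integral_emp hN _ hf.continuous]
  let Y : (Fin N → X) → ℝ := ∑ i, fun x => f (x i)
  have hY : ∀ x, Y x = ∑ i, f (x i) := fun x => by simp [Y]
  have hYm : Measurable Y := by
    have : Y = fun x => ∑ i, f (x i) := funext hY
    rw [this]; fun_prop
  have hYb : ∀ x, |Y x| ≤ N * C := fun x => by
    rw [hY]
    refine (Finset.abs_sum_le_sum_abs _ _).trans ?_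
    refine (Finset.sum_le_sum fun i _ => hC (x i)).trans ?_
    simp
  have hEY : ∫ x, Y x ∂(Measure.pi κ) = ∑ i, ∫ y, f y ∂(κ i) := by
    simp_rw [hY]
    rw [integral_finsetSum]
    · refine Finset.sum_congr rfl fun i _ => ?_
      exact integral_comp_eval (μ := κ) (i := i) hfm.aestronglyMeasurable
    · intro i _
      exact int_bdd (by fun_prop) fun x => hC (x i)
  have hVar : Var[Y; Measure.pi κ] ≤ N * D ^ 2 := by
    have h := variance_sum_pi (μ := κ) (X := fun _ : Fin N => f) (fun i => by
      exact MemLp.of_bound hfm.aestronglyMeasurable C (ae_of_all _ (by simpa using hC)))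
    refine h.le.trans ?_
    have : ∀ i : Fin N, Var[f; κ i] ≤ D ^ 2 := fun i => by
      refine (variance_le_sq_of_bounded (a := f a - D) (b := f a + D) (ae_of_all _ fun x => ?_)
        hfm.aemeasurable).trans (le_of_eq (by ring))
      have := abs_le.1 ((lip_iff.1 hf x a).trans (dist_le_D _ _))
      constructor <;> simp only [D] <;> linarith
    refine (Finset.sum_le_sum fun i _ => this i).trans ?_
    simp
  rw [variance_eq_integral hYm.aemeasurable, hEY] at hVar
  set m := ∑ i, ∫ y, f y ∂(κ i)
  have hNp : (0 : ℝ) < N := by positivity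
  have hpt : ∀ x, |(N : ℝ)⁻¹ * ∑ i, f (x i) - (N : ℝ)⁻¹ * m|
      ≤ η + ((N : ℝ)⁻¹ ^ 2 / η) * (Y x - m) ^ 2 := by
    intro x
    rw [← hY, ← mul_sub]
    set z := (N : ℝ)⁻¹ * (Y x - m)
    have : ((N : ℝ)⁻¹ ^ 2 / η) * (Y x - m) ^ 2 = |z| ^ 2 / η := by
      rw [sq_abs]; simp only [z]; ring
    rw [this]
    have h2 : |z| * η ≤ η * η + |z| ^ 2 := by nlinarith [sq_nonneg (|z| - η), abs_nonneg z]
    have : η + |z| ^ 2 / η = (η * η + |z| ^ 2) / η := by field_simp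
    rw [this, le_div_iff₀ hη]; exact h2
  have hib : Integrable (fun x => (Y x - m) ^ 2) (Measure.pi κ) := by
    refine int_bdd (by fun_prop) (C := (N * C + |m|) ^ 2) fun x => ?_
    rw [abs_pow]
    refine pow_le_pow_left₀ (abs_nonneg _) ?_ 2
    exact (abs_sub _ _).trans (by linarith [hYb x])
  calc _ ≤ ∫ x, (η + ((N : ℝ)⁻¹ ^ 2 / η) * (Y x - m) ^ 2) ∂(Measure.pi κ) := by
        refine integral_mono_of_nonneg (ae_of_all _ fun x => abs_nonneg _) ?_ (ae_of_all _ hpt)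
        exact (integrable_const _).add (hib.const_mul _)
    _ = η + ((N : ℝ)⁻¹ ^ 2 / η) * ∫ x, (Y x - m) ^ 2 ∂(Measure.pi κ) := by
        rw [integral_add (integrable_const _) (hib.const_mul _), integral_const_mul]; simp
    _ ≤ η + ((N : ℝ)⁻¹ ^ 2 / η) * (N * D ^ 2) := by
        gcongr
    _ = _ := by field_simp

lemma lln (X : Type*) [MetricSpace X] [CompactSpace X] [MeasurableSpace X] [BorelSpace X]
    [Nonempty X] {δ : ℝ} (hδ : 0 < δ) : ∃ N0 : ℕ, ∀ N ≥ N0, N ≠ 0 ∧ ∀ (κ : Fin N → Measure X)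
    (_ : ∀ i, IsProbabilityMeasure (κ i)) (ν : ProbabilityMeasure X),
    (∀ f : X → ℝ, LipschitzWith 1 f →
      ∫ y, f y ∂(ν : Measure X) = (N : ℝ)⁻¹ * ∑ i, ∫ y, f y ∂(κ i)) →
    ∫ x, W1 (emp N x) ν ∂(Measure.pi κ) ≤ δ := by
  classical
  obtain ⟨t, ht1, ht2⟩ := exists_net X (show 0 < δ / 3 by positivity)
  set D := Metric.diam (Set.univ : Set X)
  set K : ℝ := ((t.card : ℕ) : ℝ)
  have hK : 0 ≤ K := by positivity
  set η := δ / (3 * (K + 1)) with hηd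
  have hη : 0 < η := by positivity
  obtain ⟨N0, hN0⟩ := exists_nat_gt (3 * K * D ^ 2 / (η * δ))
  refine ⟨N0 + 1, fun N hN => ⟨by omega, fun κ hκ ν hν => ?_⟩⟩
  have hNne : N ≠ 0 := by omega
  have hNp : (0 : ℝ) < N := by positivity
  have hpt : ∀ x : Fin N → X, W1 (emp N x) ν ≤ δ / 3 + ∑ f ∈ t,
      |∫ y, f y ∂(emp N x : Measure X) - (N : ℝ)⁻¹ * ∑ i, ∫ y, f y ∂(κ i)| := by
    intro x
    obtain ⟨f, hf, h⟩ := ht2 (emp N x) ν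
    rw [hν f (ht1 f hf)] at h
    refine h.trans (add_le_add le_rfl ?_)
    exact Finset.single_le_sum (f := fun f => |∫ y, f y ∂(emp N x : Measure X) -
      (N : ℝ)⁻¹ * ∑ i, ∫ y, f y ∂(κ i)|) (fun _ _ => abs_nonneg _) hf
  have hIntg : ∀ f ∈ t, Integrable (fun x : Fin N → X =>
      |∫ y, f y ∂(emp N x : Measure X) - (N : ℝ)⁻¹ * ∑ i, ∫ y, f y ∂(κ i)|) (Measure.pi κ) := by
    intro f hf
    have hfm := (ht1 f hf).continuous.measurable
    refine int_bdd (C := 2 * D) ?_ fun x => ?_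
    · exact (((meas_int_coe hfm).comp (meas_emp hNne)).sub_const _).abs
    · rw [abs_abs, ← hν f (ht1 f hf)]
      exact lip_diff_le (ht1 f hf) _ _
  calc _ ≤ ∫ x, (δ / 3 + ∑ f ∈ t, |∫ y, f y ∂(emp N x : Measure X)
          - (N : ℝ)⁻¹ * ∑ i, ∫ y, f y ∂(κ i)|) ∂(Measure.pi κ) := by
        refine integral_mono_of_nonneg (ae_of_all _ fun x => W1_nonneg _ _) ?_ (ae_of_all _ hpt)
        exact (integrable_const _).add (integrable_finsetSum _ hIntg)
    _ = δ / 3 + ∑ f ∈ t, ∫ x, |∫ y, f y ∂(emp N x : Measure X)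
          - (N : ℝ)⁻¹ * ∑ i, ∫ y, f y ∂(κ i)| ∂(Measure.pi κ) := by
        rw [integral_add (integrable_const _) (integrable_finsetSum _ hIntg),
          integral_finsetSum _ hIntg]
        simp
    _ ≤ δ / 3 + ∑ f ∈ t, (η + D ^ 2 / N / η) := by
        gcongr with f hf
        exact lln_single hNne κ (ht1 f hf) hη
    _ = δ / 3 + K * η + K * D ^ 2 / (N * η) := by
        rw [Finset.sum_const, nsmul_eq_mul]; field_simp; ring
    _ ≤ δ := by
        have h1 : K * η ≤ δ / 3 := by
          have : (K + 1) * η = δ / 3 := by rw [hηd]; field_simp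
          nlinarith
        have h2 : K * D ^ 2 / (N * η) ≤ δ / 3 := by
          rw [div_le_iff₀ (by positivity)]
          have : (N0 : ℝ) ≤ N := by exact_mod_cast (by omega : N0 ≤ N)
          have := hN0.trans_le this
          rw [div_lt_iff₀ (by positivity)] at this
          nlinarith
        linarith

end lln
end M3

namespace M3
open ProbabilityTheory Filter Topology
set_option linter.unusedSectionVars false

/-- All data of the model for one fixed pair of policies. -/
structure Setup (X U X0 U0 : Type*)
    [MetricSpace X] [CompactSpace X] [MeasurableSpace X] [BorelSpace X] [Nonempty X]
    [MetricSpace U] [CompactSpace U] [MeasurableSpace U] [BorelSpace U]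
    [MetricSpace X0] [CompactSpace X0] [MeasurableSpace X0] [BorelSpace X0]
    [MetricSpace U0] [CompactSpace U0] [MeasurableSpace U0] [BorelSpace U0]
    (Lp Lp0 LPi : ℝ) where
  Lp_nn : 0 ≤ Lp
  Lp0_nn : 0 ≤ Lp0
  LPi_nn : 0 ≤ LPi
  p : X → U → X0 → U0 → ProbabilityMeasure X → ProbabilityMeasure X
  hp : ∀ (x x' : X) (u u' : U) (x0 x0' : X0) (u0 u0' : U0)
        (μ μ' : ProbabilityMeasure X) (f : X → ℝ), LipschitzWith 1 f →
      |∫ y, f y ∂(p x u x0 u0 μ : Measure X) - ∫ y, f y ∂(p x' u' x0' u0' μ' : Measure X)|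
        ≤ Lp * (dist x x' + dist u u' + dist x0 x0' + dist u0 u0' + W1 μ μ')
  p0 : X0 → U0 → ProbabilityMeasure X → ProbabilityMeasure X0
  hp0 : ∀ (x0 x0' : X0) (u0 u0' : U0) (μ μ' : ProbabilityMeasure X) (f : X0 → ℝ),
        LipschitzWith 1 f →
      |∫ y, f y ∂(p0 x0 u0 μ : Measure X0) - ∫ y, f y ∂(p0 x0' u0' μ' : Measure X0)|
        ≤ Lp0 * (dist x0 x0' + dist u0 u0' + W1 μ μ')
  q : ℕ → X → X0 → ProbabilityMeasure X → ProbabilityMeasure U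
  hq : ∀ (t : ℕ) (x x' : X) (x0 x0' : X0) (μ μ' : ProbabilityMeasure X)
        (g : U → ℝ), LipschitzWith 1 g →
      |∫ u, g u ∂(q t x x0 μ : Measure U) - ∫ u, g u ∂(q t x' x0' μ' : Measure U)|
        ≤ LPi * (dist x x' + dist x0 x0' + W1 μ μ')
  q0 : ℕ → X0 → ProbabilityMeasure X → ProbabilityMeasure U0
  hq0 : ∀ (t : ℕ) (x0 x0' : X0) (μ μ' : ProbabilityMeasure X) (g : U0 → ℝ),
        LipschitzWith 1 g →
      |∫ u, g u ∂(q0 t x0 μ : Measure U0) - ∫ u, g u ∂(q0 t x0' μ' : Measure U0)|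
        ≤ LPi * (dist x0 x0' + W1 μ μ')
  Tq : ℕ → X0 → U0 → ProbabilityMeasure X → ProbabilityMeasure X
  hTq : ∀ (t : ℕ) (x0 : X0) (u0 : U0) (μ : ProbabilityMeasure X),
      (Tq t x0 u0 μ : Measure X) = (μ : Measure X).bind fun x =>
        ((q t x x0 μ : Measure U)).bind fun u => (p x u x0 u0 μ : Measure X)
  x00 : X0
  μ0 : ProbabilityMeasure X

section
variable {X U X0 U0 : Type*}
    [MetricSpace X] [CompactSpace X] [MeasurableSpace X] [BorelSpace X] [Nonempty X]
    [MetricSpace U] [CompactSpace U] [MeasurableSpace U] [BorelSpace U]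
    [MetricSpace X0] [CompactSpace X0] [MeasurableSpace X0] [BorelSpace X0]
    [MetricSpace U0] [CompactSpace U0] [MeasurableSpace U0] [BorelSpace U0]
    {Lp Lp0 LPi : ℝ}

/-- Lipschitz functions on the limiting state space. -/
def LipF (L : ℝ) (F : X0 × U0 × ProbabilityMeasure X → ℝ) : Prop :=
  ∀ x0 x0' u0 u0' μ μ', |F (x0, u0, μ) - F (x0', u0', μ')|
    ≤ L * (dist x0 x0' + dist u0 u0' + W1 μ μ')

/-- Lipschitz functions of the major state and mean field. -/
def LipG (L : ℝ) (G : X0 × ProbabilityMeasure X → ℝ) : Prop :=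
  ∀ x0 x0' μ μ', |G (x0, μ) - G (x0', μ')| ≤ L * (dist x0 x0' + W1 μ μ')

lemma LipF.meas {L : ℝ} (hL : 0 ≤ L) {F : X0 × U0 × ProbabilityMeasure X → ℝ} (hF : LipF L F) :
    Measurable F := by
  have h := meas_lip (S := X0 × U0) (F := fun s μ => F (s.1, s.2, μ)) (L := 2 * L) (by positivity)
    (fun s s' μ μ' => by
      refine (hF s.1 s'.1 s.2 s'.2 μ μ').trans ?_
      have h1 : dist s.1 s'.1 ≤ dist s s' := le_max_left _ _
      have h2 : dist s.2 s'.2 ≤ dist s s' := le_max_right _ _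
      have h3 := W1_nonneg μ μ'
      calc _ ≤ L * (2 * (dist s s' + W1 μ μ')) := mul_le_mul_of_nonneg_left (by linarith) hL
        _ = _ := by ring)
  exact h.comp (f := fun z : X0 × U0 × ProbabilityMeasure X => ((z.1, z.2.1), z.2.2))
    (by fun_prop)

lemma LipG.meas {L : ℝ} (hL : 0 ≤ L) {G : X0 × ProbabilityMeasure X → ℝ} (hG : LipG L G) :
    Measurable G :=
  meas_lip (S := X0) (F := fun s μ => G (s, μ)) hL hG

lemma LipF.bdd {L : ℝ} (hL : 0 ≤ L) {F : X0 × U0 × ProbabilityMeasure X → ℝ} (hF : LipF L F) :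
    ∃ C, ∀ z, |F z| ≤ C := by
  by_cases h : Nonempty (X0 × U0 × ProbabilityMeasure X)
  · obtain ⟨a⟩ := h
    refine ⟨|F a| + L * (Metric.diam (Set.univ : Set X0) + Metric.diam (Set.univ : Set U0) +
      2 * Metric.diam (Set.univ : Set X)), fun z => ?_⟩
    have h1 := hF z.1 a.1 z.2.1 a.2.1 z.2.2 a.2.2
    have h2 : L * (dist z.1 a.1 + dist z.2.1 a.2.1 + W1 z.2.2 a.2.2) ≤
        L * (Metric.diam (Set.univ : Set X0) + Metric.diam (Set.univ : Set U0) +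
      2 * Metric.diam (Set.univ : Set X)) := by
      gcongr
      · exact dist_le_D _ _
      · exact dist_le_D _ _
      · exact W1_le_D _ _
    have h3 : |F z| ≤ |F a| + |F z - F a| := by
      have := abs_add_le (F a) (F z - F a)
      simpa using this
    have h4 : |F z - F a| ≤ _ := h1.trans h2
    linarith
  · exact ⟨0, fun z => absurd ⟨z⟩ h⟩

lemma LipF.add {L L' : ℝ} {F F' : X0 × U0 × ProbabilityMeasure X → ℝ}
    (hF : LipF L F) (hF' : LipF L' F') : LipF (L + L') (fun z => F z + F' z) := by
  intro x0 x0' u0 u0' μ μ'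
  have h1 := abs_le.1 (hF x0 x0' u0 u0' μ μ')
  have h2 := abs_le.1 (hF' x0 x0' u0 u0' μ μ')
  rw [abs_le, add_mul]; constructor <;> linarith

lemma LipF.smul {L : ℝ} {F : X0 × U0 × ProbabilityMeasure X → ℝ}
    (hF : LipF L F) {c : ℝ} (hc : 0 ≤ c) : LipF (c * L) (fun z => c * F z) := by
  intro x0 x0' u0 u0' μ μ'
  rw [← mul_sub, abs_mul, abs_of_nonneg hc, mul_assoc]
  exact mul_le_mul_of_nonneg_left (hF x0 x0' u0 u0' μ μ') hc

namespace Setup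
variable (M : Setup X U X0 U0 Lp Lp0 LPi)

lemma meas_p0 : Measurable fun z : X0 × U0 × ProbabilityMeasure X =>
    (M.p0 z.1 z.2.1 z.2.2 : Measure X0) :=
  meas_test (g := fun z : X0 × U0 × ProbabilityMeasure X => M.p0 z.1 z.2.1 z.2.2) fun f hf =>
    LipF.meas M.Lp0_nn fun x0 x0' u0 u0' μ μ' => M.hp0 x0 x0' u0 u0' μ μ' f hf

lemma meas_q0 (t : ℕ) : Measurable fun z : X0 × ProbabilityMeasure X =>
    (M.q0 t z.1 z.2 : Measure U0) :=
  meas_test (g := fun z : X0 × ProbabilityMeasure X => M.q0 t z.1 z.2) fun f hf =>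
    LipG.meas M.LPi_nn fun x0 x0' μ μ' => M.hq0 t x0 x0' μ μ' f hf

lemma meas_q (t : ℕ) : Measurable fun z : (X × X0) × ProbabilityMeasure X =>
    (M.q t z.1.1 z.1.2 z.2 : Measure U) := by
  refine meas_test (g := fun z : (X × X0) × ProbabilityMeasure X => M.q t z.1.1 z.1.2 z.2)
    fun f hf => ?_
  have hL := M.LPi_nn
  refine meas_lip (S := X × X0) (L := 2 * LPi)
    (F := fun s μ => ∫ u, f u ∂(M.q t s.1 s.2 μ : Measure U)) (by positivity)
    (fun s s' μ μ' => ?_)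
  refine (M.hq t s.1 s'.1 s.2 s'.2 μ μ' f hf).trans ?_
  have h1 : dist s.1 s'.1 ≤ dist s s' := le_max_left _ _
  have h2 : dist s.2 s'.2 ≤ dist s s' := le_max_right _ _
  have h3 := W1_nonneg μ μ'
  calc _ ≤ LPi * (2 * (dist s s' + W1 μ μ')) := mul_le_mul_of_nonneg_left (by linarith) hL
    _ = _ := by ring

lemma meas_p : Measurable fun z : (X × U × X0 × U0) × ProbabilityMeasure X =>
    (M.p z.1.1 z.1.2.1 z.1.2.2.1 z.1.2.2.2 z.2 : Measure X) := by
  refine meas_test (g := fun z : (X × U × X0 × U0) × ProbabilityMeasure X =>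
    M.p z.1.1 z.1.2.1 z.1.2.2.1 z.1.2.2.2 z.2) fun f hf => ?_
  have hL := M.Lp_nn
  refine meas_lip (S := X × U × X0 × U0) (L := 4 * Lp)
    (F := fun s μ => ∫ u, f u ∂(M.p s.1 s.2.1 s.2.2.1 s.2.2.2 μ : Measure X)) (by positivity)
    (fun s s' μ μ' => ?_)
  refine (M.hp s.1 s'.1 s.2.1 s'.2.1 s.2.2.1 s'.2.2.1 s.2.2.2 s'.2.2.2 μ μ' f hf).trans ?_
  have h1 : dist s.1 s'.1 ≤ dist s s' := le_max_left _ _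
  have h2 : dist s.2 s'.2 ≤ dist s s' := le_max_right _ _
  have h3 : dist s.2.1 s'.2.1 ≤ dist s.2 s'.2 := le_max_left _ _
  have h4 : dist s.2.2 s'.2.2 ≤ dist s.2 s'.2 := le_max_right _ _
  have h5 : dist s.2.2.1 s'.2.2.1 ≤ dist s.2.2 s'.2.2 := le_max_left _ _
  have h6 : dist s.2.2.2 s'.2.2.2 ≤ dist s.2.2 s'.2.2 := le_max_right _ _
  have h7 := W1_nonneg μ μ'
  calc _ ≤ Lp * (4 * (dist s s' + W1 μ μ')) := mul_le_mul_of_nonneg_left (by linarith) hL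
    _ = _ := by ring

/-- closed-loop one-agent transition -/
noncomputable def K (t : ℕ) (x : X) (x0 : X0) (u0 : U0) (μ : ProbabilityMeasure X) : Measure X :=
  ((M.q t x x0 μ : Measure U)).bind fun u => (M.p x u x0 u0 μ : Measure X)

lemma meas_p_u (x : X) (x0 : X0) (u0 : U0) (μ : ProbabilityMeasure X) :
    Measurable fun u => (M.p x u x0 u0 μ : Measure X) :=
  M.meas_p.comp (f := fun u => ((x, u, x0, u0), μ)) (by fun_prop)

instance (t : ℕ) (x : X) (x0 : X0) (u0 : U0) (μ : ProbabilityMeasure X) :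
    IsProbabilityMeasure (M.K t x x0 u0 μ) :=
  isProb_bind (M.meas_p_u x x0 u0 μ) fun _ => inferInstance

lemma meas_K (t : ℕ) : Measurable fun z : X × X0 × U0 × ProbabilityMeasure X =>
    M.K t z.1 z.2.1 z.2.2.1 z.2.2.2 := by
  unfold K
  refine meas_bind (κ := fun z : X × X0 × U0 × ProbabilityMeasure X =>
      (M.q t z.1 z.2.1 z.2.2.2 : Measure U))
    (κ' := fun (z : X × X0 × U0 × ProbabilityMeasure X) u =>
      (M.p z.1 u z.2.1 z.2.2.1 z.2.2.2 : Measure X)) ?_ (fun _ => inferInstance) ?_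
      (fun _ _ => inferInstance)
  · exact (M.meas_q t).comp (f := fun z : X × X0 × U0 × ProbabilityMeasure X =>
      ((z.1, z.2.1), z.2.2.2)) (by fun_prop)
  · exact M.meas_p.comp (f := fun z : (X × X0 × U0 × ProbabilityMeasure X) × U =>
      ((z.1.1, z.2, z.1.2.1, z.1.2.2.1), z.1.2.2.2)) (by fun_prop)

lemma meas_K_x (t : ℕ) (x0 : X0) (u0 : U0) (μ : ProbabilityMeasure X) :
    Measurable fun x => M.K t x x0 u0 μ :=
  (M.meas_K t).comp (f := fun x => (x, x0, u0, μ)) (by fun_prop)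

lemma integral_K (t : ℕ) (x : X) (x0 : X0) (u0 : U0) (μ : ProbabilityMeasure X)
    {f : X → ℝ} (hf : Continuous f) : ∫ y, f y ∂(M.K t x x0 u0 μ)
      = ∫ u, ∫ y, f y ∂(M.p x u x0 u0 μ : Measure X) ∂(M.q t x x0 μ : Measure U) := by
  obtain ⟨C, hC⟩ := cont_bdd hf
  exact integral_bind (M.meas_p_u x x0 u0 μ) (fun _ => inferInstance) hf.measurable hC

lemma lip_K (t : ℕ) (x x' : X) (x0 x0' : X0) (u0 u0' : U0) (μ μ' : ProbabilityMeasure X)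
    {f : X → ℝ} (hf : LipschitzWith 1 f) :
    |∫ y, f y ∂(M.K t x x0 u0 μ) - ∫ y, f y ∂(M.K t x' x0' u0' μ')| ≤
      Lp * (1 + LPi) * (dist x x' + dist x0 x0' + dist u0 u0' + W1 μ μ') := by
  rw [M.integral_K t x x0 u0 μ hf.continuous, M.integral_K t x' x0' u0' μ' hf.continuous]
  set g : U → ℝ := fun u => ∫ y, f y ∂(M.p x u x0 u0 μ : Measure X)
  set g' : U → ℝ := fun u => ∫ y, f y ∂(M.p x' u x0' u0' μ' : Measure X)
  have hg : ∀ u v, |g u - g v| ≤ Lp * dist u v := fun u v => by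
    simpa [W1_self] using M.hp x x u v x0 x0 u0 u0 μ μ f hf
  have hg' : ∀ u v, |g' u - g' v| ≤ Lp * dist u v := fun u v => by
    simpa [W1_self] using M.hp x' x' u v x0' x0' u0' u0' μ' μ' f hf
  have hgg : ∀ u, |g u - g' u| ≤ Lp * (dist x x' + dist x0 x0' + dist u0 u0' + W1 μ μ') :=
    fun u => by simpa [W1_self] using M.hp x x' u u x0 x0' u0 u0' μ μ' f hf
  have h1 : |∫ u, g u ∂(M.q t x x0 μ : Measure U) - ∫ u, g u ∂(M.q t x' x0' μ' : Measure U)| ≤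
      Lp * (LPi * (dist x x' + dist x0 x0' + W1 μ μ')) :=
    scale (M.hq t x x' x0 x0' μ μ') M.Lp_nn hg
  have h2 : |∫ u, g u ∂(M.q t x' x0' μ' : Measure U) - ∫ u, g' u ∂(M.q t x' x0' μ' : Measure U)|
      ≤ Lp * (dist x x' + dist x0 x0' + dist u0 u0' + W1 μ μ') := by
    rw [← integral_sub (cont_int (lip_cont hg) _) (cont_int (lip_cont hg') _)]
    exact abs_int_le hgg
  have h3 : 0 ≤ Lp * LPi * dist u0 u0' :=
    mul_nonneg (mul_nonneg M.Lp_nn M.LPi_nn) dist_nonneg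
  refine (abs_sub_le _ _ _).trans ((add_le_add h1 h2).trans ?_)
  nlinarith

lemma Tq_eq (t : ℕ) (x0 : X0) (u0 : U0) (μ : ProbabilityMeasure X) :
    (M.Tq t x0 u0 μ : Measure X) = (μ : Measure X).bind fun x => M.K t x x0 u0 μ := M.hTq t x0 u0 μ

lemma integral_Tq (t : ℕ) (x0 : X0) (u0 : U0) (μ : ProbabilityMeasure X)
    {f : X → ℝ} (hf : Continuous f) : ∫ y, f y ∂(M.Tq t x0 u0 μ : Measure X)
      = ∫ x, ∫ y, f y ∂(M.K t x x0 u0 μ) ∂(μ : Measure X) := by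
  obtain ⟨C, hC⟩ := cont_bdd hf
  rw [M.Tq_eq]
  exact integral_bind (M.meas_K_x t x0 u0 μ) (fun _ => inferInstance) hf.measurable hC

lemma cst_nn (M : Setup X U X0 U0 Lp Lp0 LPi) : 0 ≤ Lp * (1 + LPi) :=
  mul_nonneg M.Lp_nn (by linarith [M.LPi_nn])

lemma lip_K_x (t : ℕ) (x0 : X0) (u0 : U0) (μ : ProbabilityMeasure X)
    {f : X → ℝ} (hf : LipschitzWith 1 f) (x x' : X) :
    |∫ y, f y ∂(M.K t x x0 u0 μ) - ∫ y, f y ∂(M.K t x' x0 u0 μ)| ≤ Lp * (1 + LPi) * dist x x' := by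
  simpa [W1_self] using M.lip_K t x x' x0 x0 u0 u0 μ μ hf

lemma lip_Tq (t : ℕ) (x0 x0' : X0) (u0 u0' : U0) (μ μ' : ProbabilityMeasure X) :
    W1 (M.Tq t x0 u0 μ) (M.Tq t x0' u0' μ') ≤
      2 * (Lp * (1 + LPi)) * (dist x0 x0' + dist u0 u0' + W1 μ μ') := by
  refine W1_le fun f hf => ?_
  rw [M.integral_Tq t x0 u0 μ hf.continuous, M.integral_Tq t x0' u0' μ' hf.continuous]
  have h1 := scale_W1 (μ := μ) (ν := μ') M.cst_nn (M.lip_K_x t x0 u0 μ hf)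
  have h2 : |∫ x, ∫ y, f y ∂(M.K t x x0 u0 μ) ∂(μ' : Measure X) -
      ∫ x, ∫ y, f y ∂(M.K t x x0' u0' μ') ∂(μ' : Measure X)|
      ≤ Lp * (1 + LPi) * (dist x0 x0' + dist u0 u0' + W1 μ μ') := by
    rw [← integral_sub (cont_int (lip_cont (M.lip_K_x t x0 u0 μ hf)) _)
      (cont_int (lip_cont (M.lip_K_x t x0' u0' μ' hf)) _)]
    exact abs_int_le fun x => by simpa using M.lip_K t x x x0 x0' u0 u0' μ μ' hf
  refine (abs_sub_le _ _ _).trans ((add_le_add h1 h2).trans ?_)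
  have := M.cst_nn
  have h4 := mul_nonneg this (dist_nonneg (x := x0) (y := x0'))
  have h5 := mul_nonneg this (dist_nonneg (x := u0) (y := u0'))
  nlinarith

lemma meas_Tq (t : ℕ) : Measurable fun z : X0 × U0 × ProbabilityMeasure X =>
    M.Tq t z.1 z.2.1 z.2.2 := by
  refine meas_mk (meas_test fun f hf => ?_)
  have := M.cst_nn
  refine LipF.meas (L := 2 * (Lp * (1 + LPi))) (by positivity) fun x0 x0' u0 u0' μ μ' => ?_
  exact (le_W1 hf _ _).trans (M.lip_Tq t x0 x0' u0 u0' μ μ')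

/-- averaging over the major action -/
noncomputable def G (t : ℕ) (F : X0 × U0 × ProbabilityMeasure X → ℝ)
    (z : X0 × ProbabilityMeasure X) : ℝ :=
  ∫ u, F (z.1, u, z.2) ∂(M.q0 t z.1 z.2 : Measure U0)

lemma lip_G (t : ℕ) {L : ℝ} (hL : 0 ≤ L) {F : X0 × U0 × ProbabilityMeasure X → ℝ}
    (hF : LipF L F) : LipG (L * (1 + LPi)) (M.G t F) := by
  intro x0 x0' μ μ'
  have hg : ∀ y ν u v, |F (y, u, ν) - F (y, v, ν)| ≤ L * dist u v := fun y ν u v => by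
    simpa [W1_self] using hF y y u v ν ν
  have h1 := scale (M.hq0 t x0 x0' μ μ') hL (hg x0 μ)
  have h2 : |∫ u, F (x0, u, μ) ∂(M.q0 t x0' μ' : Measure U0) -
      ∫ u, F (x0', u, μ') ∂(M.q0 t x0' μ' : Measure U0)| ≤ L * (dist x0 x0' + W1 μ μ') := by
    rw [← integral_sub (cont_int (lip_cont (hg x0 μ)) _) (cont_int (lip_cont (hg x0' μ')) _)]
    exact abs_int_le fun u => by simpa using hF x0 x0' u u μ μ'
  refine (abs_sub_le _ _ _).trans ((add_le_add h1 h2).trans (le_of_eq ?_))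
  ring

lemma bdd_G (t : ℕ) {F : X0 × U0 × ProbabilityMeasure X → ℝ} {C : ℝ} (hC : ∀ z, |F z| ≤ C)
    (z) : |M.G t F z| ≤ C := abs_int_le fun _ => hC _

/-- one-step operator of the limiting system -/
noncomputable def A (t : ℕ) (F : X0 × U0 × ProbabilityMeasure X → ℝ)
    (z : X0 × U0 × ProbabilityMeasure X) : ℝ :=
  ∫ y, M.G (t + 1) F (y, M.Tq t z.1 z.2.1 z.2.2) ∂(M.p0 z.1 z.2.1 z.2.2 : Measure X0)

lemma bdd_A (t : ℕ) {F : X0 × U0 × ProbabilityMeasure X → ℝ} {C : ℝ} (hC : ∀ z, |F z| ≤ C)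
    (z) : |M.A t F z| ≤ C := abs_int_le fun _ => M.bdd_G _ hC _

lemma lip_A (t : ℕ) {L : ℝ} (hL : 0 ≤ L) {F : X0 × U0 × ProbabilityMeasure X → ℝ}
    (hF : LipF L F) :
    LipF (L * ((1 + LPi) * (Lp0 + 2 * (Lp * (1 + LPi))))) (M.A t F) := by
  intro x0 x0' u0 u0' μ μ'
  have hG := M.lip_G (t + 1) hL hF
  have hLG : 0 ≤ L * (1 + LPi) := mul_nonneg hL (by linarith [M.LPi_nn])
  have hg : ∀ ν y y', |M.G (t + 1) F (y, ν) - M.G (t + 1) F (y', ν)|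
      ≤ L * (1 + LPi) * dist y y' := fun ν y y' => by simpa [W1_self] using hG y y' ν ν
  have h1 := scale (M.hp0 x0 x0' u0 u0' μ μ') hLG (hg (M.Tq t x0 u0 μ))
  have h2 : |∫ y, M.G (t + 1) F (y, M.Tq t x0 u0 μ) ∂(M.p0 x0' u0' μ' : Measure X0) -
      ∫ y, M.G (t + 1) F (y, M.Tq t x0' u0' μ') ∂(M.p0 x0' u0' μ' : Measure X0)| ≤
      L * (1 + LPi) * (2 * (Lp * (1 + LPi)) * (dist x0 x0' + dist u0 u0' + W1 μ μ')) := by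
    rw [← integral_sub (cont_int (lip_cont (hg _)) _) (cont_int (lip_cont (hg _)) _)]
    refine abs_int_le fun y => (hG y y _ _).trans ?_
    rw [dist_self, zero_add]
    exact mul_le_mul_of_nonneg_left (M.lip_Tq t x0 x0' u0 u0' μ μ') hLG
  refine (abs_sub_le _ _ _).trans ((add_le_add h1 h2).trans (le_of_eq ?_))
  ring

end Setup
end
end M3

namespace M3
open ProbabilityTheory Filter Topology
set_option linter.unusedSectionVars false
section
variable {X U X0 U0 : Type*}
    [MetricSpace X] [CompactSpace X] [MeasurableSpace X] [BorelSpace X] [Nonempty X]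
    [MetricSpace U] [CompactSpace U] [MeasurableSpace U] [BorelSpace U]
    [MetricSpace X0] [CompactSpace X0] [MeasurableSpace X0] [BorelSpace X0]
    [MetricSpace U0] [CompactSpace U0] [MeasurableSpace U0] [BorelSpace U0]
    {Lp Lp0 LPi : ℝ}
namespace Setup
variable (M : Setup X U X0 U0 Lp Lp0 LPi)

/-- law of the limiting process -/
noncomputable def lim (t : ℕ) : Measure (X0 × U0 × ProbabilityMeasure X) :=
  m3LimLaw M.p0 M.q0 M.Tq M.μ0 M.x00 t

/-- law of the finite process -/
noncomputable def fin (N t : ℕ) : Measure (X0 × U0 × (Fin N → X)) :=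
  m3LawN M.p M.p0 M.q M.q0 M.μ0 M.x00 N t

/-- sampling the major action in the limiting process -/
noncomputable def act (t : ℕ) (z : X0 × ProbabilityMeasure X) :
    Measure (X0 × U0 × ProbabilityMeasure X) :=
  (M.q0 t z.1 z.2 : Measure U0).map fun u => (z.1, u, z.2)

lemma meas_act (t : ℕ) : Measurable (M.act t) :=
  meas_map (κ := fun z : X0 × ProbabilityMeasure X => (M.q0 t z.1 z.2 : Measure U0))
    (F := fun (z : X0 × ProbabilityMeasure X) u => (z.1, u, z.2)) (M.meas_q0 t)
    (fun _ => inferInstance) (by unfold Function.uncurry; fun_prop)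

instance (t : ℕ) (z) : IsProbabilityMeasure (M.act t z) :=
  Measure.isProbabilityMeasure_map (by fun_prop)

lemma integral_act (t : ℕ) (z) {F : X0 × U0 × ProbabilityMeasure X → ℝ} (hF : Measurable F) :
    ∫ w, F w ∂(M.act t z) = M.G t F z := by
  unfold act
  rw [integral_map (by fun_prop) hF.aestronglyMeasurable]; rfl

/-- one-step kernel of the limiting process -/
noncomputable def step (t : ℕ) (s : X0 × U0 × ProbabilityMeasure X) :
    Measure (X0 × U0 × ProbabilityMeasure X) :=
  (M.p0 s.1 s.2.1 s.2.2 : Measure X0).bind fun y => M.act (t + 1) (y, M.Tq t s.1 s.2.1 s.2.2)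

lemma meas_step (t : ℕ) : Measurable (M.step t) := by
  have hT := M.meas_Tq t
  refine meas_bind (κ := fun s : X0 × U0 × ProbabilityMeasure X =>
      (M.p0 s.1 s.2.1 s.2.2 : Measure X0))
    (κ' := fun (s : X0 × U0 × ProbabilityMeasure X) y =>
      M.act (t + 1) (y, M.Tq t s.1 s.2.1 s.2.2)) M.meas_p0 (fun _ => inferInstance) ?_
      (fun _ _ => inferInstance)
  exact (M.meas_act (t + 1)).comp (f := fun z : (X0 × U0 × ProbabilityMeasure X) × X0 =>
    (z.2, M.Tq t z.1.1 z.1.2.1 z.1.2.2)) (measurable_snd.prodMk (hT.comp measurable_fst))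

lemma meas_act_y (t : ℕ) (ν : ProbabilityMeasure X) : Measurable fun y => M.act t (y, ν) :=
  (M.meas_act t).comp (f := fun y => (y, ν)) (by fun_prop)

instance (t : ℕ) (s) : IsProbabilityMeasure (M.step t s) :=
  isProb_bind (M.meas_act_y _ _) fun _ => inferInstance

lemma integral_step (t : ℕ) (s) {F : X0 × U0 × ProbabilityMeasure X → ℝ} (hF : Measurable F)
    {C : ℝ} (hC : ∀ z, |F z| ≤ C) : ∫ w, F w ∂(M.step t s) = M.A t F s := by
  unfold step
  rw [integral_bind (M.meas_act_y _ _) (fun _ => inferInstance) hF hC]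
  simp_rw [M.integral_act _ _ hF]; rfl

lemma lim_zero : M.lim 0 = M.act 0 (M.x00, M.μ0) := rfl
lemma lim_succ (t : ℕ) : M.lim (t + 1) = (M.lim t).bind (M.step t) := rfl

instance isProb_lim (t : ℕ) : IsProbabilityMeasure (M.lim t) := by
  induction t with
  | zero => rw [lim_zero]; infer_instance
  | succ t ih => rw [lim_succ]; exact isProb_bind (M.meas_step t) fun _ => inferInstance

lemma integral_lim_zero {F : X0 × U0 × ProbabilityMeasure X → ℝ} (hF : Measurable F) :
    ∫ w, F w ∂(M.lim 0) = M.G 0 F (M.x00, M.μ0) := by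
  rw [lim_zero, M.integral_act _ _ hF]

lemma integral_lim_succ (t : ℕ) {F : X0 × U0 × ProbabilityMeasure X → ℝ} (hF : Measurable F)
    {C : ℝ} (hC : ∀ z, |F z| ≤ C) :
    ∫ w, F w ∂(M.lim (t + 1)) = ∫ w, M.A t F w ∂(M.lim t) := by
  rw [lim_succ, integral_bind (M.meas_step t) (fun _ => inferInstance) hF hC]
  simp_rw [M.integral_step t _ hF hC]

/-- sampling the major action in the finite process -/
noncomputable def actN (N t : ℕ) (z : X0 × (Fin N → X)) : Measure (X0 × U0 × (Fin N → X)) :=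
  (M.q0 t z.1 (emp N z.2) : Measure U0).map fun u => (z.1, u, z.2)

lemma meas_actN {N : ℕ} (hN : N ≠ 0) (t : ℕ) : Measurable (M.actN N t) := by
  have he := meas_emp (X := X) hN
  refine meas_map (κ := fun z : X0 × (Fin N → X) => (M.q0 t z.1 (emp N z.2) : Measure U0))
    (F := fun (z : X0 × (Fin N → X)) u => (z.1, u, z.2)) ?_
    (fun _ => inferInstance) (by unfold Function.uncurry; fun_prop)
  exact (M.meas_q0 t).comp (f := fun z : X0 × (Fin N → X) => (z.1, emp N z.2))
    (measurable_fst.prodMk (he.comp measurable_snd))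

instance (N t : ℕ) (z) : IsProbabilityMeasure (M.actN N t z) :=
  Measure.isProbabilityMeasure_map (by fun_prop)

lemma meas_embF {N : ℕ} (hN : N ≠ 0) : Measurable fun w : X0 × U0 × (Fin N → X) =>
    (w.1, w.2.1, emp N w.2.2) := by
  have he := meas_emp (X := X) hN
  exact measurable_fst.prodMk ((measurable_fst.comp measurable_snd).prodMk
    (he.comp (measurable_snd.comp measurable_snd)))

lemma meas_embG {N : ℕ} (hN : N ≠ 0) : Measurable fun w : X0 × (Fin N → X) =>
    (w.1, emp N w.2) :=
  measurable_fst.prodMk ((meas_emp (X := X) hN).comp measurable_snd)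

lemma integral_actN {N : ℕ} (hN : N ≠ 0) (t : ℕ) (z) {F : X0 × U0 × ProbabilityMeasure X → ℝ}
    (hF : Measurable F) :
    ∫ w, F (w.1, w.2.1, emp N w.2.2) ∂(M.actN N t z) = M.G t F (z.1, emp N z.2) := by
  unfold actN
  have hm : Measurable (fun w : X0 × U0 × (Fin N → X) => F (w.1, w.2.1, emp N w.2.2)) :=
    hF.comp (meas_embF hN)
  rw [integral_map (by fun_prop) hm.aestronglyMeasurable]; rfl

/-- transition of major and minor states -/
noncomputable def trN (N t : ℕ) (s : X0 × U0 × (Fin N → X)) : Measure (X0 × (Fin N → X)) :=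
  (M.p0 s.1 s.2.1 (emp N s.2.2) : Measure X0).prod
    (Measure.pi fun i => M.K t (s.2.2 i) s.1 s.2.1 (emp N s.2.2))

instance (N t : ℕ) (s) : IsProbabilityMeasure (M.trN N t s) := by
  unfold trN; infer_instance

lemma meas_trN {N : ℕ} (hN : N ≠ 0) (t : ℕ) : Measurable (M.trN N t) := by
  refine meas_prod (κ := fun s : X0 × U0 × (Fin N → X) =>
      (M.p0 s.1 s.2.1 (emp N s.2.2) : Measure X0))
    (κ' := fun s : X0 × U0 × (Fin N → X) =>
      Measure.pi fun i => M.K t (s.2.2 i) s.1 s.2.1 (emp N s.2.2))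
    (M.meas_p0.comp (meas_embF hN)) (fun _ => inferInstance) ?_ (fun _ => inferInstance)
  refine meas_pi (κ := fun (i : Fin N) (s : X0 × U0 × (Fin N → X)) =>
    M.K t (s.2.2 i) s.1 s.2.1 (emp N s.2.2)) (fun i => ?_) (fun _ _ => inferInstance)
  refine (M.meas_K t).comp (f := fun s : X0 × U0 × (Fin N → X) =>
    (s.2.2 i, s.1, s.2.1, emp N s.2.2)) (Measurable.prodMk (by fun_prop) (meas_embF hN))

/-- one-step kernel of the finite process -/
noncomputable def stepN (N t : ℕ) (s : X0 × U0 × (Fin N → X)) : Measure (X0 × U0 × (Fin N → X)) :=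
  (M.trN N t s).bind (M.actN N (t + 1))

lemma meas_stepN {N : ℕ} (hN : N ≠ 0) (t : ℕ) : Measurable (M.stepN N t) :=
  meas_bind (κ' := fun _ z => M.actN N (t + 1) z) (M.meas_trN hN t) (fun _ => inferInstance)
    ((M.meas_actN hN (t + 1)).comp measurable_snd) (fun _ _ => inferInstance)

lemma isProb_stepN {N : ℕ} (hN : N ≠ 0) (t : ℕ) (s) : IsProbabilityMeasure (M.stepN N t s) :=
  isProb_bind (M.meas_actN hN _) fun _ => inferInstance

lemma fin_zero (N : ℕ) : M.fin N 0 = (Measure.pi fun _ : Fin N => (M.μ0 : Measure X)).bind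
    fun x => M.actN N 0 (M.x00, x) := rfl
lemma fin_succ (N t : ℕ) : M.fin N (t + 1) = (M.fin N t).bind (M.stepN N t) := rfl

lemma meas_actN_x {N : ℕ} (hN : N ≠ 0) (t : ℕ) (x0 : X0) :
    Measurable fun x => M.actN N t (x0, x) :=
  (M.meas_actN hN t).comp (f := fun x => (x0, x)) (by fun_prop)

lemma isProb_fin {N : ℕ} (hN : N ≠ 0) (t : ℕ) : IsProbabilityMeasure (M.fin N t) := by
  induction t with
  | zero => rw [fin_zero]; exact isProb_bind (M.meas_actN_x hN 0 _) fun _ => inferInstance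
  | succ t ih => rw [fin_succ]; exact isProb_bind (M.meas_stepN hN t) (M.isProb_stepN hN t)

lemma integral_fin_zero {N : ℕ} (hN : N ≠ 0) {F : X0 × U0 × ProbabilityMeasure X → ℝ}
    (hF : Measurable F) {C : ℝ} (hC : ∀ z, |F z| ≤ C) :
    ∫ w, F (w.1, w.2.1, emp N w.2.2) ∂(M.fin N 0) =
      ∫ x, M.G 0 F (M.x00, emp N x) ∂(Measure.pi fun _ : Fin N => (M.μ0 : Measure X)) := by
  rw [fin_zero, integral_bind (F := fun w => F (w.1, w.2.1, emp N w.2.2))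
    (M.meas_actN_x hN 0 _) (fun _ => inferInstance) (hF.comp (meas_embF hN)) (fun a => hC _)]
  simp_rw [M.integral_actN hN _ _ hF]

lemma integral_fin_succ {N : ℕ} (hN : N ≠ 0) (t : ℕ) {F : X0 × U0 × ProbabilityMeasure X → ℝ}
    (hF : Measurable F) {C : ℝ} (hC : ∀ z, |F z| ≤ C) :
    ∫ w, F (w.1, w.2.1, emp N w.2.2) ∂(M.fin N (t + 1)) =
      ∫ s, ∫ y, M.G (t + 1) F (y.1, emp N y.2) ∂(M.trN N t s) ∂(M.fin N t) := by
  have := M.isProb_fin hN t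
  rw [fin_succ, integral_bind (F := fun w => F (w.1, w.2.1, emp N w.2.2))
    (M.meas_stepN hN t) (M.isProb_stepN hN t) (hF.comp (meas_embF hN)) (fun a => hC _)]
  refine integral_congr_ae (ae_of_all _ fun s => ?_)
  simp only [stepN]
  rw [integral_bind (F := fun w => F (w.1, w.2.1, emp N w.2.2))
    (M.meas_actN hN _) (fun _ => inferInstance) (hF.comp (meas_embF hN)) (fun a => hC _)]
  simp_rw [M.integral_actN hN _ _ hF]

/-- the law of large numbers bound at population size `N` with error `δ` -/
def LLN (X : Type*) [MetricSpace X] [CompactSpace X] [MeasurableSpace X] [BorelSpace X]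
    [Nonempty X] (N : ℕ) (δ : ℝ) : Prop := N ≠ 0 ∧ ∀ (κ : Fin N → Measure X)
    (_ : ∀ i, IsProbabilityMeasure (κ i)) (ν : ProbabilityMeasure X),
    (∀ f : X → ℝ, LipschitzWith 1 f →
      ∫ y, f y ∂(ν : Measure X) = (N : ℝ)⁻¹ * ∑ i, ∫ y, f y ∂(κ i)) →
    ∫ x, W1 (emp N x) ν ∂(Measure.pi κ) ≤ δ

lemma int_W1 {N : ℕ} (hN : N ≠ 0) (ν : ProbabilityMeasure X) (m : Measure (Fin N → X))
    [IsFiniteMeasure m] : Integrable (fun x => W1 (emp N x) ν) m :=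
  int_bdd (C := 2 * Metric.diam (Set.univ : Set X)) ((meas_W1 ν).comp (meas_emp hN)) fun x => by
    rw [abs_of_nonneg (W1_nonneg _ _)]; exact W1_le_D _ _

lemma step_bound {N : ℕ} {δ : ℝ} (h : LLN X N δ) (t : ℕ) {L : ℝ} (hL : 0 ≤ L)
    {F : X0 × U0 × ProbabilityMeasure X → ℝ} (hF : LipF L F) (s : X0 × U0 × (Fin N → X)) :
    |∫ y, M.G (t + 1) F (y.1, emp N y.2) ∂(M.trN N t s) - M.A t F (s.1, s.2.1, emp N s.2.2)|
      ≤ L * (1 + LPi) * δ := by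
  obtain ⟨hN, hlln⟩ := h
  obtain ⟨C, hC⟩ := hF.bdd hL
  have hLG : 0 ≤ L * (1 + LPi) := mul_nonneg hL (by linarith [M.LPi_nn])
  have hG := M.lip_G (t + 1) hL hF
  have hGm := hG.meas hLG
  set ν := M.Tq t s.1 s.2.1 (emp N s.2.2) with hν
  have h1 : M.A t F (s.1, s.2.1, emp N s.2.2) = ∫ y, M.G (t + 1) F (y.1, ν) ∂(M.trN N t s) := by
    unfold trN
    rw [integral_fun_fst (μ := (M.p0 s.1 s.2.1 (emp N s.2.2) : Measure X0))
      (f := fun y => M.G (t + 1) F (y, ν))]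
    simp [A, hν]
  have i1 : Integrable (fun y : X0 × (Fin N → X) => M.G (t + 1) F (y.1, emp N y.2))
      (M.trN N t s) := int_bdd (hGm.comp (meas_embG hN)) fun _ => M.bdd_G _ hC _
  have i2 : Integrable (fun y : X0 × (Fin N → X) => M.G (t + 1) F (y.1, ν))
      (M.trN N t s) := int_bdd (hGm.comp (f := fun y : X0 × (Fin N → X) => (y.1, ν))
        (by fun_prop)) fun _ => M.bdd_G _ hC _
  rw [h1, ← integral_sub i1 i2]
  have hW : ∫ y, W1 (emp N y.2) ν ∂(M.trN N t s) ≤ δ := by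
    unfold trN
    rw [integral_fun_snd (f := fun x => W1 (emp N x) ν)]
    simp only [probReal_univ, one_smul]
    refine hlln _ (fun _ => inferInstance) ν fun f hf => ?_
    rw [hν, M.integral_Tq _ _ _ _ hf.continuous,
      integral_emp hN _ (lip_cont (M.lip_K_x t s.1 s.2.1 (emp N s.2.2) hf))]
  have iW : Integrable (fun y : X0 × (Fin N → X) => W1 (emp N y.2) ν) (M.trN N t s) :=
    int_bdd (C := 2 * Metric.diam (Set.univ : Set X))
      (((meas_W1 ν).comp (meas_emp hN)).comp measurable_snd) fun x => by
    rw [abs_of_nonneg (W1_nonneg _ _)]; exact W1_le_D _ _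
  refine abs_integral_le_integral_abs.trans ?_
  refine (integral_mono (i1.sub i2).abs (iW.const_mul (L * (1 + LPi))) fun y => ?_).trans ?_
  · simpa using hG y.1 y.1 (emp N y.2) ν
  · rw [integral_const_mul]
    exact mul_le_mul_of_nonneg_left hW hLG

/-- error constants -/
noncomputable def Cst (Lp Lp0 LPi : ℝ) : ℕ → ℝ
  | 0 => 1 + LPi
  | t + 1 => (1 + LPi) + ((1 + LPi) * (Lp0 + 2 * (Lp * (1 + LPi)))) * Cst Lp Lp0 LPi t

lemma conv {N : ℕ} {δ : ℝ} (h : LLN X N δ) (t : ℕ) : ∀ {L : ℝ} (_ : 0 ≤ L)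
    {F : X0 × U0 × ProbabilityMeasure X → ℝ} (_ : LipF L F),
    |∫ w, F (w.1, w.2.1, emp N w.2.2) ∂(M.fin N t) - ∫ w, F w ∂(M.lim t)|
      ≤ L * Cst Lp Lp0 LPi t * δ := by
  have hN := h.1
  have hcc := M.cst_nn
  have hPi := M.LPi_nn
  have hp0 := M.Lp0_nn
  have hcc2 : 0 ≤ (1 + LPi) * (Lp0 + 2 * (Lp * (1 + LPi))) := by positivity
  induction t with
  | zero =>
    intro L hL F hF
    obtain ⟨C, hC⟩ := hF.bdd hL
    have hLG : 0 ≤ L * (1 + LPi) := by positivity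
    have hG := M.lip_G 0 hL hF
    rw [M.integral_fin_zero hN (hF.meas hL) hC, M.integral_lim_zero (hF.meas hL)]
    have i1 : Integrable (fun x => M.G 0 F (M.x00, emp N x))
        (Measure.pi fun _ : Fin N => (M.μ0 : Measure X)) :=
      int_bdd ((hG.meas hLG).comp (f := fun x => (M.x00, emp N x))
        (measurable_const.prodMk (meas_emp hN))) fun _ => M.bdd_G _ hC _
    have e : M.G 0 F (M.x00, M.μ0) = ∫ _, M.G 0 F (M.x00, M.μ0)
        ∂(Measure.pi fun _ : Fin N => (M.μ0 : Measure X)) := by simp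
    rw [e, ← integral_sub i1 (integrable_const _)]
    refine abs_integral_le_integral_abs.trans ?_
    refine (integral_mono (i1.sub (integrable_const _)).abs
      ((int_W1 hN M.μ0 _).const_mul (L * (1 + LPi))) fun x => ?_).trans ?_
    · simpa using hG M.x00 M.x00 (emp N x) M.μ0
    · rw [integral_const_mul]
      refine mul_le_mul_of_nonneg_left ?_ hLG
      refine h.2 _ (fun _ => inferInstance) _ fun f hf => ?_
      have : (N : ℝ) ≠ 0 := by exact_mod_cast hN
      simp [this]
  | succ t ih =>
    intro L hL F hF
    obtain ⟨C, hC⟩ := hF.bdd hL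
    have hA := M.lip_A t hL hF
    have hLA : 0 ≤ L * ((1 + LPi) * (Lp0 + 2 * (Lp * (1 + LPi)))) := by positivity
    have hLG : 0 ≤ L * (1 + LPi) := by positivity
    have hGm := (M.lip_G (t + 1) hL hF).meas hLG
    have := M.isProb_fin hN t
    rw [M.integral_fin_succ hN t (hF.meas hL) hC, M.integral_lim_succ t (hF.meas hL) hC]
    have h1 := ih hLA hA
    have h2 : |∫ s, ∫ y, M.G (t + 1) F (y.1, emp N y.2) ∂(M.trN N t s) ∂(M.fin N t)
        - ∫ w, M.A t F (w.1, w.2.1, emp N w.2.2) ∂(M.fin N t)| ≤ L * (1 + LPi) * δ := by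
      rw [← integral_sub]
      · exact abs_int_le fun s => M.step_bound h t hL hF s
      · refine int_bdd (C := C) ?_ fun s => abs_int_le fun _ => M.bdd_G _ hC _
        exact meas_integral (F := fun _ y => M.G (t + 1) F (y.1, emp N y.2)) (M.meas_trN hN t)
          (fun _ => inferInstance) ((hGm.comp (meas_embG hN)).comp measurable_snd)
      · exact int_bdd ((hA.meas hLA).comp (meas_embF hN)) fun _ => M.bdd_A _ hC _
    refine (abs_sub_le _ _ _).trans ((add_le_add h2 h1).trans (le_of_eq ?_))
    simp only [Cst]; ring

end Setup
end
end M3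

namespace M3
open ProbabilityTheory Filter Topology
set_option linter.unusedSectionVars false

lemma disc_summable {γ : ℝ} (h0 : 0 < γ) (h1 : γ < 1) {b : ℕ → ℝ} {R : ℝ} (hb : ∀ t, |b t| ≤ R) :
    Summable fun t => γ ^ t * b t := by
  refine Summable.of_norm_bounded
    (g := fun t => γ ^ t * R) ((summable_geometric_of_lt_one h0.le h1).mul_right R) fun t => ?_
  rw [Real.norm_eq_abs, abs_mul, abs_of_pos (pow_pos h0 t)]
  exact mul_le_mul_of_nonneg_left (hb t) (pow_pos h0 t).le

lemma disc_tail {γ : ℝ} (h0 : 0 < γ) (h1 : γ < 1) {b : ℕ → ℝ} {R : ℝ} (hb : ∀ t, |b t| ≤ R)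
    (n : ℕ) : |(∑' t, γ ^ t * b t) - ∑ t ∈ Finset.range n, γ ^ t * b t|
      ≤ γ ^ n * (R * (1 - γ)⁻¹) := by
  have hs := disc_summable h0 h1 hb
  rw [← hs.sum_add_tsum_nat_add n, add_sub_cancel_left, ← Real.norm_eq_abs]
  have hg := ((hasSum_geometric_of_lt_one h0.le h1).mul_left (γ ^ n * R))
  rw [← mul_assoc]
  refine tsum_of_norm_bounded hg fun t => ?_
  rw [Real.norm_eq_abs, abs_mul, abs_of_pos (pow_pos h0 _), pow_add]
  calc γ ^ t * γ ^ n * |b (t + n)| ≤ γ ^ t * γ ^ n * R :=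
        mul_le_mul_of_nonneg_left (hb _) (by positivity)
    _ = _ := by ring

lemma unroll {γ : ℝ} (h0 : 0 < γ) (K : ℕ) : ∀ (e c : ℕ → ℝ),
    (∀ t < K, e t ≤ c t + γ * e (t + 1)) → e K ≤ c K →
    e 0 ≤ ∑ t ∈ Finset.range (K + 1), γ ^ t * c t := by
  induction K with
  | zero => intro e c _ h; simpa using h
  | succ K ih =>
    intro e c h hK
    have h2 := ih (fun t => e (t + 1)) (fun t => c (t + 1)) (fun t ht => h (t + 1) (by omega)) hK
    have h3 := h 0 (by omega)
    rw [Finset.sum_range_succ']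
    have h4 := mul_le_mul_of_nonneg_left h2 h0.le
    rw [Finset.mul_sum] at h4
    have h5 : ∑ i ∈ Finset.range (K + 1), γ * (γ ^ i * c (i + 1))
        = ∑ i ∈ Finset.range (K + 1), γ ^ (i + 1) * c (i + 1) :=
      Finset.sum_congr rfl fun i _ => by ring
    rw [h5] at h4
    simp only [zero_add] at h3 h4
    simp only [pow_zero, one_mul]
    linarith

section
variable {X U X0 U0 : Type*}
    [MetricSpace X] [CompactSpace X] [MeasurableSpace X] [BorelSpace X] [Nonempty X]
    [MetricSpace U] [CompactSpace U] [MeasurableSpace U] [BorelSpace U]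
    [MetricSpace X0] [CompactSpace X0] [MeasurableSpace X0] [BorelSpace X0]
    [MetricSpace U0] [CompactSpace U0] [MeasurableSpace U0] [BorelSpace U0]
    {Lp Lp0 LPi : ℝ}
namespace Setup
variable (M : Setup X U X0 U0 Lp Lp0 LPi)

/-- value of the limiting process -/
noncomputable def Jlim (γ : ℝ) (F : X0 × U0 × ProbabilityMeasure X → ℝ) : ℝ :=
  ∑' t : ℕ, γ ^ t * ∫ w, F w ∂(M.lim t)

/-- value of the finite process -/
noncomputable def Jfin (N : ℕ) (γ : ℝ) (F : X0 × U0 × ProbabilityMeasure X → ℝ) : ℝ :=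
  ∑' t : ℕ, γ ^ t * ∫ w, F (w.1, w.2.1, emp N w.2.2) ∂(M.fin N t)

lemma Cst_nn (M : Setup X U X0 U0 Lp Lp0 LPi) (t : ℕ) : 0 ≤ Cst Lp Lp0 LPi t := by
  have := M.cst_nn
  have := M.LPi_nn
  have := M.Lp0_nn
  induction t with
  | zero => simp only [Cst]; positivity
  | succ t ih => simp only [Cst]; positivity

theorem unif (γ : ℝ) (h0 : 0 < γ) (h1 : γ < 1) {L : ℝ} (hL : 0 ≤ L)
    {F : X0 × U0 × ProbabilityMeasure X → ℝ} (hF : LipF L F) {ε : ℝ} (hε : 0 < ε) :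
    ∃ N0 : ℕ, ∀ N ≥ N0, ∀ M : Setup X U X0 U0 Lp Lp0 LPi, |M.Jfin N γ F - M.Jlim γ F| ≤ ε := by
  obtain ⟨R, hR⟩ := hF.bdd hL
  obtain ⟨n, hn⟩ : ∃ n : ℕ, γ ^ n * (R * (1 - γ)⁻¹) ≤ ε / 3 := by
    have ht : Tendsto (fun n : ℕ => γ ^ n * (R * (1 - γ)⁻¹)) atTop (𝓝 (0 * (R * (1 - γ)⁻¹))) :=
      (tendsto_pow_atTop_nhds_zero_of_lt_one h0.le h1).mul_const _
    rw [zero_mul] at ht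
    exact ((ht.eventually (ge_mem_nhds (show (0 : ℝ) < ε / 3 by positivity))).exists)
  set S := ∑ t ∈ Finset.range n, γ ^ t * (L * |Cst Lp Lp0 LPi t|) with hS
  have hS0 : 0 ≤ S := Finset.sum_nonneg fun t _ => by positivity
  have hδ : 0 < ε / (3 * (S + 1)) := by positivity
  obtain ⟨N0, hN0⟩ := lln X hδ
  refine ⟨N0, fun N hN M => ?_⟩
  have hl : LLN X N (ε / (3 * (S + 1))) := hN0 N hN
  have hpf := fun t => M.isProb_fin hl.1 t
  have b1 : ∀ t, |∫ w, F (w.1, w.2.1, emp N w.2.2) ∂(M.fin N t)| ≤ R :=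
    fun t => abs_int_le fun _ => hR _
  have b2 : ∀ t, |∫ w, F w ∂(M.lim t)| ≤ R := fun t => abs_int_le fun _ => hR _
  have t1 := disc_tail h0 h1 b1 n
  have t2 := disc_tail h0 h1 b2 n
  have t3 : |(∑ t ∈ Finset.range n, γ ^ t * ∫ w, F (w.1, w.2.1, emp N w.2.2) ∂(M.fin N t))
      - ∑ t ∈ Finset.range n, γ ^ t * ∫ w, F w ∂(M.lim t)| ≤ ε / 3 := by
    rw [← Finset.sum_sub_distrib]
    refine (Finset.abs_sum_le_sum_abs _ _).trans ?_
    have : ∀ t ∈ Finset.range n, |γ ^ t * ∫ w, F (w.1, w.2.1, emp N w.2.2) ∂(M.fin N t)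
        - γ ^ t * ∫ w, F w ∂(M.lim t)| ≤ γ ^ t * (L * |Cst Lp Lp0 LPi t|) * (ε / (3 * (S + 1))) := by
      intro t _
      rw [← mul_sub, abs_mul, abs_of_pos (pow_pos h0 t), mul_assoc]
      refine mul_le_mul_of_nonneg_left ?_ (pow_pos h0 t).le
      rw [abs_of_nonneg (M.Cst_nn t)]
      exact M.conv hl t hL hF
    refine (Finset.sum_le_sum this).trans ?_
    rw [← Finset.sum_mul, ← hS]
    rw [mul_div_assoc', div_le_div_iff₀ (by positivity) (by positivity)]
    nlinarith
  rw [← Jfin.eq_1 M N γ F] at t1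
  rw [← Jlim.eq_1 M γ F] at t2
  rw [abs_le] at *
  constructor <;> linarith [t1.1, t1.2, t2.1, t2.2, t3.1, t3.2]

lemma select (t : ℕ) {L : ℝ} (hL : 0 ≤ L)
    {F : X0 × U0 × ProbabilityMeasure X → ℝ} (hF : LipF L F) {δ : ℝ} (hδ : 0 < δ) :
    ∃ a : X0 × ProbabilityMeasure X → U0, Measurable a ∧
      ∀ s, M.G t F s ≤ δ + F (s.1, a s, s.2) := by
  classical
  have hne : Nonempty U0 := (M.q0 0 M.x00 M.μ0).nonempty
  obtain ⟨R, hR⟩ := hF.bdd hL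
  have hcont : ∀ s : X0 × ProbabilityMeasure X, Continuous fun u => F (s.1, u, s.2) := fun s =>
    lip_cont (K := L) fun u v => by simpa [W1_self] using hF s.1 s.1 u v s.2 s.2
  have hex : ∀ s : X0 × ProbabilityMeasure X, ∃ n : ℕ,
      M.G t F s - δ < F (s.1, TopologicalSpace.denseSeq U0 n, s.2) := by
    intro s
    by_contra! hcon
    have hall : ∀ u, F (s.1, u, s.2) ≤ M.G t F s - δ := by
      intro u
      have hcl : IsClosed {u | F (s.1, u, s.2) ≤ M.G t F s - δ} :=
        isClosed_le (hcont s) continuous_const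
      have hsub : Set.range (TopologicalSpace.denseSeq U0) ⊆
          {u | F (s.1, u, s.2) ≤ M.G t F s - δ} := by
        rintro _ ⟨n, rfl⟩; exact hcon n
      have := closure_minimal hsub hcl
      exact this (by rw [(TopologicalSpace.denseRange_denseSeq U0).closure_eq]; trivial)
    have : M.G t F s ≤ ∫ _, (M.G t F s - δ) ∂(M.q0 t s.1 s.2 : Measure U0) :=
      integral_mono (int_bdd (hcont s).measurable fun _ => hR _) (integrable_const _) hall
    simp at this
    linarith
  have hFm := hF.meas hL
  have hGm : Measurable (M.G t F) :=
    (M.lip_G t hL hF).meas (mul_nonneg hL (by linarith [M.LPi_nn]))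
  refine ⟨fun s => TopologicalSpace.denseSeq U0 (Nat.find (hex s)), ?_, fun s => ?_⟩
  · refine (measurable_from_nat (f := TopologicalSpace.denseSeq U0)).comp
      (measurable_find hex fun k => ?_)
    refine measurableSet_lt (hGm.sub_const δ) ?_
    exact hFm.comp (f := fun s : X0 × ProbabilityMeasure X =>
      (s.1, TopologicalSpace.denseSeq U0 k, s.2)) (by fun_prop)
  · have := Nat.find_spec (hex s)
    linarith

/-- the mean field action induced by the agent level policy -/
noncomputable def kS : Kernel (X0 × ProbabilityMeasure X) X :=
  ⟨fun s => (s.2 : Measure X), meas_coe.comp measurable_snd⟩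

noncomputable def kA (t : ℕ) : Kernel ((X0 × ProbabilityMeasure X) × X) U :=
  ⟨fun z => (M.q t z.2 z.1.1 z.1.2 : Measure U), (M.meas_q t).comp
    (f := fun z : (X0 × ProbabilityMeasure X) × X => ((z.2, z.1.1), z.1.2)) (by fun_prop)⟩

instance : IsMarkovKernel (kS : Kernel (X0 × ProbabilityMeasure X) X) :=
  ⟨fun s => inferInstanceAs (IsProbabilityMeasure (s.2 : Measure X))⟩

instance (t : ℕ) : IsMarkovKernel (M.kA t) :=
  ⟨fun z => inferInstanceAs (IsProbabilityMeasure (M.q t z.2 z.1.1 z.1.2 : Measure U))⟩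

noncomputable def hh (t : ℕ) (s : X0 × ProbabilityMeasure X) : ProbabilityMeasure (X × U) :=
  ⟨(Kernel.compProd kS (M.kA t)) s, inferInstance⟩

lemma meas_hh (t : ℕ) : Measurable (M.hh t) :=
  meas_mk (Kernel.measurable _)

lemma hh_mem (t : ℕ) (s) : M.hh t s ∈ Hset s.2 := by
  have := congrArg (fun k => k s) (Kernel.fst_compProd kS (M.kA t))
  simp only [Kernel.fst_apply] at this
  exact this

lemma T_hh {T : X0 → U0 → ProbabilityMeasure X → ProbabilityMeasure (X × U) → ProbabilityMeasure X}
    (hT : ∀ (x0 : X0) (u0 : U0) (μ : ProbabilityMeasure X) (ν : ProbabilityMeasure (X × U)),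
      (T x0 u0 μ ν : Measure X)
        = (ν : Measure (X × U)).bind fun z => (M.p z.1 z.2 x0 u0 μ : Measure X))
    (t : ℕ) (s : X0 × ProbabilityMeasure X) (u0 : U0) :
    T s.1 u0 s.2 (M.hh t s) = M.Tq t s.1 u0 s.2 := by
  apply Subtype.ext
  change (T s.1 u0 s.2 (M.hh t s) : Measure X) = (M.Tq t s.1 u0 s.2 : Measure X)
  rw [hT, M.Tq_eq]
  have hm : Measurable fun z : X × U => (M.p z.1 z.2 s.1 u0 s.2 : Measure X) :=
    M.meas_p.comp (f := fun z : X × U => ((z.1, z.2, s.1, u0), s.2)) (by fun_prop)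
  ext B hB
  rw [Measure.bind_apply hB hm.aemeasurable, Measure.bind_apply hB (M.meas_K_x t _ _ _).aemeasurable]
  change ∫⁻ z, (M.p z.1 z.2 s.1 u0 s.2 : Measure X) B ∂((Kernel.compProd kS (M.kA t)) s) = _
  rw [Kernel.lintegral_compProd (f := fun z : X × U => (M.p z.1 z.2 s.1 u0 s.2 : Measure X) B)
    _ _ _ ((Measure.measurable_coe hB).comp hm)]
  refine lintegral_congr fun x => ?_
  unfold K
  rw [Measure.bind_apply hB (M.meas_p_u _ _ _ _).aemeasurable]
  rfl

/-- one-step kernel under a deterministic major policy -/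
noncomputable def pk (a : X0 × ProbabilityMeasure X → U0) (t : ℕ) (s : X0 × ProbabilityMeasure X) :
    Measure (X0 × ProbabilityMeasure X) :=
  (M.p0 s.1 (a s) s.2 : Measure X0).map fun y => (y, M.Tq t s.1 (a s) s.2)

instance (a : X0 × ProbabilityMeasure X → U0) (t : ℕ) (s) : IsProbabilityMeasure (M.pk a t s) :=
  Measure.isProbabilityMeasure_map (by fun_prop)

lemma meas_pk {a : X0 × ProbabilityMeasure X → U0} (ha : Measurable a) (t : ℕ) :
    Measurable (M.pk a t) := by
  have he : Measurable fun s : X0 × ProbabilityMeasure X => (s.1, a s, s.2) := by fun_prop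
  refine meas_map (κ := fun s : X0 × ProbabilityMeasure X => (M.p0 s.1 (a s) s.2 : Measure X0))
    (F := fun (s : X0 × ProbabilityMeasure X) y => (y, M.Tq t s.1 (a s) s.2))
    (M.meas_p0.comp he) (fun _ => inferInstance) ?_
  exact measurable_snd.prodMk (((M.meas_Tq t).comp he).comp measurable_fst)

/-- law under a deterministic major policy -/
noncomputable def pl (a : ℕ → X0 × ProbabilityMeasure X → U0) :
    ℕ → Measure (X0 × ProbabilityMeasure X)
  | 0 => Measure.dirac (M.x00, M.μ0)
  | t + 1 => (pl a t).bind (M.pk (a t) t)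

lemma isProb_pl {a : ℕ → X0 × ProbabilityMeasure X → U0} (ha : ∀ t, Measurable (a t)) (t : ℕ) :
    IsProbabilityMeasure (M.pl a t) := by
  induction t with
  | zero => unfold pl; infer_instance
  | succ t ih => rw [pl]; exact isProb_bind (M.meas_pk (ha t) t) fun _ => inferInstance

lemma pl_eq {T : X0 → U0 → ProbabilityMeasure X → ProbabilityMeasure (X × U) → ProbabilityMeasure X}
    (hT : ∀ (x0 : X0) (u0 : U0) (μ : ProbabilityMeasure X) (ν : ProbabilityMeasure (X × U)),
      (T x0 u0 μ ν : Measure X)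
        = (ν : Measure (X × U)).bind fun z => (M.p z.1 z.2 x0 u0 μ : Measure X))
    (a : ℕ → X0 × ProbabilityMeasure X → U0) (t : ℕ) :
    m3Law M.p0 T (fun t s => (M.hh t s, a t s)) (M.x00, M.μ0) t = M.pl a t := by
  induction t with
  | zero => rfl
  | succ t ih =>
    rw [m3Law, pl, ih]
    congr 1
    funext s
    simp only [M.T_hh hT, pk]

lemma integral_pl_succ {a : ℕ → X0 × ProbabilityMeasure X → U0} (ha : ∀ t, Measurable (a t))
    (t : ℕ) {L : ℝ} (hL : 0 ≤ L) {F : X0 × U0 × ProbabilityMeasure X → ℝ} (hF : LipF L F) :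
    ∫ s, M.G (t + 1) F s ∂(M.pl a (t + 1)) = ∫ s, M.A t F (s.1, a t s, s.2) ∂(M.pl a t) := by
  obtain ⟨R, hR⟩ := hF.bdd hL
  have := M.isProb_pl ha t
  have hGm : Measurable (M.G (t + 1) F) :=
    (M.lip_G (t + 1) hL hF).meas (mul_nonneg hL (by linarith [M.LPi_nn]))
  rw [pl, integral_bind (M.meas_pk (ha t) t) (fun _ => inferInstance) hGm (M.bdd_G _ hR)]
  refine integral_congr_ae (ae_of_all _ fun s => ?_)
  simp only [pk]
  rw [integral_map (by fun_prop) hGm.aestronglyMeasurable]; rfl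

/-- finite horizon action values -/
noncomputable def Q (γ : ℝ) (F : X0 × U0 × ProbabilityMeasure X → ℝ) :
    ℕ → ℕ → X0 × U0 × ProbabilityMeasure X → ℝ
  | 0, _ => F
  | n + 1, t => fun z => F z + γ * M.A t (Q γ F n (t + 1)) z

lemma lip_Q {γ : ℝ} (h0 : 0 < γ) {L : ℝ} (hL : 0 ≤ L) {F : X0 × U0 × ProbabilityMeasure X → ℝ}
    (hF : LipF L F) (n : ℕ) : ∀ t, ∃ L', 0 ≤ L' ∧ LipF L' (M.Q γ F n t) := by
  induction n with
  | zero => intro t; exact ⟨L, hL, hF⟩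
  | succ n ih =>
    intro t
    obtain ⟨L', h, h'⟩ := ih (t + 1)
    have := M.cst_nn
    have := M.LPi_nn
    have := M.Lp0_nn
    exact ⟨_, by positivity, hF.add ((M.lip_A t h h').smul h0.le)⟩

theorem dominate (γ : ℝ) (h0 : 0 < γ) (h1 : γ < 1) {L : ℝ} (hL : 0 ≤ L)
    {F : X0 × U0 × ProbabilityMeasure X → ℝ} (hF : LipF L F) {δ : ℝ} (hδ : 0 < δ) (K : ℕ) :
    ∃ a : ℕ → X0 × ProbabilityMeasure X → U0, (∀ t, Measurable (a t)) ∧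
      ∑ t ∈ Finset.range (K + 1), γ ^ t * ∫ w, F w ∂(M.lim t) ≤
        ∑ t ∈ Finset.range (K + 1), γ ^ t * (δ + ∫ s, F (s.1, a t s, s.2) ∂(M.pl a t)) := by
  obtain ⟨R, hR⟩ := hF.bdd hL
  have hFm := hF.meas hL
  set W : ℕ → X0 × U0 × ProbabilityMeasure X → ℝ := fun t => M.Q γ F (K - t) t with hW
  choose LW hLW hlipW using fun t => M.lip_Q h0 hL hF (K - t) t
  have hWs : ∀ t < K, W t = fun z => F z + γ * M.A t (W (t + 1)) z := by
    intro t ht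
    have : K - t = (K - (t + 1)) + 1 := by omega
    simp only [hW]
    rw [this, Q]
  have hWK : W K = F := by simp only [hW, Nat.sub_self, Q]
  choose a ha hsel using fun t => M.select t (hLW t) (hlipW t) hδ
  have hpl := M.isProb_pl ha
  have hAlip : ∀ t, Measurable (M.A t (W (t + 1))) := fun t => by
    refine (M.lip_A t (hLW (t + 1)) (hlipW (t + 1))).meas ?_
    have := M.cst_nn
    have := M.LPi_nn
    have := M.Lp0_nn
    have := hLW (t + 1)
    positivity
  have hWm : ∀ t, Measurable (W t) := fun t => (hlipW t).meas (hLW t)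
  have hGm : ∀ t, Measurable (M.G t (W t)) := fun t =>
    (M.lip_G t (hLW t) (hlipW t)).meas (mul_nonneg (hLW t) (by linarith [M.LPi_nn]))
  choose CW hCW using fun t => (hlipW t).bdd (hLW t)
  have hemb : ∀ t, Measurable fun s : X0 × ProbabilityMeasure X => (s.1, a t s, s.2) := fun t => by
    have := ha t
    fun_prop
  refine ⟨a, ha, ?_⟩
  have iF : ∀ t, Integrable (fun s => F (s.1, a t s, s.2)) (M.pl a t) := fun t =>
    int_bdd (hFm.comp (hemb t)) fun _ => hR _
  have iW : ∀ t, Integrable (fun s => W t (s.1, a t s, s.2)) (M.pl a t) := fun t =>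
    int_bdd ((hWm t).comp (hemb t)) fun _ => hCW t _
  have iA : ∀ t, Integrable (fun s => M.A t (W (t + 1)) (s.1, a t s, s.2)) (M.pl a t) := fun t =>
    int_bdd ((hAlip t).comp (hemb t)) fun _ => M.bdd_A t (hCW (t + 1)) _
  have iG : ∀ t, Integrable (M.G t (W t)) (M.pl a t) := fun t =>
    int_bdd (hGm t) fun _ => M.bdd_G t (hCW t) _
  have key : ∀ t, ∫ s, M.G t (W t) s ∂(M.pl a t) ≤ δ + ∫ s, W t (s.1, a t s, s.2) ∂(M.pl a t) := by
    intro t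
    refine (integral_mono (iG t) ((integrable_const δ).add (iW t)) (hsel t)).trans (le_of_eq ?_)
    simp only [Pi.add_apply]
    rw [integral_add (integrable_const δ) (iW t)]
    simp
  have up := unroll h0 K (fun t => ∫ s, M.G t (W t) s ∂(M.pl a t))
    (fun t => δ + ∫ s, F (s.1, a t s, s.2) ∂(M.pl a t))
    (fun t ht => by
      refine (key t).trans (le_of_eq ?_)
      rw [M.integral_pl_succ ha t (hLW (t + 1)) (hlipW (t + 1)), hWs t ht]
      simp only
      rw [integral_add (iF t) ((iA t).const_mul γ), integral_const_mul]
      ring)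
    (by have := key K; rw [hWK] at this ⊢; exact this)
  have lo := unroll h0 K (fun t => - ∫ w, W t w ∂(M.lim t)) (fun t => - ∫ w, F w ∂(M.lim t))
    (fun t ht => by
      rw [M.integral_lim_succ t (hWm (t + 1)) (hCW (t + 1)), hWs t ht]
      simp only
      rw [integral_add (int_bdd hFm hR)
        ((int_bdd (hAlip t) (M.bdd_A t (hCW (t + 1)))).const_mul γ), integral_const_mul]
      linarith)
    (by rw [hWK])
  have e0 : ∫ s, M.G 0 (W 0) s ∂(M.pl a 0) = ∫ w, W 0 w ∂(M.lim 0) := by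
    rw [M.integral_lim_zero (hWm 0), pl, integral_dirac' _ _ (hGm 0).stronglyMeasurable]
  simp only [mul_neg, Finset.sum_neg_distrib] at lo
  rw [e0] at up
  linarith

theorem opt_le (γ : ℝ) (h0 : 0 < γ) (h1 : γ < 1) {L : ℝ} (hL : 0 ≤ L)
    {F : X0 × U0 × ProbabilityMeasure X → ℝ} (hF : LipF L F)
    {T : X0 → U0 → ProbabilityMeasure X → ProbabilityMeasure (X × U) → ProbabilityMeasure X}
    (hT : ∀ (x0 : X0) (u0 : U0) (μ : ProbabilityMeasure X) (ν : ProbabilityMeasure (X × U)),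
      (T x0 u0 μ ν : Measure X)
        = (ν : Measure (X × U)).bind fun z => (M.p z.1 z.2 x0 u0 μ : Measure X))
    {J : ℝ} (hopt : ∀ pol : ℕ → X0 × ProbabilityMeasure X → ProbabilityMeasure (X × U) × U0,
      (∀ t, Measurable (pol t)) → (∀ t s, (pol t s).1 ∈ Hset s.2) →
      (∑' t : ℕ, γ ^ t * ∫ s, F (s.1, (pol t s).2, s.2) ∂(m3Law M.p0 T pol (M.x00, M.μ0) t)) ≤ J) :
    M.Jlim γ F ≤ J := by
  obtain ⟨R, hR⟩ := hF.bdd hL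
  refine le_of_forall_pos_le_add fun ε hε => ?_
  obtain ⟨n, hn⟩ : ∃ n : ℕ, γ ^ (n + 1) * (R * (1 - γ)⁻¹) ≤ ε / 3 := by
    have ht : Tendsto (fun n : ℕ => γ ^ n * (R * (1 - γ)⁻¹)) atTop (𝓝 (0 * (R * (1 - γ)⁻¹))) :=
      (tendsto_pow_atTop_nhds_zero_of_lt_one h0.le h1).mul_const _
    rw [zero_mul] at ht
    exact ((((tendsto_add_atTop_iff_nat 1).2 ht).eventually
      (ge_mem_nhds (show (0 : ℝ) < ε / 3 by positivity))).exists)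
  set S := ∑ t ∈ Finset.range (n + 1), γ ^ t with hS
  have hS0 : 0 ≤ S := Finset.sum_nonneg fun t _ => by positivity
  have hδ : 0 < ε / (3 * (S + 1)) := by positivity
  obtain ⟨a, ha, hle⟩ := M.dominate γ h0 h1 hL hF hδ n
  have hpl := M.isProb_pl ha
  have ho := hopt (fun t s => (M.hh t s, a t s)) (fun t => (M.meas_hh t).prodMk (ha t))
    (fun t s => M.hh_mem t s)
  simp only [M.pl_eq hT] at ho
  have b1 : ∀ t, |∫ s, F (s.1, a t s, s.2) ∂(M.pl a t)| ≤ R := fun t => abs_int_le fun _ => hR _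
  have b2 : ∀ t, |∫ w, F w ∂(M.lim t)| ≤ R := fun t => abs_int_le fun _ => hR _
  have t1 := disc_tail h0 h1 b1 (n + 1)
  have t2 := disc_tail h0 h1 b2 (n + 1)
  rw [← Jlim.eq_1 M γ F] at t2
  simp_rw [mul_add (_ ^ _) (_ / _)] at hle
  rw [Finset.sum_add_distrib, ← Finset.sum_mul, ← hS] at hle
  have h3 : S * (ε / (3 * (S + 1))) ≤ ε / 3 := by
    rw [mul_div_assoc', div_le_div_iff₀ (by positivity) (by positivity)]
    nlinarith
  rw [abs_le] at t1 t2
  linarith [t1.1, t1.2, t2.1, t2.2]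

end Setup
end
end M3

/-- approximate optimality of M3FC solutions. If `(π̂*, π⁰*)` are optimal
(deterministic) policies for the limiting M3FC MDP, with induced agent-level policy
`Φ(π̂*) = π* ∈ Π` and `π⁰* ∈ Π⁰`, then `(Φ(π̂*), π⁰*)` is `ε(N)`-optimal in the `N`-agent
system: `J^N(Φ(π̂*), π⁰*) ≥ sup_{(π,π⁰) ∈ Π × Π⁰} J^N(π,π⁰) − ε(N)` with `ε(N) → 0`. -/
theorem statement15 {X U X0 U0 : Type*}
    [MetricSpace X] [CompactSpace X] [MeasurableSpace X] [BorelSpace X] [Nonempty X]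
    [MetricSpace U] [CompactSpace U] [MeasurableSpace U] [BorelSpace U]
    [MetricSpace X0] [CompactSpace X0] [MeasurableSpace X0] [BorelSpace X0]
    [MetricSpace U0] [CompactSpace U0] [MeasurableSpace U0] [BorelSpace U0]
    (γ : ℝ) (hγ0 : 0 < γ) (hγ1 : γ < 1) (Lp Lp0 Lr LPi : ℝ)
    (p : X → U → X0 → U0 → ProbabilityMeasure X → ProbabilityMeasure X)
    (hp : ∀ (x x' : X) (u u' : U) (x0 x0' : X0) (u0 u0' : U0)
        (μ μ' : ProbabilityMeasure X) (f : X → ℝ), LipschitzWith 1 f →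
      |∫ y, f y ∂(p x u x0 u0 μ : Measure X) - ∫ y, f y ∂(p x' u' x0' u0' μ' : Measure X)|
        ≤ Lp * (dist x x' + dist u u' + dist x0 x0' + dist u0 u0' + W1 μ μ'))
    (p0 : X0 → U0 → ProbabilityMeasure X → ProbabilityMeasure X0)
    (hp0 : ∀ (x0 x0' : X0) (u0 u0' : U0) (μ μ' : ProbabilityMeasure X) (f : X0 → ℝ),
        LipschitzWith 1 f →
      |∫ y, f y ∂(p0 x0 u0 μ : Measure X0) - ∫ y, f y ∂(p0 x0' u0' μ' : Measure X0)|
        ≤ Lp0 * (dist x0 x0' + dist u0 u0' + W1 μ μ'))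
    (r : X0 → U0 → ProbabilityMeasure X → ℝ)
    (hr : ∀ (x0 x0' : X0) (u0 u0' : U0) (μ μ' : ProbabilityMeasure X),
      |r x0 u0 μ - r x0' u0' μ'| ≤ Lr * (dist x0 x0' + dist u0 u0' + W1 μ μ'))
    (Pi : Set (ℕ → X → X0 → ProbabilityMeasure X → ProbabilityMeasure U))
    (hPi : ∀ π ∈ Pi, ∀ (t : ℕ) (x x' : X) (x0 x0' : X0) (μ μ' : ProbabilityMeasure X)
        (g : U → ℝ), LipschitzWith 1 g →
      |∫ u, g u ∂(π t x x0 μ : Measure U) - ∫ u, g u ∂(π t x' x0' μ' : Measure U)|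
        ≤ LPi * (dist x x' + dist x0 x0' + W1 μ μ'))
    (Pi0 : Set (ℕ → X0 → ProbabilityMeasure X → ProbabilityMeasure U0))
    (hPi0 : ∀ π0 ∈ Pi0, ∀ (t : ℕ) (x0 x0' : X0) (μ μ' : ProbabilityMeasure X) (g : U0 → ℝ),
        LipschitzWith 1 g →
      |∫ u, g u ∂(π0 t x0 μ : Measure U0) - ∫ u, g u ∂(π0 t x0' μ' : Measure U0)|
        ≤ LPi * (dist x0 x0' + W1 μ μ'))
    (μ0 : ProbabilityMeasure X) (x00 : X0)
    (T : X0 → U0 → ProbabilityMeasure X → ProbabilityMeasure (X × U) → ProbabilityMeasure X)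
    (hT : ∀ (x0 : X0) (u0 : U0) (μ : ProbabilityMeasure X) (ν : ProbabilityMeasure (X × U)),
      (T x0 u0 μ ν : Measure X)
        = (ν : Measure (X × U)).bind fun z => (p z.1 z.2 x0 u0 μ : Measure X))
    (Tcl : (ℕ → X → X0 → ProbabilityMeasure X → ProbabilityMeasure U) →
      ℕ → X0 → U0 → ProbabilityMeasure X → ProbabilityMeasure X)
    (hTcl : ∀ q ∈ Pi, ∀ (t : ℕ) (x0 : X0) (u0 : U0) (μ : ProbabilityMeasure X),
      (Tcl q t x0 u0 μ : Measure X) = (μ : Measure X).bind fun x =>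
        ((q t x x0 μ : Measure U)).bind fun u => (p x u x0 u0 μ : Measure X))
    (πstar : ℕ → X → X0 → ProbabilityMeasure X → ProbabilityMeasure U) (hπstar : πstar ∈ Pi)
    (π0star : ℕ → X0 → ProbabilityMeasure X → ProbabilityMeasure U0) (hπ0star : π0star ∈ Pi0)
    (hopt : ∀ pol : ℕ → X0 × ProbabilityMeasure X → ProbabilityMeasure (X × U) × U0,
      (∀ t, Measurable (pol t)) → (∀ t s, (pol t s).1 ∈ Hset s.2) →
      (∑' t : ℕ, γ ^ t * ∫ s, r s.1 (pol t s).2 s.2 ∂(m3Law p0 T pol (x00, μ0) t))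
        ≤ ∑' t : ℕ, γ ^ t *
            ∫ s, r s.1 s.2.1 s.2.2 ∂(m3LimLaw p0 π0star (Tcl πstar) μ0 x00 t)) :
    ∀ ε > (0 : ℝ), ∃ N0 : ℕ, ∀ N ≥ N0, ∀ q ∈ Pi, ∀ q0 ∈ Pi0,
      (∑' t : ℕ, γ ^ t * ∫ s, r s.1 s.2.1 (emp N s.2.2)
          ∂(m3LawN p p0 πstar π0star μ0 x00 N t))
        ≥ (∑' t : ℕ, γ ^ t * ∫ s, r s.1 s.2.1 (emp N s.2.2)
            ∂(m3LawN p p0 q q0 μ0 x00 N t)) - ε := by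
  have hLp : 0 ≤ max Lp 0 := le_max_right _ _
  have hLp0 : 0 ≤ max Lp0 0 := le_max_right _ _
  have hLPi : 0 ≤ max LPi 0 := le_max_right _ _
  have hLr : 0 ≤ max Lr 0 := le_max_right _ _
  have mk : ∀ q ∈ Pi, ∀ q0 ∈ Pi0, ∃ M : M3.Setup X U X0 U0 (max Lp 0) (max Lp0 0) (max LPi 0),
      M.p = p ∧ M.p0 = p0 ∧ M.q = q ∧ M.q0 = q0 ∧ M.Tq = Tcl q ∧ M.x00 = x00 ∧ M.μ0 = μ0 := by
    intro q hq q0 hq0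
    refine ⟨{ Lp_nn := hLp, Lp0_nn := hLp0, LPi_nn := hLPi, p := p, p0 := p0, q := q, q0 := q0,
              Tq := Tcl q, x00 := x00, μ0 := μ0, hp := ?_, hp0 := ?_, hq := ?_, hq0 := ?_,
              hTq := hTcl q hq }, rfl, rfl, rfl, rfl, rfl, rfl, rfl⟩
    · intro x x' u u' x0 x0' u0 u0' μ μ' f hf
      have := M3.W1_nonneg μ μ'
      exact (hp x x' u u' x0 x0' u0 u0' μ μ' f hf).trans
        (mul_le_mul_of_nonneg_right (le_max_left _ _) (by positivity))
    · intro x0 x0' u0 u0' μ μ' f hf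
      have := M3.W1_nonneg μ μ'
      exact (hp0 x0 x0' u0 u0' μ μ' f hf).trans
        (mul_le_mul_of_nonneg_right (le_max_left _ _) (by positivity))
    · intro t x x' x0 x0' μ μ' f hf
      have := M3.W1_nonneg μ μ'
      exact (hPi q hq t x x' x0 x0' μ μ' f hf).trans
        (mul_le_mul_of_nonneg_right (le_max_left _ _) (by positivity))
    · intro t x0 x0' μ μ' f hf
      have := M3.W1_nonneg μ μ'
      exact (hPi0 q0 hq0 t x0 x0' μ μ' f hf).trans
        (mul_le_mul_of_nonneg_right (le_max_left _ _) (by positivity))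
  have hF : M3.LipF (max Lr 0) (fun z : X0 × U0 × ProbabilityMeasure X => r z.1 z.2.1 z.2.2) := by
    intro x0 x0' u0 u0' μ μ'
    have := M3.W1_nonneg μ μ'
    exact (hr x0 x0' u0 u0' μ μ').trans
      (mul_le_mul_of_nonneg_right (le_max_left _ _) (by positivity))
  intro ε hε
  obtain ⟨N0, hN0⟩ := M3.Setup.unif (U := U) (Lp := max Lp 0) (Lp0 := max Lp0 0)
    (LPi := max LPi 0) γ hγ0 hγ1 hLr hF (half_pos hε)
  refine ⟨N0, fun N hN q hq q0 hq0 => ?_⟩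
  obtain ⟨M, rfl, rfl, rfl, rfl, e1, rfl, rfl⟩ := mk q hq q0 hq0
  obtain ⟨M', f1, f2, f3, f4, f5, f6, f7⟩ := mk πstar hπstar π0star hπ0star
  have h1 := abs_le.1 (hN0 N hN M)
  have h2 := abs_le.1 (hN0 N hN M')
  have h3 := M.opt_le γ hγ0 hγ1 hLr hF hT hopt
  unfold M3.Setup.Jfin M3.Setup.Jlim M3.Setup.fin M3.Setup.lim at h1 h2
  unfold M3.Setup.Jlim M3.Setup.lim at h3
  rw [f1, f2, f3, f4, f5, f6, f7] at h2
  simp only at h1 h2 h3 ⊢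
  linarith [h1.1, h1.2, h2.1, h2.2]
end

section
/- (Uniform convergence of objectives, M3FC.) Let 𝒳, 𝒰, 𝒳⁰, 𝒰⁰ be compact metric spaces, with p, p⁰, r Lipschitz, γ ∈ (0,1), and equi-Lipschitz policy classes Π, Π⁰. Then the N-agent objective converges to the limiting M3FC objective uniformly over policies: sup_{(π,π⁰) ∈ Π × Π⁰} | J^N(π, π⁰) − J(Φ^{-1}(π), π⁰) | → 0 as N → ∞. -/
open MeasureTheory

set_option linter.all false

section helpers

variable {X : Type*} [MetricSpace X] [CompactSpace X] [MeasurableSpace X] [BorelSpace X]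

lemma hl_integrable {α : Type*} [MeasurableSpace α] {m : Measure α} [IsFiniteMeasure m]
    {f : α → ℝ} (hf : Measurable f) {C : ℝ} (hC : ∀ a, |f a| ≤ C) : Integrable f m :=
  Integrable.of_bound hf.aestronglyMeasurable C (Filter.Eventually.of_forall hC)

lemma hl_dist_le {B : Type*} [MetricSpace B] [CompactSpace B] (x y : B) :
    dist x y ≤ Metric.diam (Set.univ : Set B) :=
  Metric.dist_le_diam_of_mem isCompact_univ.isBounded (Set.mem_univ x) (Set.mem_univ y)

/-- real form of the Lipschitz property -/
lemma hl_lip_iff {B : Type*} [MetricSpace B] {f : B → ℝ} {L : ℝ} (hL : 0 ≤ L) :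
    (∀ x y, |f x - f y| ≤ L * dist x y) ↔ LipschitzWith L.toNNReal f := by
  rw [lipschitzWith_iff_dist_le_mul, Real.coe_toNNReal L hL]
  rfl

lemma hl_lip_integrable {f : X → ℝ} {L : ℝ} (hf : ∀ x y, |f x - f y| ≤ L * dist x y)
    (μ : Measure X) [IsFiniteMeasure μ] : Integrable f μ := by
  have h2 : LipschitzWith (|L|).toNNReal f := (hl_lip_iff (abs_nonneg L)).1 fun x y =>
    (hf x y).trans (mul_le_mul_of_nonneg_right (le_abs_self L) dist_nonneg)
  have hc := h2.continuous
  exact hc.integrable_of_hasCompactSupport (HasCompactSupport.of_compactSpace f)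

lemma hl_lip1 {f : X → ℝ} (hf : LipschitzWith 1 f) (x y : X) : |f x - f y| ≤ 1 * dist x y := by
  have := hf.dist_le_mul x y
  simpa [Real.dist_eq] using this

lemma hl_diff_le {f : X → ℝ} (hf : LipschitzWith 1 f) (μ ν : ProbabilityMeasure X) :
    |∫ x, f x ∂(μ : Measure X) - ∫ x, f x ∂(ν : Measure X)|
      ≤ 2 * Metric.diam (Set.univ : Set X) := by
  have hne : Nonempty X := μ.nonempty
  obtain ⟨z⟩ := hne
  have key : ∀ μ : ProbabilityMeasure X, |∫ x, f x ∂(μ : Measure X) - f z|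
      ≤ Metric.diam (Set.univ : Set X) := by
    intro μ
    have hi := hl_lip_integrable (hl_lip1 hf) (μ : Measure X)
    have : ∫ x, f x ∂(μ : Measure X) - f z = ∫ x, (f x - f z) ∂(μ : Measure X) := by
      rw [integral_sub hi (integrable_const _)]; simp
    rw [this]
    have := norm_integral_le_of_norm_le_const (μ := (μ : Measure X)) (f := fun x => f x - f z)
      (C := Metric.diam (Set.univ : Set X)) (Filter.Eventually.of_forall fun x => by
        have := hl_lip1 hf x z
        have h2 := hl_dist_le x z
        rw [Real.norm_eq_abs]; linarith)
    simpa using this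
  have h1 := abs_le.1 (key μ)
  have h2 := abs_le.1 (key ν)
  rw [abs_le]; constructor <;> linarith

lemma hl_bdd (μ ν : ProbabilityMeasure X) : BddAbove (Set.range
    fun f : {f : X → ℝ // LipschitzWith 1 f} =>
    |∫ x, (f : X → ℝ) x ∂(μ : Measure X) - ∫ x, (f : X → ℝ) x ∂(ν : Measure X)|) := by
  refine ⟨2 * Metric.diam (Set.univ : Set X), ?_⟩
  rintro _ ⟨f, rfl⟩
  exact hl_diff_le f.2 μ ν

lemma hl_le_W1 {f : X → ℝ} (hf : LipschitzWith 1 f) (μ ν : ProbabilityMeasure X) :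
    |∫ x, f x ∂(μ : Measure X) - ∫ x, f x ∂(ν : Measure X)| ≤ W1 μ ν :=
  le_ciSup (hl_bdd μ ν) ⟨f, hf⟩

lemma hl_W1_le {μ ν : ProbabilityMeasure X} {c : ℝ} (h : ∀ f : X → ℝ, LipschitzWith 1 f →
    |∫ x, f x ∂(μ : Measure X) - ∫ x, f x ∂(ν : Measure X)| ≤ c) : W1 μ ν ≤ c := by
  haveI : Nonempty {f : X → ℝ // LipschitzWith 1 f} :=
    ⟨⟨fun _ => 0, LipschitzWith.const' 0⟩⟩
  exact ciSup_le fun f => h f f.2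

lemma hl_W1_nonneg (μ ν : ProbabilityMeasure X) : 0 ≤ W1 μ ν :=
  (abs_nonneg _).trans (hl_le_W1 (f := fun _ => 0) (LipschitzWith.const' 0) μ ν)

lemma hl_W1_self (μ : ProbabilityMeasure X) : W1 μ μ = 0 :=
  le_antisymm (hl_W1_le fun f _ => by simp) (hl_W1_nonneg _ _)

lemma hl_W1_bound (μ ν : ProbabilityMeasure X) :
    W1 μ ν ≤ 2 * Metric.diam (Set.univ : Set X) := hl_W1_le fun _ hf => hl_diff_le hf μ ν

lemma hl_W1_tri (μ μ' ν : ProbabilityMeasure X) : |W1 μ ν - W1 μ' ν| ≤ W1 μ μ' := by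
  have key : ∀ μ μ' : ProbabilityMeasure X, W1 μ ν ≤ W1 μ μ' + W1 μ' ν := by
    intro μ μ'
    refine hl_W1_le fun f hf => ?_
    exact (abs_sub_le _ (∫ x, f x ∂(μ' : Measure X)) _).trans
      (add_le_add (hl_le_W1 hf _ _) (hl_le_W1 hf _ _))
  have hs : W1 μ' μ = W1 μ μ' := by
    unfold W1; congr 1; ext f; rw [abs_sub_comm]
  have h1 := key μ μ'
  have h2 := key μ' μ
  rw [abs_le]; constructor <;> linarith

/-- integral comparison for two kernels values and two Lipschitz integrands -/
lemma hl_kstep (κ κ' : ProbabilityMeasure X) (f f' : X → ℝ) {L K D : ℝ} (hL : 0 ≤ L)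
    (hD : 0 ≤ D) (hff : ∀ b, |f b - f' b| ≤ L * D)
    (hf : ∀ b b', |f b - f b'| ≤ L * dist b b')
    (hf' : ∀ b b', |f' b - f' b'| ≤ L * dist b b')
    (hκ : ∀ h : X → ℝ, LipschitzWith 1 h →
      |∫ x, h x ∂(κ : Measure X) - ∫ x, h x ∂(κ' : Measure X)| ≤ K * D) :
    |∫ x, f x ∂(κ : Measure X) - ∫ x, f' x ∂(κ' : Measure X)| ≤ L * (1 + K) * D := by
  have i1 := hl_lip_integrable hf (κ : Measure X)
  have i1' := hl_lip_integrable hf' (κ : Measure X)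
  have h1 : |∫ x, f x ∂(κ : Measure X) - ∫ x, f' x ∂(κ : Measure X)| ≤ L * D := by
    rw [← integral_sub i1 i1']
    have := norm_integral_le_of_norm_le_const (μ := (κ : Measure X)) (f := fun x => f x - f' x)
      (C := L * D) (Filter.Eventually.of_forall hff)
    simpa using this
  have h2 : |∫ x, f' x ∂(κ : Measure X) - ∫ x, f' x ∂(κ' : Measure X)| ≤ L * (K * D) := by
    rcases hL.eq_or_lt with h0 | h0
    · subst h0
      obtain ⟨z⟩ := κ.nonempty
      have : f' = fun _ => f' z := by
        ext b
        have := hf' b z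
        rw [zero_mul] at this
        exact sub_eq_zero.1 (abs_eq_zero.1 (le_antisymm this (abs_nonneg _)))
      rw [this]; simp
    · have hl : LipschitzWith 1 (fun x => L⁻¹ * f' x) := by
        rw [lipschitzWith_iff_dist_le_mul]
        intro x y
        rw [Real.dist_eq, ← mul_sub, abs_mul, abs_of_pos (inv_pos.2 h0)]
        have := mul_le_mul_of_nonneg_left (hf' x y) (inv_pos.2 h0).le
        rw [← mul_assoc, inv_mul_cancel₀ h0.ne'] at this
        simpa using this
      have := hκ _ hl
      rw [integral_const_mul, integral_const_mul, ← mul_sub, abs_mul,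
        abs_of_pos (inv_pos.2 h0)] at this
      have := mul_le_mul_of_nonneg_left this hL
      rwa [← mul_assoc, mul_inv_cancel₀ h0.ne', one_mul] at this
  calc _ ≤ _ := abs_sub_le _ (∫ x, f' x ∂(κ : Measure X)) _
    _ ≤ L * D + L * (K * D) := add_le_add h1 h2
    _ = _ := by ring

/-- Arzela-Ascoli: finite net of Lipschitz functions -/
lemma hl_net (hX : Nonempty X) {δ : ℝ} (hδ : 0 < δ) : ∃ s : Finset (X → ℝ),
    (∀ f ∈ s, LipschitzWith 1 f) ∧
    (∀ f : X → ℝ, LipschitzWith 1 f → ∃ g ∈ s, ∃ c : ℝ, ∀ x, |f x - c - g x| ≤ δ) := by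
  classical
  obtain ⟨z⟩ := hX
  set D := Metric.diam (Set.univ : Set X)
  let A : Set (BoundedContinuousFunction X ℝ) := {f | LipschitzWith 1 f ∧ f z = 0}
  have hA : IsCompact (closure A) := by
    refine BoundedContinuousFunction.arzela_ascoli (Set.Icc (-D) D) isCompact_Icc A ?_ ?_
    · rintro f x ⟨hf, h0⟩
      have h1 := hl_lip1 hf x z
      have h2 := hl_dist_le x z
      rw [h0, sub_zero, one_mul] at h1
      exact abs_le.1 (h1.trans h2)
    · exact (LipschitzWith.uniformEquicontinuous _ 1 fun f => f.2.1).equicontinuous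
  have hT : TotallyBounded A := hA.totallyBounded.subset subset_closure
  obtain ⟨t, htA, htf, ht⟩ := Metric.finite_approx_of_totallyBounded hT δ hδ
  refine ⟨htf.toFinset.image (fun f : BoundedContinuousFunction X ℝ => (f : X → ℝ)), ?_, ?_⟩
  · intro f hf
    simp only [Finset.mem_image, Set.Finite.mem_toFinset] at hf
    obtain ⟨g, hg, rfl⟩ := hf
    exact (htA hg).1
  · intro f hf
    have hf2 : LipschitzWith 1 (fun x => f x - f z) := by
      rw [lipschitzWith_iff_dist_le_mul] at hf ⊢
      intro x y
      have := hf x y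
      simpa [Real.dist_eq] using this
    let F : BoundedContinuousFunction X ℝ :=
      BoundedContinuousFunction.mkOfCompact ⟨fun x => f x - f z, hf2.continuous⟩
    have hF : F ∈ A := ⟨hf2, by simp [F]⟩
    have := ht hF
    simp only [Set.mem_iUnion, Metric.mem_ball] at this
    obtain ⟨g, hg, hd⟩ := this
    refine ⟨g, Finset.mem_image_of_mem _ (htf.mem_toFinset.2 hg), f z, fun x => ?_⟩
    have := (BoundedContinuousFunction.dist_coe_le_dist (f := F) (g := g) x).trans hd.le
    rw [Real.dist_eq] at this
    exact this

/-- W1 is controlled by finitely many test functions -/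
lemma hl_net_W1 (hX : Nonempty X) {δ : ℝ} (hδ : 0 < δ) : ∃ s : Finset (X → ℝ),
    (∀ f ∈ s, LipschitzWith 1 f) ∧
    (∀ μ ν : ProbabilityMeasure X, W1 μ ν ≤ δ +
      ∑ f ∈ s, |∫ x, f x ∂(μ : Measure X) - ∫ x, f x ∂(ν : Measure X)|) := by
  obtain ⟨s, hs, hs2⟩ := hl_net hX (half_pos hδ)
  refine ⟨s, hs, fun μ ν => hl_W1_le fun f hf => ?_⟩
  obtain ⟨g, hg, c, hc⟩ := hs2 f hf
  have key : ∀ μ : ProbabilityMeasure X,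
      |∫ x, f x ∂(μ : Measure X) - c - ∫ x, g x ∂(μ : Measure X)| ≤ δ / 2 := by
    intro μ
    have hi := hl_lip_integrable (hl_lip1 hf) (μ : Measure X)
    have hj := hl_lip_integrable (hl_lip1 (hs g hg)) (μ : Measure X)
    have : ∫ x, f x ∂(μ : Measure X) - c - ∫ x, g x ∂(μ : Measure X)
        = ∫ x, (f x - c - g x) ∂(μ : Measure X) := by
      rw [integral_sub (f := fun x => f x - c) (hi.sub (integrable_const _)) hj,
        integral_sub hi (integrable_const _)]
      simp
    rw [this]
    have := norm_integral_le_of_norm_le_const (μ := (μ : Measure X))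
      (f := fun x => f x - c - g x) (C := δ / 2) (Filter.Eventually.of_forall hc)
    simpa using this
  have h3 := Finset.single_le_sum (f := fun f : X → ℝ =>
    |∫ x, f x ∂(μ : Measure X) - ∫ x, f x ∂(ν : Measure X)|) (fun _ _ => abs_nonneg _) hg
  have h1 := abs_le.1 (key μ)
  have h2 := abs_le.1 (key ν)
  have h4 := abs_le.1 (le_refl |∫ x, g x ∂(μ : Measure X) - ∫ x, g x ∂(ν : Measure X)|)
  rw [abs_le]; constructor <;> linarith

/-- Lipschitz functions in `(y, W1)` are measurable -/
lemma hl_meas {Y : Type*} [PseudoMetricSpace Y] [SecondCountableTopology Y] [MeasurableSpace Y]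
    [OpensMeasurableSpace Y] (F : Y × ProbabilityMeasure X → ℝ) {L : ℝ} (hL : 0 ≤ L)
    (hF : ∀ y y' μ μ', |F (y, μ) - F (y', μ')| ≤ L * (dist y y' + W1 μ μ')) :
    Measurable F := by
  by_cases hX : Nonempty X
  swap
  · haveI : IsEmpty (Y × ProbabilityMeasure X) := ⟨fun q => hX q.2.nonempty⟩
    exact measurable_of_empty F
  have hnet : ∀ n : ℕ, ∃ s : Finset (X → ℝ), (∀ f ∈ s, LipschitzWith 1 f) ∧
    (∀ μ ν : ProbabilityMeasure X, W1 μ ν ≤ 1 / ((n : ℝ) + 1) +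
      ∑ f ∈ s, |∫ x, f x ∂(μ : Measure X) - ∫ x, f x ∂(ν : Measure X)|) :=
    fun n => hl_net_W1 hX Nat.one_div_pos_of_nat
  choose s hs hs2 using hnet
  let I := Σ n, s n
  let Φ : ProbabilityMeasure X → (I → ℝ) := fun μ i => ∫ x, (i.2 : X → ℝ) x ∂(μ : Measure X)
  have hΦ : Measurable Φ := by
    refine measurable_pi_iff.2 fun i => ?_
    let κ : ProbabilityTheory.Kernel (ProbabilityMeasure X) X :=
      ⟨fun μ => (μ : Measure X), measurable_subtype_coe⟩
    have h1 : StronglyMeasurable (fun μ => ∫ x, (i.2 : X → ℝ) x ∂(κ μ)) :=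
      ((hs i.1 i.2 i.2.2).continuous.stronglyMeasurable).integral_kernel
    exact h1.measurable
  letI τ : TopologicalSpace (ProbabilityMeasure X) := TopologicalSpace.induced Φ inferInstance
  haveI : @SecondCountableTopology _ τ := by
    exact TopologicalSpace.secondCountableTopology_induced _ _ _
  haveI : @OpensMeasurableSpace _ τ _ := by
    constructor
    rw [borel_comap, ← BorelSpace.measurable_eq]
    exact hΦ.comap_le
  have hc : Continuous F := by
    rw [continuous_iff_continuousAt]
    rintro ⟨y, μ⟩
    rw [ContinuousAt, tendsto_iff_dist_tendsto_zero]
    rw [Metric.tendsto_nhds]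
    intro ε hε
    obtain ⟨n, hn⟩ := exists_nat_one_div_lt (show (0:ℝ) < ε / (2 * (L + 1)) by positivity)
    have hΦc : Continuous Φ := continuous_induced_dom
    have hcoord : ∀ i, Continuous fun ν : ProbabilityMeasure X => Φ ν i :=
      fun i => (continuous_apply i).comp hΦc
    let H : Y × ProbabilityMeasure X → ℝ := fun q => L * (dist q.1 y + (1 / ((n:ℝ) + 1) +
      ∑ f : s n, |Φ q.2 ⟨n, f⟩ - Φ μ ⟨n, f⟩|))
    have hH : Continuous H := by
      refine continuous_const.mul ((continuous_fst.dist continuous_const).add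
        (continuous_const.add (continuous_finset_sum _ fun f _ => ?_)))
      exact (((hcoord ⟨n, f⟩).comp continuous_snd).sub continuous_const).abs
    have hH0 : H (y, μ) < ε := by
      simp only [H, dist_self, sub_self, abs_zero, Finset.sum_const_zero, zero_add, add_zero]
      calc L * (1 / ((n:ℝ) + 1)) ≤ L * (ε / (2 * (L + 1))) :=
            mul_le_mul_of_nonneg_left hn.le hL
        _ < ε := by
          rw [← mul_div_assoc, div_lt_iff₀ (by positivity)]
          nlinarith
    filter_upwards [hH.continuousAt.eventually (gt_mem_nhds hH0)] with q hq
    rw [Real.dist_eq, sub_zero, abs_of_nonneg dist_nonneg, Real.dist_eq]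
    refine lt_of_le_of_lt ((hF q.1 y q.2 μ).trans ?_) hq
    refine mul_le_mul_of_nonneg_left (add_le_add le_rfl ?_) hL
    refine (hs2 n q.2 μ).trans (le_of_eq ?_)
    congr 1
    exact (Finset.sum_coe_sort (s n) (fun f : X → ℝ =>
      |∫ x, f x ∂(q.2 : Measure X) - ∫ x, f x ∂(μ : Measure X)|)).symm
  exact hc.measurable


/-- W1-Lipschitz kernels are measurable -/
lemma hl_kmeas {Y : Type*} [PseudoMetricSpace Y] [SecondCountableTopology Y] [MeasurableSpace Y]
    [OpensMeasurableSpace Y] {B : Type*} [MetricSpace B] [CompactSpace B] [MeasurableSpace B]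
    [BorelSpace B]
    (κ : Y × ProbabilityMeasure X → ProbabilityMeasure B) {L : ℝ} (hL : 0 ≤ L)
    (hκ : ∀ y y' μ μ' (f : B → ℝ), LipschitzWith 1 f →
      |∫ b, f b ∂(κ (y, μ) : Measure B) - ∫ b, f b ∂(κ (y', μ') : Measure B)|
        ≤ L * (dist y y' + W1 μ μ')) :
    Measurable fun q => (κ q : Measure B) := by
  have hgen : (inferInstance : MeasurableSpace B) = MeasurableSpace.generateFrom {s | IsClosed s} :=
    (BorelSpace.measurable_eq (α := B)).trans borel_eq_generateFrom_isClosed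
  refine Measurable.measure_of_isPiSystem_of_isProbabilityMeasure hgen isPiSystem_isClosed ?_
  intro A hA
  have hpos : ∀ n : ℕ, (0:ℝ) < 1 / ((n:ℝ) + 1) := fun n => Nat.one_div_pos_of_nat
  refine measurable_of_tendsto_metrizable
    (f := fun (n : ℕ) q => ∫⁻ b, (thickenedIndicator (hpos n) A b : ENNReal) ∂(κ q : Measure B))
    (fun n => ?_) (tendsto_pi_nhds.2 fun q =>
      tendsto_lintegral_thickenedIndicator_of_isClosed (κ q : Measure B) hA hpos
        tendsto_one_div_add_atTop_nhds_zero_nat)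
  have hlip := lipschitzWith_thickenedIndicator (hpos n) A
  have heq : (fun q => ∫⁻ b, (thickenedIndicator (hpos n) A b : ENNReal) ∂(κ q : Measure B)) =
      fun q => ENNReal.ofReal (∫ b, (thickenedIndicator (hpos n) A b : ℝ) ∂(κ q : Measure B)) := by
    ext q
    rw [ofReal_integral_eq_lintegral_ofReal (integrable_thickenedIndicator A (hpos n))
      (Filter.Eventually.of_forall fun b => NNReal.coe_nonneg _)]
    simp
  rw [heq]
  refine ENNReal.measurable_ofReal.comp ?_
  set M : ℝ := (n : ℝ) + 1 with hM
  have hM0 : 0 < M := by positivity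
  have hl : ∀ b b', |(thickenedIndicator (hpos n) A b : ℝ) - (thickenedIndicator (hpos n) A b' : ℝ)|
      ≤ M * dist b b' := by
    intro b b'
    have := hlip.dist_le_mul b b'
    rw [NNReal.dist_eq] at this
    refine this.trans (le_of_eq ?_)
    congr 1
    rw [hM]
    push_cast
    rw [Real.coe_toNNReal _ (hpos n).le, one_div, inv_inv]
  refine hl_meas _ (L := M * (1 + 1 * L)) (by positivity) ?_
  intro y y' μ μ'
  have hD : 0 ≤ dist y y' + W1 μ μ' := add_nonneg dist_nonneg (hl_W1_nonneg _ _)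
  have := hl_kstep (κ (y, μ)) (κ (y', μ')) _ _ (L := M) (K := 1 * L) hM0.le hD
    (fun b => by simpa using mul_nonneg hM0.le hD) hl hl
    (by simpa using hκ y y' μ μ')
  exact this

lemma hl_integral_bind {α β : Type*} [MeasurableSpace α] [MeasurableSpace β] (m : Measure α)
    [IsProbabilityMeasure m] {κ : α → Measure β} (hκ : Measurable κ)
    (hp : ∀ a, IsProbabilityMeasure (κ a)) {f : β → ℝ} (hf : Measurable f) {C : ℝ}
    (hC : ∀ b, |f b| ≤ C) :
    IsProbabilityMeasure (m.bind κ) ∧ ∫ b, f b ∂(m.bind κ) = ∫ a, ∫ b, f b ∂(κ a) ∂m := by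
  let k : ProbabilityTheory.Kernel α β := ⟨κ, hκ⟩
  haveI : ProbabilityTheory.IsMarkovKernel k := ⟨hp⟩
  let c : ProbabilityTheory.Kernel Unit α := ProbabilityTheory.Kernel.const Unit m
  have h1 : (k.comp c) () = m.bind κ := by
    rw [ProbabilityTheory.Kernel.comp_apply]; rfl
  have h2 : IsProbabilityMeasure ((k.comp c) ()) := inferInstance
  refine ⟨h1 ▸ h2, ?_⟩
  rw [← h1, ProbabilityTheory.Kernel.integral_comp (hl_integrable hf hC)]
  rfl

lemma hl_map_meas {α β δ : Type*} [MeasurableSpace α] [MeasurableSpace β] [MeasurableSpace δ]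
    {κ : α → Measure β} (hκ : Measurable κ)
    (hp : ∀ a, IsProbabilityMeasure (κ a)) {F : α → β → δ}
    (hF : Measurable (fun q : α × β => F q.1 q.2)) :
    Measurable fun a => (κ a).map (F a) := by
  let k : ProbabilityTheory.Kernel α β := ⟨κ, hκ⟩
  haveI : ProbabilityTheory.IsMarkovKernel k := ⟨hp⟩
  refine Measure.measurable_of_measurable_coe _ fun s hs => ?_
  have : ∀ a, (κ a).map (F a) s = k a (Prod.mk a ⁻¹' ((fun q : α × β => F q.1 q.2) ⁻¹' s)) := by
    intro a
    rw [Measure.map_apply (show Measurable (F a) from hF.comp measurable_prodMk_left) hs]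
    rfl
  simp_rw [this]
  exact ProbabilityTheory.Kernel.measurable_kernel_prodMk_left (hF hs)

lemma hl_prod_meas {α β δ : Type*} [MeasurableSpace α] [MeasurableSpace β] [MeasurableSpace δ]
    {κ : α → Measure β} (hκ : Measurable κ) (hp : ∀ a, IsProbabilityMeasure (κ a))
    {η : α → Measure δ} (hη : Measurable η) (hq : ∀ a, IsProbabilityMeasure (η a)) :
    Measurable fun a => (κ a).prod (η a) := by
  refine Measurable.measure_of_isPiSystem_of_isProbabilityMeasure generateFrom_prod.symm
    isPiSystem_prod ?_
  rintro _ ⟨u, hu, v, hv, rfl⟩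
  simp_rw [Measure.prod_prod]
  exact ((Measure.measurable_coe hu).comp hκ).mul ((Measure.measurable_coe hv).comp hη)

lemma hl_pi_meas {α β : Type*} [MeasurableSpace α] [MeasurableSpace β] {N : ℕ}
    {κ : Fin N → α → Measure β} (hκ : ∀ i, Measurable (κ i))
    (hp : ∀ i a, IsProbabilityMeasure (κ i a)) :
    Measurable fun a => Measure.pi fun i => κ i a := by
  refine Measurable.measure_of_isPiSystem_of_isProbabilityMeasure generateFrom_pi.symm
    isPiSystem_pi ?_
  rintro _ ⟨u, hu, rfl⟩
  simp_rw [Measure.pi_pi]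
  exact Finset.measurable_prod _ fun i _ =>
    (Measure.measurable_coe (hu i (Set.mem_univ i))).comp (hκ i)

lemma hl_emp_val [Nonempty X] {N : ℕ} (hN : N ≠ 0) (x : Fin N → X) :
    (emp N x : Measure X) = (N : ENNReal)⁻¹ • ∑ i : Fin N, Measure.dirac (x i) := by
  unfold emp
  simp [hN]

lemma hl_emp_meas [Nonempty X] {N : ℕ} : Measurable (emp (X := X) N) := by
  by_cases hN : N = 0
  · subst hN
    exact measurable_of_finite _
  · have h1 : Measurable fun x : Fin N → X => (emp N x : Measure X) := by
      simp_rw [hl_emp_val hN]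
      refine Measure.measurable_of_measurable_coe _ fun s hs => ?_
      simp only [Measure.smul_apply, Measure.coe_finset_sum, Finset.sum_apply, smul_eq_mul]
      refine Measurable.const_mul (Finset.measurable_sum _ fun i _ => ?_) _
      exact (Measure.measurable_coe hs).comp (Measure.measurable_dirac.comp (measurable_pi_apply i))
    exact h1.subtype_mk (h := fun x => (emp N x).2)

lemma hl_emp_integral [Nonempty X] {N : ℕ} (hN : N ≠ 0) (x : Fin N → X) {f : X → ℝ}
    (hf : ∀ μ : ProbabilityMeasure X, Integrable f (μ : Measure X)) :
    ∫ y, f y ∂(emp N x : Measure X) = (N : ℝ)⁻¹ * ∑ i, f (x i) := by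
  rw [hl_emp_val hN, integral_smul_measure, integral_finset_sum_measure]
  · simp
  · intro i _
    exact hf ⟨Measure.dirac (x i), inferInstance⟩

lemma hl_W1_meas (ν : ProbabilityMeasure X) : Measurable fun μ : ProbabilityMeasure X => W1 μ ν := by
  have := hl_meas (X := X) (Y := Unit) (fun q => W1 q.2 ν) (L := 1) zero_le_one
    (fun y y' μ μ' => by simpa using hl_W1_tri μ μ' ν)
  exact this.comp (measurable_const (a := ()) |>.prodMk measurable_id)

/-- second moment bound -/
lemma hl_var {N : ℕ} (hN : N ≠ 0) (ν : Fin N → ProbabilityMeasure X) {f : X → ℝ}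
    (hf : LipschitzWith 1 f) :
    ∫ x : Fin N → X, ((N : ℝ)⁻¹ * ∑ i, f (x i) - (N : ℝ)⁻¹ * ∑ i, ∫ y, f y ∂(ν i : Measure X)) ^ 2
      ∂(Measure.pi fun i => (ν i : Measure X)) ≤ (Metric.diam (Set.univ : Set X)) ^ 2 / N := by
  set D := Metric.diam (Set.univ : Set X)
  have hN0 : (0:ℝ) < N := by exact_mod_cast Nat.pos_of_ne_zero hN
  have hc := hf.continuous
  have hmem : ∀ i, MemLp f 2 (ν i : Measure X) := fun i =>
    hc.memLp_of_hasCompactSupport (HasCompactSupport.of_compactSpace f)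
  have hv := ProbabilityTheory.variance_sum_pi (μ := fun i => (ν i : Measure X))
    (X := fun _ : Fin N => f) hmem
  have hmem2 : MemLp (∑ i, fun x : Fin N → X => f (x i)) 2
      (Measure.pi fun i => (ν i : Measure X)) :=
    memLp_finset_sum' _ fun i _ => (hmem i).comp_measurePreserving (measurePreserving_eval _ i)
  have hmean : ∫ x, (∑ i, fun x : Fin N → X => f (x i)) x ∂(Measure.pi fun i => (ν i : Measure X))
      = ∑ i, ∫ y, f y ∂(ν i : Measure X) := by
    simp only [Finset.sum_apply]
    rw [integral_finset_sum]
    · refine Finset.sum_congr rfl fun i _ => ?_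
      exact integral_comp_eval (μ := fun i => (ν i : Measure X)) (hmem i).aestronglyMeasurable
    · intro i _
      exact ((hmem i).comp_measurePreserving
        (measurePreserving_eval (fun i => (ν i : Measure X)) i)).integrable one_le_two
  rw [ProbabilityTheory.variance_eq_integral hmem2.aestronglyMeasurable.aemeasurable, hmean] at hv
  have hvi : ∀ i, ProbabilityTheory.variance f (ν i : Measure X) ≤ D ^ 2 := by
    intro i
    obtain ⟨z⟩ := (ν i).nonempty
    rw [ProbabilityTheory.variance_eq_integral hc.measurable.aemeasurable]
    have : ∀ x, |(f x - ∫ y, f y ∂(ν i : Measure X)) ^ 2| ≤ D ^ 2 := by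
      intro x
      rw [abs_of_nonneg (sq_nonneg _), sq_le_sq]
      refine le_trans ?_ (le_abs_self D)
      have e : f x - ∫ y, f y ∂(ν i : Measure X) = ∫ y, (f x - f y) ∂(ν i : Measure X) := by
        rw [integral_sub (integrable_const _) (hl_lip_integrable (hl_lip1 hf) _)]; simp
      rw [e]
      have := norm_integral_le_of_norm_le_const (μ := (ν i : Measure X))
        (f := fun y => f x - f y) (C := D) (Filter.Eventually.of_forall fun y => by
          have := hl_lip1 hf x y
          have h2 := hl_dist_le x y
          rw [Real.norm_eq_abs]; linarith)
      simpa using this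
    have := norm_integral_le_of_norm_le_const (μ := (ν i : Measure X)) (C := D ^ 2)
      (f := fun x => (f x - ∫ y, f y ∂(ν i : Measure X)) ^ 2) (Filter.Eventually.of_forall this)
    rw [Real.norm_eq_abs] at this
    have h3 := (le_abs_self _).trans this
    simpa using h3
  have hsum := Finset.sum_le_sum fun i (_ : i ∈ Finset.univ) => hvi i
  simp only [Finset.sum_const, Finset.card_univ, Fintype.card_fin, nsmul_eq_mul] at hsum
  have e2 : ∀ x : Fin N → X,
      ((N : ℝ)⁻¹ * ∑ i, f (x i) - (N : ℝ)⁻¹ * ∑ i, ∫ y, f y ∂(ν i : Measure X)) ^ 2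
      = ((N:ℝ)⁻¹) ^ 2 * ((∑ i, fun x : Fin N → X => f (x i)) x
        - ∑ i, ∫ y, f y ∂(ν i : Measure X)) ^ 2 := by
    intro x
    simp only [Finset.sum_apply]; ring
  simp_rw [e2]
  rw [integral_const_mul, hv]
  calc _ ≤ ((N:ℝ)⁻¹) ^ 2 * (N * D ^ 2) := mul_le_mul_of_nonneg_left hsum (by positivity)
    _ = _ := by field_simp

/-- uniform law of large numbers in W1 -/
lemma hl_lln [Nonempty X] {ε : ℝ} (hε : 0 < ε) : ∃ N0 : ℕ, 1 ≤ N0 ∧ ∀ N ≥ N0,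
    ∀ (ν : Fin N → ProbabilityMeasure X) (νb : ProbabilityMeasure X),
    (∀ f : X → ℝ, LipschitzWith 1 f → ∫ y, f y ∂(νb : Measure X)
      = (N : ℝ)⁻¹ * ∑ i, ∫ y, f y ∂(ν i : Measure X)) →
    ∫ x, W1 (emp N x) νb ∂(Measure.pi fun i => (ν i : Measure X)) ≤ ε := by
  obtain ⟨s, hs, hs2⟩ := hl_net_W1 (X := X) inferInstance (show 0 < ε / 3 by positivity)
  set D := Metric.diam (Set.univ : Set X)
  obtain ⟨η, hη⟩ : ∃ η : ℝ, η = ε / (3 * (s.card + 1)) := ⟨_, rfl⟩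
  have hη0 : 0 < η := by rw [hη]; positivity
  obtain ⟨M, hM⟩ := exists_nat_gt (D ^ 2 / η / η)
  refine ⟨M + 1, by omega, fun N hN ν νb hνb => ?_⟩
  have hN' : N ≠ 0 := by omega
  have hN0 : (0:ℝ) < N := by exact_mod_cast Nat.pos_of_ne_zero hN'
  have hMN : (M : ℝ) ≤ N := by exact_mod_cast (by omega : M ≤ N)
  have hsmall : D ^ 2 / N / η ≤ η := by
    rw [div_div, div_le_iff₀ (by positivity)]
    have := (hM.le.trans hMN)
    rw [div_div, div_le_iff₀ (by positivity)] at this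
    linarith
  let A : (X → ℝ) → (Fin N → X) → ℝ := fun f x =>
    (N : ℝ)⁻¹ * ∑ i, f (x i) - (N : ℝ)⁻¹ * ∑ i, ∫ y, f y ∂(ν i : Measure X)
  have hA : ∀ f ∈ s, Continuous (A f) := by
    intro f hf
    have := (hs f hf).continuous
    fun_prop
  have hpt : ∀ x : Fin N → X, W1 (emp N x) νb ≤ ε / 3 + ∑ f ∈ s, (η + A f x ^ 2 / η) := by
    intro x
    refine (hs2 (emp N x) νb).trans (add_le_add le_rfl (Finset.sum_le_sum fun f hf => ?_))
    rw [hl_emp_integral hN' x fun μ => hl_lip_integrable (hl_lip1 (hs f hf)) _, hνb f (hs f hf)]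
    change |A f x| ≤ _
    rcases le_total (|A f x|) η with h | h
    · have : 0 ≤ A f x ^ 2 / η := by positivity
      linarith
    · have : |A f x| ≤ A f x ^ 2 / η := by
        rw [le_div_iff₀ hη0, ← sq_abs]
        nlinarith [abs_nonneg (A f x)]
      linarith
  set P := Measure.pi fun i => (ν i : Measure X)
  have hAi : ∀ f ∈ s, Integrable (fun x => η + A f x ^ 2 / η) P := by
    intro f hf
    have : Continuous (fun x => η + A f x ^ 2 / η) := by
      have := hA f hf
      fun_prop
    exact this.integrable_of_hasCompactSupport (HasCompactSupport.of_compactSpace _)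
  have hAi2 : ∀ f ∈ s, Integrable (fun x => A f x ^ 2 / η) P := by
    intro f hf
    have : Continuous (fun x => A f x ^ 2 / η) := by
      have := hA f hf
      fun_prop
    exact this.integrable_of_hasCompactSupport (HasCompactSupport.of_compactSpace _)
  have hWi : Integrable (fun x => W1 (emp N x) νb) P :=
    hl_integrable ((hl_W1_meas νb).comp hl_emp_meas) (C := 2 * D) fun x => by
      rw [abs_of_nonneg (hl_W1_nonneg _ _)]; exact hl_W1_bound _ _
  calc ∫ x, W1 (emp N x) νb ∂P ≤ ∫ x, (ε / 3 + ∑ f ∈ s, (η + A f x ^ 2 / η)) ∂P :=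
        integral_mono hWi ((integrable_const _).add (integrable_finset_sum _ hAi)) hpt
    _ = ε / 3 + ∑ f ∈ s, (η + (∫ x, A f x ^ 2 ∂P) / η) := by
        rw [integral_add (integrable_const _) (integrable_finset_sum _ hAi),
          integral_finset_sum _ hAi]
        congr 1
        · simp
        · refine Finset.sum_congr rfl fun f hf => ?_
          rw [integral_add (integrable_const _) (hAi2 f hf), integral_div]
          simp
    _ ≤ ε / 3 + ∑ f ∈ s, (η + η) := by
        refine add_le_add le_rfl (Finset.sum_le_sum fun f hf => add_le_add le_rfl ?_)
        exact (div_le_div_of_nonneg_right (hl_var hN' ν (hs f hf)) hη0.le).trans hsmall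
    _ ≤ ε := by
        rw [Finset.sum_const, nsmul_eq_mul]
        have : η * (3 * (s.card + 1)) = ε := by rw [hη]; field_simp
        nlinarith

end helpers

section dyn

variable {X U X0 U0 : Type*}
    [MetricSpace X] [CompactSpace X] [MeasurableSpace X] [BorelSpace X] [Nonempty X]
    [MetricSpace U] [CompactSpace U] [MeasurableSpace U] [BorelSpace U]
    [MetricSpace X0] [CompactSpace X0] [MeasurableSpace X0] [BorelSpace X0]
    [MetricSpace U0] [CompactSpace U0] [MeasurableSpace U0] [BorelSpace U0]

/-- bundled hypotheses for one pair of policies -/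
structure HLH (Lp Lp0 LPi : ℝ)
    (p : X → U → X0 → U0 → ProbabilityMeasure X → ProbabilityMeasure X)
    (p0 : X0 → U0 → ProbabilityMeasure X → ProbabilityMeasure X0)
    (q : ℕ → X → X0 → ProbabilityMeasure X → ProbabilityMeasure U)
    (q0 : ℕ → X0 → ProbabilityMeasure X → ProbabilityMeasure U0)
    (T : ℕ → X0 → U0 → ProbabilityMeasure X → ProbabilityMeasure X) : Prop where
  Lp_nonneg : 0 ≤ Lp
  Lp0_nonneg : 0 ≤ Lp0
  LPi_nonneg : 0 ≤ LPi
  hp : ∀ (x x' : X) (u u' : U) (x0 x0' : X0) (u0 u0' : U0)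
        (μ μ' : ProbabilityMeasure X) (f : X → ℝ), LipschitzWith 1 f →
      |∫ y, f y ∂(p x u x0 u0 μ : Measure X) - ∫ y, f y ∂(p x' u' x0' u0' μ' : Measure X)|
        ≤ Lp * (dist x x' + dist u u' + dist x0 x0' + dist u0 u0' + W1 μ μ')
  hp0 : ∀ (x0 x0' : X0) (u0 u0' : U0) (μ μ' : ProbabilityMeasure X) (f : X0 → ℝ),
        LipschitzWith 1 f →
      |∫ y, f y ∂(p0 x0 u0 μ : Measure X0) - ∫ y, f y ∂(p0 x0' u0' μ' : Measure X0)|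
        ≤ Lp0 * (dist x0 x0' + dist u0 u0' + W1 μ μ')
  hq : ∀ (t : ℕ) (x x' : X) (x0 x0' : X0) (μ μ' : ProbabilityMeasure X)
        (g : U → ℝ), LipschitzWith 1 g →
      |∫ u, g u ∂(q t x x0 μ : Measure U) - ∫ u, g u ∂(q t x' x0' μ' : Measure U)|
        ≤ LPi * (dist x x' + dist x0 x0' + W1 μ μ')
  hq0 : ∀ (t : ℕ) (x0 x0' : X0) (μ μ' : ProbabilityMeasure X) (g : U0 → ℝ),
        LipschitzWith 1 g →
      |∫ u, g u ∂(q0 t x0 μ : Measure U0) - ∫ u, g u ∂(q0 t x0' μ' : Measure U0)|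
        ≤ LPi * (dist x0 x0' + W1 μ μ')
  hT : ∀ (t : ℕ) (x0 : X0) (u0 : U0) (μ : ProbabilityMeasure X),
      (T t x0 u0 μ : Measure X) = (μ : Measure X).bind fun x =>
        ((q t x x0 μ : Measure U)).bind fun u => (p x u x0 u0 μ : Measure X)

/-- Lipschitz test functions on the limiting state space -/
def HLS (L : ℝ) (f : X0 → U0 → ProbabilityMeasure X → ℝ) : Prop :=
  ∀ (x0 x0' : X0) (u0 u0' : U0) (μ μ' : ProbabilityMeasure X),
      |f x0 u0 μ - f x0' u0' μ'| ≤ L * (dist x0 x0' + dist u0 u0' + W1 μ μ')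

lemma hl_lip_bdd {f : X → ℝ} (hf : LipschitzWith 1 f) : ∃ C, ∀ x, |f x| ≤ C := by
  obtain ⟨z⟩ := (inferInstance : Nonempty X)
  refine ⟨|f z| + Metric.diam (Set.univ : Set X), fun x => ?_⟩
  have h1 := hl_lip1 hf x z
  have h2 := hl_dist_le x z
  have h3 := abs_sub_abs_le_abs_sub (f x) (f z)
  linarith

lemma HLS.bdd {L : ℝ} (hL : 0 ≤ L) {f : X0 → U0 → ProbabilityMeasure X → ℝ} (hf : HLS L f) :
    ∃ C, 0 ≤ C ∧ ∀ x0 u0 μ, |f x0 u0 μ| ≤ C := by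
  by_cases h : Nonempty (X0 × U0 × ProbabilityMeasure X)
  · obtain ⟨a, b, c⟩ := h
    refine ⟨|f a b c| + L * (Metric.diam (Set.univ : Set X0) + Metric.diam (Set.univ : Set U0)
      + 2 * Metric.diam (Set.univ : Set X)), by positivity, fun x0 u0 μ => ?_⟩
    have h1 := hf x0 a u0 b μ c
    have h2 := abs_sub_abs_le_abs_sub (f x0 u0 μ) (f a b c)
    have h3 : L * (dist x0 a + dist u0 b + W1 μ c) ≤ L * (Metric.diam (Set.univ : Set X0)
        + Metric.diam (Set.univ : Set U0) + 2 * Metric.diam (Set.univ : Set X)) :=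
      mul_le_mul_of_nonneg_left (add_le_add (add_le_add (hl_dist_le _ _) (hl_dist_le _ _))
        (hl_W1_bound _ _)) hL
    linarith
  · exact ⟨0, le_rfl, fun x0 u0 μ => (h ⟨(x0, u0, μ)⟩).elim⟩

lemma hl_sum_dist {A B : Type*} [MetricSpace A] [MetricSpace B] (a a' : A) (b b' : B) :
    dist a a' + dist b b' ≤ 2 * dist (a, b) (a', b') := by
  have h1 : dist a a' ≤ dist (a, b) (a', b') := le_max_left _ _
  have h2 : dist b b' ≤ dist (a, b) (a', b') := le_max_right _ _
  linarith

lemma HLS.meas {L : ℝ} (hL : 0 ≤ L) {f : X0 → U0 → ProbabilityMeasure X → ℝ} (hf : HLS L f) :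
    Measurable fun s : X0 × U0 × ProbabilityMeasure X => f s.1 s.2.1 s.2.2 := by
  have h : Measurable fun s : (X0 × U0) × ProbabilityMeasure X => f s.1.1 s.1.2 s.2 := by
    refine hl_meas _ (L := 2 * L) (by positivity) ?_
    rintro ⟨a, b⟩ ⟨a', b'⟩ μ μ'
    refine (hf a a' b b' μ μ').trans ?_
    have h1 := hl_sum_dist a a' b b'
    have h2 := hl_W1_nonneg μ μ'
    nlinarith
  exact h.comp ((measurable_fst.prodMk measurable_snd.fst).prodMk measurable_snd.snd)

/-- Lipschitz kernels from the limiting state space are measurable -/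
lemma hl_kmeas3 {B : Type*} [MetricSpace B] [CompactSpace B] [MeasurableSpace B] [BorelSpace B]
    (κ : X0 → U0 → ProbabilityMeasure X → ProbabilityMeasure B) {L : ℝ} (hL : 0 ≤ L)
    (hκ : ∀ (x0 x0' : X0) (u0 u0' : U0) (μ μ' : ProbabilityMeasure X) (f : B → ℝ),
        LipschitzWith 1 f →
      |∫ y, f y ∂(κ x0 u0 μ : Measure B) - ∫ y, f y ∂(κ x0' u0' μ' : Measure B)|
        ≤ L * (dist x0 x0' + dist u0 u0' + W1 μ μ')) :
    Measurable fun s : X0 × U0 × ProbabilityMeasure X => (κ s.1 s.2.1 s.2.2 : Measure B) := by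
  have h : Measurable fun s : (X0 × U0) × ProbabilityMeasure X =>
      (κ s.1.1 s.1.2 s.2 : Measure B) := by
    refine hl_kmeas (fun s : (X0 × U0) × ProbabilityMeasure X => κ s.1.1 s.1.2 s.2)
      (L := 2 * L) (by positivity) ?_
    rintro ⟨a, b⟩ ⟨a', b'⟩ μ μ' f hf
    refine (hκ a a' b b' μ μ' f hf).trans ?_
    have h1 := hl_sum_dist a a' b b'
    have h2 := hl_W1_nonneg μ μ'
    nlinarith
  exact h.comp ((measurable_fst.prodMk measurable_snd.fst).prodMk measurable_snd.snd)

variable {Lp Lp0 LPi : ℝ}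
    {p : X → U → X0 → U0 → ProbabilityMeasure X → ProbabilityMeasure X}
    {p0 : X0 → U0 → ProbabilityMeasure X → ProbabilityMeasure X0}
    {q : ℕ → X → X0 → ProbabilityMeasure X → ProbabilityMeasure U}
    {q0 : ℕ → X0 → ProbabilityMeasure X → ProbabilityMeasure U0}
    {T : ℕ → X0 → U0 → ProbabilityMeasure X → ProbabilityMeasure X}

namespace HLH

lemma q0_meas (H : HLH Lp Lp0 LPi p p0 q q0 T) (t : ℕ) :
    Measurable fun s : X0 × ProbabilityMeasure X => (q0 t s.1 s.2 : Measure U0) :=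
  hl_kmeas (fun s : X0 × ProbabilityMeasure X => q0 t s.1 s.2) H.LPi_nonneg
    fun y y' μ μ' f hf => H.hq0 t y y' μ μ' f hf

lemma p0_meas (H : HLH Lp Lp0 LPi p p0 q q0 T) :
    Measurable fun s : X0 × U0 × ProbabilityMeasure X => (p0 s.1 s.2.1 s.2.2 : Measure X0) :=
  hl_kmeas3 p0 H.Lp0_nonneg H.hp0

lemma p_meas_u (H : HLH Lp Lp0 LPi p p0 q q0 T) (x : X) (x0 : X0) (u0 : U0)
    (μ : ProbabilityMeasure X) : Measurable fun u => (p x u x0 u0 μ : Measure X) := by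
  have h := hl_kmeas (X := X) (fun s : U × ProbabilityMeasure X => p x s.1 x0 u0 μ) H.Lp_nonneg
    (fun y y' ν ν' f hf => (H.hp x x y y' x0 x0 u0 u0 μ μ f hf).trans (by
      simp only [dist_self, hl_W1_self]
      exact mul_le_mul_of_nonneg_left (by have := hl_W1_nonneg ν ν'; linarith) H.Lp_nonneg))
  exact h.comp (measurable_id.prodMk (measurable_const (a := μ)))

/-- minor agent transition kernel, existence form -/
lemma exK (H : HLH Lp Lp0 LPi p p0 q q0 T) (t : ℕ) :
    ∃ K : X → X0 → U0 → ProbabilityMeasure X → ProbabilityMeasure X,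
      (∀ x x0 u0 μ, (K x x0 u0 μ : Measure X) =
        ((q t x x0 μ : Measure U)).bind fun u => (p x u x0 u0 μ : Measure X)) ∧
      (∀ (x x' : X) (x0 x0' : X0) (u0 u0' : U0)
        (μ μ' : ProbabilityMeasure X) (f : X → ℝ), LipschitzWith 1 f →
      |∫ y, f y ∂(K x x0 u0 μ : Measure X) - ∫ y, f y ∂(K x' x0' u0' μ' : Measure X)|
        ≤ Lp * (1 + LPi) * (dist x x' + dist x0 x0' + dist u0 u0' + W1 μ μ')) := by
  have hb : ∀ (x : X) (x0 : X0) (u0 : U0) (μ : ProbabilityMeasure X) (f : X → ℝ)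
      (hf : LipschitzWith 1 f), _ := fun x x0 u0 μ f hf =>
    hl_integral_bind (q t x x0 μ : Measure U) (H.p_meas_u x x0 u0 μ) (fun u => inferInstance)
      hf.continuous.measurable (hl_lip_bdd hf).choose_spec
  have hz : LipschitzWith 1 (fun _ : X => (0:ℝ)) := LipschitzWith.const' 0
  refine ⟨fun x x0 u0 μ => ⟨_, (hb x x0 u0 μ _ hz).1⟩, fun _ _ _ _ => rfl, ?_⟩
  intro x x' x0 x0' u0 u0' μ μ' f hf
  change |∫ y, f y ∂(Measure.bind _ _) - ∫ y, f y ∂(Measure.bind _ _)| ≤ _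
  rw [(hb x x0 u0 μ f hf).2, (hb x' x0' u0' μ' f hf).2]
  have hW := hl_W1_nonneg μ μ'
  have hd : 0 ≤ dist x x' + dist x0 x0' + dist u0 u0' + W1 μ μ' := by positivity
  refine hl_kstep _ _ _ _ H.Lp_nonneg hd ?_ ?_ ?_ ?_
  · intro b
    simpa using H.hp x x' b b x0 x0' u0 u0' μ μ' f hf
  · intro b b'
    simpa [hl_W1_self] using H.hp x x b b' x0 x0 u0 u0 μ μ f hf
  · intro b b'
    simpa [hl_W1_self] using H.hp x' x' b b' x0' x0' u0' u0' μ' μ' f hf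
  · intro h hh
    refine (H.hq t x x' x0 x0' μ μ' h hh).trans (mul_le_mul_of_nonneg_left ?_ H.LPi_nonneg)
    have := dist_nonneg (x := u0) (y := u0')
    linarith

lemma exK2 (H : HLH Lp Lp0 LPi p p0 q q0 T) (t : ℕ) :
    ∃ K : X → X0 → U0 → ProbabilityMeasure X → ProbabilityMeasure X,
      (∀ x x0 u0 μ, (K x x0 u0 μ : Measure X) =
        ((q t x x0 μ : Measure U)).bind fun u => (p x u x0 u0 μ : Measure X)) ∧
      (∀ (x x' : X) (x0 x0' : X0) (u0 u0' : U0)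
        (μ μ' : ProbabilityMeasure X) (f : X → ℝ), LipschitzWith 1 f →
      |∫ y, f y ∂(K x x0 u0 μ : Measure X) - ∫ y, f y ∂(K x' x0' u0' μ' : Measure X)|
        ≤ Lp * (1 + LPi) * (dist x x' + dist x0 x0' + dist u0 u0' + W1 μ μ')) ∧
      (∀ x0 u0 μ (f : X → ℝ), LipschitzWith 1 f → ∫ y, f y ∂(T t x0 u0 μ : Measure X)
        = ∫ x, ∫ y, f y ∂(K x x0 u0 μ : Measure X) ∂(μ : Measure X)) := by
  obtain ⟨K, hK1, hK2⟩ := H.exK t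
  refine ⟨K, hK1, hK2, ?_⟩
  intro x0 u0 μ f hf
  have hLK : 0 ≤ Lp * (1 + LPi) := mul_nonneg H.Lp_nonneg (by have := H.LPi_nonneg; linarith)
  have hm : Measurable fun x => (K x x0 u0 μ : Measure X) := by
    have h := hl_kmeas (X := X) (fun s : X × ProbabilityMeasure X => K s.1 x0 u0 μ) hLK
      (fun y y' ν ν' f hf => (hK2 y y' x0 x0 u0 u0 μ μ f hf).trans (by
        simp only [dist_self, hl_W1_self]
        exact mul_le_mul_of_nonneg_left (by have := hl_W1_nonneg ν ν'; linarith) hLK))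
    exact h.comp (measurable_id.prodMk (measurable_const (a := μ)))
  rw [H.hT]
  simp_rw [← hK1]
  exact (hl_integral_bind (μ : Measure X) hm (fun u => inferInstance)
      hf.continuous.measurable (hl_lip_bdd hf).choose_spec).2

lemma T_lip (H : HLH Lp Lp0 LPi p p0 q q0 T) (t : ℕ) (x0 x0' : X0) (u0 u0' : U0)
    (μ μ' : ProbabilityMeasure X) (f : X → ℝ) (hf : LipschitzWith 1 f) :
    |∫ y, f y ∂(T t x0 u0 μ : Measure X) - ∫ y, f y ∂(T t x0' u0' μ' : Measure X)|
        ≤ Lp * (1 + LPi) * (1 + 1) * (dist x0 x0' + dist u0 u0' + W1 μ μ') := by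
  obtain ⟨K, hK1, hK2, hK3⟩ := H.exK2 t
  have hLK : 0 ≤ Lp * (1 + LPi) := mul_nonneg H.Lp_nonneg (by have := H.LPi_nonneg; linarith)
  rw [hK3 _ _ _ f hf, hK3 _ _ _ f hf]
  have hW := hl_W1_nonneg μ μ'
  refine hl_kstep _ _ _ _ hLK (by positivity) ?_ ?_ ?_ ?_
  · intro b
    simpa using hK2 b b x0 x0' u0 u0' μ μ' f hf
  · intro b b'
    simpa [hl_W1_self] using hK2 b b' x0 x0 u0 u0 μ μ f hf
  · intro b b'
    simpa [hl_W1_self] using hK2 b b' x0' x0' u0' u0' μ' μ' f hf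
  · intro h hh
    refine (hl_le_W1 hh μ μ').trans ?_
    have := dist_nonneg (x := u0) (y := u0')
    have := dist_nonneg (x := x0) (y := x0')
    linarith

lemma T_meas (H : HLH Lp Lp0 LPi p p0 q q0 T) (t : ℕ) :
    Measurable fun s : X0 × U0 × ProbabilityMeasure X => T t s.1 s.2.1 s.2.2 := by
  have hLK : 0 ≤ Lp * (1 + LPi) * (1 + 1) :=
    mul_nonneg (mul_nonneg H.Lp_nonneg (by have := H.LPi_nonneg; linarith)) (by norm_num)
  exact (hl_kmeas3 (T t) hLK (H.T_lip t)).subtype_mk (h := fun s => (T t s.1 s.2.1 s.2.2).2)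

/-- one-step averaging over the major action -/
noncomputable def gg (q0 : ℕ → X0 → ProbabilityMeasure X → ProbabilityMeasure U0) (t : ℕ)
    (f : X0 → U0 → ProbabilityMeasure X → ℝ) (y0 : X0) (μ : ProbabilityMeasure X) : ℝ :=
  ∫ u, f y0 u μ ∂(q0 t y0 μ : Measure U0)

/-- one-step transition operator of the limiting process -/
noncomputable def GG (p0 : X0 → U0 → ProbabilityMeasure X → ProbabilityMeasure X0)
    (q0 : ℕ → X0 → ProbabilityMeasure X → ProbabilityMeasure U0)
    (T : ℕ → X0 → U0 → ProbabilityMeasure X → ProbabilityMeasure X) (t : ℕ)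
    (f : X0 → U0 → ProbabilityMeasure X → ℝ) (x0 : X0) (u0 : U0)
    (μ : ProbabilityMeasure X) : ℝ :=
  ∫ y0, gg q0 (t + 1) f y0 (T t x0 u0 μ) ∂(p0 x0 u0 μ : Measure X0)

lemma gg_lip (H : HLH Lp Lp0 LPi p p0 q q0 T) (t : ℕ) {L : ℝ} (hL : 0 ≤ L)
    {f : X0 → U0 → ProbabilityMeasure X → ℝ} (hf : HLS L f) (y y' : X0)
    (μ μ' : ProbabilityMeasure X) :
    |gg q0 t f y μ - gg q0 t f y' μ'| ≤ L * (1 + LPi) * (dist y y' + W1 μ μ') := by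
  have hW := hl_W1_nonneg μ μ'
  refine hl_kstep _ _ _ _ hL (by positivity) ?_ ?_ ?_ ?_
  · intro b; simpa using hf y y' b b μ μ'
  · intro b b'; simpa [hl_W1_self] using hf y y b b' μ μ
  · intro b b'; simpa [hl_W1_self] using hf y' y' b b' μ' μ'
  · exact H.hq0 t y y' μ μ'

lemma gg_bdd (t : ℕ) {f : X0 → U0 → ProbabilityMeasure X → ℝ} {C : ℝ}
    (hC : ∀ x0 u0 μ, |f x0 u0 μ| ≤ C) (y : X0) (μ : ProbabilityMeasure X) :
    |gg q0 t f y μ| ≤ C := by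
  have := norm_integral_le_of_norm_le_const (μ := (q0 t y μ : Measure U0))
    (f := fun u => f y u μ) (C := C) (Filter.Eventually.of_forall fun u => hC y u μ)
  simpa [gg] using this

lemma gg_meas (H : HLH Lp Lp0 LPi p p0 q q0 T) (t : ℕ) {L : ℝ} (hL : 0 ≤ L)
    {f : X0 → U0 → ProbabilityMeasure X → ℝ} (hf : HLS L f) :
    Measurable fun s : X0 × ProbabilityMeasure X => gg q0 t f s.1 s.2 :=
  hl_meas _ (L := L * (1 + LPi)) (mul_nonneg hL (by have := H.LPi_nonneg; linarith))
    fun y y' μ μ' => H.gg_lip t hL hf y y' μ μ'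

lemma GG_lip (H : HLH Lp Lp0 LPi p p0 q q0 T) (t : ℕ) {L : ℝ} (hL : 0 ≤ L)
    {f : X0 → U0 → ProbabilityMeasure X → ℝ} (hf : HLS L f) :
    HLS (L * ((1 + LPi) * (1 + Lp0) * (1 + Lp * (1 + LPi) * (1 + 1)))) (GG p0 q0 T t f) := by
  intro x0 x0' u0 u0' μ μ'
  have h1 := H.LPi_nonneg
  have h2 := H.Lp_nonneg
  have h3 := H.Lp0_nonneg
  have hW := hl_W1_nonneg μ μ'
  set d := dist x0 x0' + dist u0 u0' + W1 μ μ' with hd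
  have hd0 : 0 ≤ d := by positivity
  set LT := Lp * (1 + LPi) * (1 + 1) with hLT
  have hLT0 : 0 ≤ LT := by positivity
  have hTW : W1 (T t x0 u0 μ) (T t x0' u0' μ') ≤ LT * d :=
    hl_W1_le fun f hf => H.T_lip t x0 x0' u0 u0' μ μ' f hf
  have := hl_kstep (p0 x0 u0 μ) (p0 x0' u0' μ') (fun y => gg q0 (t+1) f y (T t x0 u0 μ))
    (fun y => gg q0 (t+1) f y (T t x0' u0' μ')) (L := L * (1 + LPi)) (K := Lp0)
    (D := (1 + LT) * d) (by positivity) (by positivity) ?_ ?_ ?_ ?_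
  · refine this.trans (le_of_eq ?_)
    ring
  · intro b
    refine (H.gg_lip (t+1) hL hf b b _ _).trans (mul_le_mul_of_nonneg_left ?_ (by positivity))
    rw [dist_self]; linarith
  · intro b b'
    simpa [hl_W1_self] using H.gg_lip (t+1) hL hf b b' (T t x0 u0 μ) (T t x0 u0 μ)
  · intro b b'
    simpa [hl_W1_self] using H.gg_lip (t+1) hL hf b b' (T t x0' u0' μ') (T t x0' u0' μ')
  · intro h hh
    refine (H.hp0 x0 x0' u0 u0' μ μ' h hh).trans (mul_le_mul_of_nonneg_left ?_ h3)
    nlinarith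


lemma lim_kmeas (H : HLH Lp Lp0 LPi p p0 q q0 T) (t : ℕ) :
    (∀ μ' : ProbabilityMeasure X, Measurable fun y0 : X0 =>
      ((q0 (t + 1) y0 μ' : Measure U0)).map fun u0 => (y0, u0, μ')) ∧
    Measurable fun s : X0 × U0 × ProbabilityMeasure X =>
      ((p0 s.1 s.2.1 s.2.2 : Measure X0)).bind fun y0 =>
        ((q0 (t + 1) y0 (T t s.1 s.2.1 s.2.2) : Measure U0)).map
          fun u0 => (y0, u0, T t s.1 s.2.1 s.2.2) := by
  have hj : Measurable fun z : X0 × ProbabilityMeasure X =>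
      ((q0 (t + 1) z.1 z.2 : Measure U0)).map fun u0 => (z.1, u0, z.2) :=
    hl_map_meas (H.q0_meas (t+1)) (fun a => inferInstance)
      (F := fun (z : X0 × ProbabilityMeasure X) u0 => (z.1, u0, z.2)) (by fun_prop)
  have h1 : ∀ μ' : ProbabilityMeasure X, Measurable fun y0 : X0 =>
      ((q0 (t + 1) y0 μ' : Measure U0)).map fun u0 => (y0, u0, μ') := fun μ' =>
    hj.comp (measurable_id.prodMk (measurable_const (a := μ')))
  refine ⟨h1, ?_⟩
  have h2 : Measurable fun s : X0 × U0 × ProbabilityMeasure X =>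
      ((p0 s.1 s.2.1 s.2.2 : Measure X0)).map fun y0 => (y0, T t s.1 s.2.1 s.2.2) :=
    hl_map_meas H.p0_meas (fun a => inferInstance)
      (F := fun (s : X0 × U0 × ProbabilityMeasure X) y0 => (y0, T t s.1 s.2.1 s.2.2))
      (measurable_snd.prodMk ((H.T_meas t).comp measurable_fst))
  have h3 := (Measure.measurable_bind' hj).comp h2
  refine Eq.mp (congrArg Measurable (funext fun s => ?_)) h3
  simp only [Function.comp, Measure.bind]
  rw [Measure.map_map hj measurable_prodMk_right]
  rfl

lemma lim_step (H : HLH Lp Lp0 LPi p p0 q q0 T) (μ0 : ProbabilityMeasure X) (x00 : X0) (t : ℕ)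
    (hpr : IsProbabilityMeasure (m3LimLaw p0 q0 T μ0 x00 t)) {L : ℝ} (hL : 0 ≤ L)
    {f : X0 → U0 → ProbabilityMeasure X → ℝ} (hf : HLS L f) :
    IsProbabilityMeasure (m3LimLaw p0 q0 T μ0 x00 (t + 1)) ∧
    ∫ s, f s.1 s.2.1 s.2.2 ∂(m3LimLaw p0 q0 T μ0 x00 (t + 1)) =
    ∫ s, GG p0 q0 T t f s.1 s.2.1 s.2.2 ∂(m3LimLaw p0 q0 T μ0 x00 t) := by
  obtain ⟨C, -, hC⟩ := hf.bdd hL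
  have hfm := hf.meas hL
  obtain ⟨hk1, hk2⟩ := H.lim_kmeas t
  have hpm : ∀ (μ' : ProbabilityMeasure X) (y0 : X0), IsProbabilityMeasure
      (((q0 (t + 1) y0 μ' : Measure U0)).map fun u0 => (y0, u0, μ')) := fun μ' y0 =>
    Measure.isProbabilityMeasure_map (by fun_prop)
  have hin : ∀ s : X0 × U0 × ProbabilityMeasure X, _ := fun s =>
    hl_integral_bind (p0 s.1 s.2.1 s.2.2 : Measure X0) (hk1 (T t s.1 s.2.1 s.2.2))
      (fun y0 => hpm _ y0) hfm (C := C) (fun b => hC _ _ _)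
  have hout := hl_integral_bind (m3LimLaw p0 q0 T μ0 x00 t) hk2 (fun s => (hin s).1) hfm
    (C := C) (fun b => hC _ _ _)
  refine ⟨hout.1, hout.2.trans ?_⟩
  refine integral_congr_ae (Filter.Eventually.of_forall fun s => ?_)
  refine (hin s).2.trans ?_
  refine integral_congr_ae (Filter.Eventually.of_forall fun y0 => ?_)
  exact integral_map (by fun_prop) hfm.aestronglyMeasurable

lemma lim_zero (H : HLH Lp Lp0 LPi p p0 q q0 T) (μ0 : ProbabilityMeasure X) (x00 : X0)
    {L : ℝ} (hL : 0 ≤ L) {f : X0 → U0 → ProbabilityMeasure X → ℝ} (hf : HLS L f) :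
    IsProbabilityMeasure (m3LimLaw p0 q0 T μ0 x00 0) ∧
    ∫ s, f s.1 s.2.1 s.2.2 ∂(m3LimLaw p0 q0 T μ0 x00 0) = gg q0 0 f x00 μ0 :=
  ⟨Measure.isProbabilityMeasure_map (by fun_prop),
    integral_map (by fun_prop) (hf.meas hL).aestronglyMeasurable⟩

lemma HLS_zero : HLS (X := X) (X0 := X0) (U0 := U0) 0 (fun _ _ _ => 0) := by
  intro _ _ _ _ _ _; simp

lemma lim_prob (H : HLH Lp Lp0 LPi p p0 q q0 T) (μ0 : ProbabilityMeasure X) (x00 : X0) (t : ℕ) :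
    IsProbabilityMeasure (m3LimLaw p0 q0 T μ0 x00 t) := by
  induction t with
  | zero => exact (H.lim_zero μ0 x00 le_rfl HLS_zero).1
  | succ t ih => exact (H.lim_step μ0 x00 t ih le_rfl HLS_zero).1

/-- action sampling kernel in the N-agent system -/
lemma act_meas (H : HLH Lp Lp0 LPi p p0 q q0 T) (t N : ℕ) :
    Measurable fun y : X0 × (Fin N → X) =>
      ((q0 t y.1 (emp N y.2) : Measure U0)).map fun u0 => (y.1, u0, y.2) :=
  hl_map_meas ((H.q0_meas t).comp (measurable_fst.prodMk (hl_emp_meas.comp measurable_snd)))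
    (fun a => inferInstance)
    (κ := fun y : X0 × (Fin N → X) => (q0 t y.1 (emp N y.2) : Measure U0))
    (F := fun (z : X0 × (Fin N → X)) u0 => (z.1, u0, z.2)) (by fun_prop)

lemma fN_meas {L : ℝ} (hL : 0 ≤ L) {f : X0 → U0 → ProbabilityMeasure X → ℝ} (hf : HLS L f)
    (N : ℕ) : Measurable fun s : X0 × U0 × (Fin N → X) => f s.1 s.2.1 (emp N s.2.2) :=
  (hf.meas hL).comp (measurable_fst.prodMk
    (measurable_snd.fst.prodMk (hl_emp_meas.comp measurable_snd.snd)))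

lemma act_int (H : HLH Lp Lp0 LPi p p0 q q0 T) (t N : ℕ) {L : ℝ} (hL : 0 ≤ L)
    {f : X0 → U0 → ProbabilityMeasure X → ℝ} (hf : HLS L f) (y : X0 × (Fin N → X)) :
    ∫ s, f s.1 s.2.1 (emp N s.2.2)
      ∂(((q0 t y.1 (emp N y.2) : Measure U0)).map fun u0 => (y.1, u0, y.2))
      = gg q0 t f y.1 (emp N y.2) :=
  integral_map (by fun_prop) (fN_meas hL hf N).aestronglyMeasurable

lemma N_zero (H : HLH Lp Lp0 LPi p p0 q q0 T) (μ0 : ProbabilityMeasure X) (x00 : X0) (N : ℕ)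
    {L : ℝ} (hL : 0 ≤ L) {f : X0 → U0 → ProbabilityMeasure X → ℝ} (hf : HLS L f) :
    IsProbabilityMeasure (m3LawN p p0 q q0 μ0 x00 N 0) ∧
    ∫ s, f s.1 s.2.1 (emp N s.2.2) ∂(m3LawN p p0 q q0 μ0 x00 N 0) =
      ∫ x, gg q0 0 f x00 (emp N x) ∂(Measure.pi fun _ : Fin N => (μ0 : Measure X)) := by
  obtain ⟨C, -, hC⟩ := hf.bdd hL
  have hk : Measurable fun x : Fin N → X =>
      ((q0 0 x00 (emp N x) : Measure U0)).map fun u0 => (x00, u0, x) :=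
    (H.act_meas 0 N).comp ((measurable_const (a := x00)).prodMk measurable_id)
  have := hl_integral_bind (Measure.pi fun _ : Fin N => (μ0 : Measure X)) hk
    (fun x => Measure.isProbabilityMeasure_map (by fun_prop)) (fN_meas hL hf N) (C := C)
    (fun b => hC _ _ _)
  refine ⟨this.1, this.2.trans ?_⟩
  exact integral_congr_ae (Filter.Eventually.of_forall fun x => H.act_int 0 N hL hf (x00, x))

lemma N_step (H : HLH Lp Lp0 LPi p p0 q q0 T) (μ0 : ProbabilityMeasure X) (x00 : X0) (N t : ℕ)
    (K : X → X0 → U0 → ProbabilityMeasure X → ProbabilityMeasure X)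
    (hK1 : ∀ x x0 u0 μ, (K x x0 u0 μ : Measure X) =
        ((q t x x0 μ : Measure U)).bind fun u => (p x u x0 u0 μ : Measure X))
    (hK2 : ∀ (x x' : X) (x0 x0' : X0) (u0 u0' : U0)
        (μ μ' : ProbabilityMeasure X) (f : X → ℝ), LipschitzWith 1 f →
      |∫ y, f y ∂(K x x0 u0 μ : Measure X) - ∫ y, f y ∂(K x' x0' u0' μ' : Measure X)|
        ≤ Lp * (1 + LPi) * (dist x x' + dist x0 x0' + dist u0 u0' + W1 μ μ'))
    (hpr : IsProbabilityMeasure (m3LawN p p0 q q0 μ0 x00 N t))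
    {L : ℝ} (hL : 0 ≤ L) {f : X0 → U0 → ProbabilityMeasure X → ℝ} (hf : HLS L f) :
    IsProbabilityMeasure (m3LawN p p0 q q0 μ0 x00 N (t + 1)) ∧
    (Measurable fun s : X0 × U0 × (Fin N → X) =>
      ∫ y, gg q0 (t + 1) f y.1 (emp N y.2)
        ∂((p0 s.1 s.2.1 (emp N s.2.2) : Measure X0).prod
          (Measure.pi fun i => (K (s.2.2 i) s.1 s.2.1 (emp N s.2.2) : Measure X)))) ∧
    ∫ s, f s.1 s.2.1 (emp N s.2.2) ∂(m3LawN p p0 q q0 μ0 x00 N (t + 1)) =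
      ∫ s, (∫ y, gg q0 (t + 1) f y.1 (emp N y.2)
        ∂((p0 s.1 s.2.1 (emp N s.2.2) : Measure X0).prod
          (Measure.pi fun i => (K (s.2.2 i) s.1 s.2.1 (emp N s.2.2) : Measure X))))
        ∂(m3LawN p p0 q q0 μ0 x00 N t) := by
  obtain ⟨C, -, hC⟩ := hf.bdd hL
  have hLK : 0 ≤ Lp * (1 + LPi) := mul_nonneg H.Lp_nonneg (by have := H.LPi_nonneg; linarith)
  have hKm : Measurable fun z : (X × X0 × U0) × ProbabilityMeasure X =>
      (K z.1.1 z.1.2.1 z.1.2.2 z.2 : Measure X) := by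
    refine hl_kmeas (fun z : (X × X0 × U0) × ProbabilityMeasure X =>
      K z.1.1 z.1.2.1 z.1.2.2 z.2) (L := 3 * (Lp * (1 + LPi))) (by positivity) ?_
    rintro ⟨x, x0, u0⟩ ⟨x', x0', u0'⟩ μ μ' h hh
    refine (hK2 x x' x0 x0' u0 u0' μ μ' h hh).trans ?_
    have h1 : dist x x' ≤ dist (x, x0, u0) (x', x0', u0') := le_max_left _ _
    have h2 : dist x0 x0' ≤ dist (x, x0, u0) (x', x0', u0') :=
      (le_max_left _ _).trans (le_max_right _ _)
    have h3 : dist u0 u0' ≤ dist (x, x0, u0) (x', x0', u0') :=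
      (le_max_right _ _).trans (le_max_right _ _)
    have h4 := hl_W1_nonneg μ μ'
    nlinarith
  have hM : Measurable fun s : X0 × U0 × (Fin N → X) =>
      ((p0 s.1 s.2.1 (emp N s.2.2) : Measure X0).prod
          (Measure.pi fun i => (K (s.2.2 i) s.1 s.2.1 (emp N s.2.2) : Measure X))) := by
    refine hl_prod_meas ?_ (fun _ => inferInstance) (hl_pi_meas (fun i => ?_)
      (fun _ _ => inferInstance)) (fun _ => inferInstance)
    · exact H.p0_meas.comp (measurable_fst.prodMk
        (measurable_snd.fst.prodMk (hl_emp_meas.comp measurable_snd.snd)))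
    · exact hKm.comp ((((measurable_pi_apply i).comp measurable_snd.snd).prodMk
        (measurable_fst.prodMk measurable_snd.fst)).prodMk (hl_emp_meas.comp measurable_snd.snd))
  have hact := H.act_meas (t + 1) N
  have hap : ∀ y : X0 × (Fin N → X), IsProbabilityMeasure
      (((q0 (t+1) y.1 (emp N y.2) : Measure U0)).map fun u0 => (y.1, u0, y.2)) := fun y =>
    Measure.isProbabilityMeasure_map (by fun_prop)
  have hin : ∀ s : X0 × U0 × (Fin N → X), _ := fun s =>
    hl_integral_bind ((p0 s.1 s.2.1 (emp N s.2.2) : Measure X0).prod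
          (Measure.pi fun i => (K (s.2.2 i) s.1 s.2.1 (emp N s.2.2) : Measure X))) hact hap
      (fN_meas hL hf N) (C := C) (fun b => hC _ _ _)
  have hout := hl_integral_bind (m3LawN p p0 q q0 μ0 x00 N t)
    ((Measure.measurable_bind' hact).comp hM) (fun s => (hin s).1) (fN_meas hL hf N)
    (C := C) (fun b => hC _ _ _)
  have hlaw : m3LawN p p0 q q0 μ0 x00 N (t + 1) = (m3LawN p p0 q q0 μ0 x00 N t).bind
      ((fun m => m.bind fun y : X0 × (Fin N → X) =>
        ((q0 (t+1) y.1 (emp N y.2) : Measure U0)).map fun u0 => (y.1, u0, y.2)) ∘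
      fun s : X0 × U0 × (Fin N → X) => ((p0 s.1 s.2.1 (emp N s.2.2) : Measure X0).prod
          (Measure.pi fun i => (K (s.2.2 i) s.1 s.2.1 (emp N s.2.2) : Measure X)))) := by
    simp only [hK1]
    rfl
  rw [hlaw]
  refine ⟨hout.1, ?_, hout.2.trans ?_⟩
  · let κ : ProbabilityTheory.Kernel (X0 × U0 × (Fin N → X)) (X0 × (Fin N → X)) := ⟨_, hM⟩
    have hg : StronglyMeasurable fun y : X0 × (Fin N → X) => gg q0 (t + 1) f y.1 (emp N y.2) :=
      ((H.gg_meas (t+1) hL hf).comp (measurable_fst.prodMk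
        (hl_emp_meas.comp measurable_snd))).stronglyMeasurable
    exact (hg.integral_kernel (κ := κ)).measurable
  · refine integral_congr_ae (Filter.Eventually.of_forall fun s => ?_)
    refine (hin s).2.trans ?_
    exact integral_congr_ae (Filter.Eventually.of_forall fun y => H.act_int (t+1) N hL hf y)

lemma N_prob (H : HLH Lp Lp0 LPi p p0 q q0 T) (μ0 : ProbabilityMeasure X) (x00 : X0) (N t : ℕ) :
    IsProbabilityMeasure (m3LawN p p0 q q0 μ0 x00 N t) := by
  induction t with
  | zero => exact (H.N_zero μ0 x00 N le_rfl HLS_zero).1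
  | succ t ih =>
    obtain ⟨K, hK1, hK2⟩ := H.exK t
    exact (H.N_step μ0 x00 N t K hK1 hK2 ih le_rfl HLS_zero).1

end HLH

/-- error propagation constants -/
def hlc (a b : ℝ) : ℕ → ℝ
  | 0 => a
  | t + 1 => a + hlc a b t * b

namespace HLH

lemma main (H : HLH Lp Lp0 LPi p p0 q q0 T) (μ0 : ProbabilityMeasure X) (x00 : X0) {N : ℕ}
    (hN : N ≠ 0) {e : ℝ}
    (he : ∀ (ν : Fin N → ProbabilityMeasure X) (νb : ProbabilityMeasure X),
      (∀ f : X → ℝ, LipschitzWith 1 f → ∫ y, f y ∂(νb : Measure X)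
        = (N : ℝ)⁻¹ * ∑ i, ∫ y, f y ∂(ν i : Measure X)) →
      ∫ x, W1 (emp N x) νb ∂(Measure.pi fun i => (ν i : Measure X)) ≤ e) (t : ℕ) :
    ∀ (L : ℝ) (hL : 0 ≤ L) (f : X0 → U0 → ProbabilityMeasure X → ℝ) (hf : HLS L f),
      |∫ s, f s.1 s.2.1 (emp N s.2.2) ∂(m3LawN p p0 q q0 μ0 x00 N t)
        - ∫ s, f s.1 s.2.1 s.2.2 ∂(m3LimLaw p0 q0 T μ0 x00 t)|
      ≤ hlc (1 + LPi) ((1 + LPi) * (1 + Lp0) * (1 + Lp * (1 + LPi) * (1 + 1))) t * L * e := by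
  have h1 := H.LPi_nonneg
  have h2 := H.Lp_nonneg
  have h3 := H.Lp0_nonneg
  have hWm : ∀ νb : ProbabilityMeasure X, Measurable fun x : Fin N → X => W1 (emp N x) νb :=
    fun νb => (hl_W1_meas νb).comp hl_emp_meas
  have hWb : ∀ (νb : ProbabilityMeasure X) (x : Fin N → X),
      |W1 (emp N x) νb| ≤ 2 * Metric.diam (Set.univ : Set X) := fun νb x => by
    rw [abs_of_nonneg (hl_W1_nonneg _ _)]; exact hl_W1_bound _ _
  induction t with
  | zero =>
    intro L hL f hf
    rw [(H.N_zero μ0 x00 N hL hf).2, (H.lim_zero μ0 x00 hL hf).2]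
    obtain ⟨C, -, hC⟩ := hf.bdd hL
    set P := Measure.pi fun _ : Fin N => (μ0 : Measure X)
    have hgi : Integrable (fun x => gg q0 0 f x00 (emp N x)) P :=
      hl_integrable ((H.gg_meas 0 hL hf).comp
        ((measurable_const (a := x00)).prodMk hl_emp_meas)) (C := C) fun x => gg_bdd 0 hC _ _
    have e1 : ∫ x, gg q0 0 f x00 (emp N x) ∂P - gg q0 0 f x00 μ0
        = ∫ x, (gg q0 0 f x00 (emp N x) - gg q0 0 f x00 μ0) ∂P := by
      rw [integral_sub hgi (integrable_const _)]; simp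
    rw [e1]
    have hle : ∫ x, W1 (emp N x) μ0 ∂P ≤ e := he (fun _ => μ0) μ0 fun f _ => by
      have : (N : ℝ) ≠ 0 := by exact_mod_cast hN
      simp; field_simp
    calc _ ≤ ∫ x, L * (1 + LPi) * W1 (emp N x) μ0 ∂P := by
          have hw : Integrable (fun x => L * (1 + LPi) * W1 (emp N x) μ0) P :=
            (hl_integrable (m := P) (hWm μ0) (hWb μ0)).const_mul _
          rw [← Real.norm_eq_abs]
          refine norm_integral_le_of_norm_le hw (Filter.Eventually.of_forall fun x => ?_)
          rw [Real.norm_eq_abs]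
          simpa using H.gg_lip 0 hL hf x00 x00 (emp N x) μ0
      _ = L * (1 + LPi) * ∫ x, W1 (emp N x) μ0 ∂P := integral_const_mul _ _
      _ ≤ L * (1 + LPi) * e := mul_le_mul_of_nonneg_left hle (by positivity)
      _ = _ := by simp only [hlc]; ring
  | succ t ih =>
    intro L hL f hf
    obtain ⟨K, hK1, hK2, hK3⟩ := H.exK2 t
    haveI hpr := H.N_prob μ0 x00 N t
    obtain ⟨-, hmeas, hstep⟩ := H.N_step μ0 x00 N t K hK1 hK2 hpr hL hf
    rw [hstep, (H.lim_step μ0 x00 t (H.lim_prob μ0 x00 t) hL hf).2]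
    obtain ⟨C, -, hC⟩ := hf.bdd hL
    have hG := H.GG_lip t hL hf
    set b := (1 + LPi) * (1 + Lp0) * (1 + Lp * (1 + LPi) * (1 + 1)) with hb
    have hb0 : 0 ≤ b := by positivity
    have hIH := ih (L * b) (by positivity) _ hG
    obtain ⟨C', -, hC'⟩ := hG.bdd (by positivity)
    set Q := m3LawN p p0 q q0 μ0 x00 N t
    -- pointwise estimate
    have hpt : ∀ s : X0 × U0 × (Fin N → X),
        |(∫ y, gg q0 (t + 1) f y.1 (emp N y.2)
        ∂((p0 s.1 s.2.1 (emp N s.2.2) : Measure X0).prod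
          (Measure.pi fun i => (K (s.2.2 i) s.1 s.2.1 (emp N s.2.2) : Measure X))))
          - GG p0 q0 T t f s.1 s.2.1 (emp N s.2.2)| ≤ L * (1 + LPi) * e := by
      intro s
      set Tm := T t s.1 s.2.1 (emp N s.2.2) with hTm
      set P := Measure.pi fun i => (K (s.2.2 i) s.1 s.2.1 (emp N s.2.2) : Measure X)
      set R := (p0 s.1 s.2.1 (emp N s.2.2) : Measure X0)
      have hle : ∫ x, W1 (emp N x) Tm ∂P ≤ e :=
        he (fun i => K (s.2.2 i) s.1 s.2.1 (emp N s.2.2)) Tm fun h hh => by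
          rw [hTm, hK3 _ _ _ h hh]
          refine hl_emp_integral hN s.2.2 fun μ => ?_
          refine hl_lip_integrable (L := Lp * (1 + LPi)) (fun x y => ?_) _
          simpa [hl_W1_self] using hK2 x y s.1 s.1 s.2.1 s.2.1 (emp N s.2.2) (emp N s.2.2) h hh
      have e2 : GG p0 q0 T t f s.1 s.2.1 (emp N s.2.2)
          = ∫ y, gg q0 (t + 1) f y.1 Tm ∂(R.prod P) := by
        rw [integral_fun_fst (μ := R) (ν := P) (fun y0 => gg q0 (t + 1) f y0 Tm)]
        simp [GG, R, hTm]
      have hi1 : Integrable (fun y : X0 × (Fin N → X) => gg q0 (t + 1) f y.1 (emp N y.2))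
          (R.prod P) :=
        hl_integrable ((H.gg_meas (t+1) hL hf).comp (measurable_fst.prodMk
          (hl_emp_meas.comp measurable_snd))) (C := C) fun y => gg_bdd _ hC _ _
      have hi2 : Integrable (fun y : X0 × (Fin N → X) => gg q0 (t + 1) f y.1 Tm)
          (R.prod P) :=
        hl_integrable ((H.gg_meas (t+1) hL hf).comp (measurable_fst.prodMk
          (measurable_const (a := Tm)))) (C := C) fun y => gg_bdd _ hC _ _
      rw [e2, ← integral_sub hi1 hi2]
      calc _ ≤ ∫ y : X0 × (Fin N → X), L * (1 + LPi) * W1 (emp N y.2) Tm ∂(R.prod P) := by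
            have hw : Integrable (fun y : X0 × (Fin N → X) =>
                L * (1 + LPi) * W1 (emp N y.2) Tm) (R.prod P) :=
              (hl_integrable (m := R.prod P) ((hWm Tm).comp measurable_snd)
                (fun y => hWb Tm y.2)).const_mul _
            rw [← Real.norm_eq_abs]
            refine norm_integral_le_of_norm_le hw (Filter.Eventually.of_forall fun y => ?_)
            rw [Real.norm_eq_abs]
            simpa using H.gg_lip (t+1) hL hf y.1 y.1 (emp N y.2) Tm
        _ = L * (1 + LPi) * ∫ x, W1 (emp N x) Tm ∂P := by
            rw [integral_const_mul, integral_fun_snd (μ := R) (ν := P) (fun x => W1 (emp N x) Tm)]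
            simp [R]
        _ ≤ L * (1 + LPi) * e := mul_le_mul_of_nonneg_left hle (by positivity)
    have hj1 : Integrable (fun s : X0 × U0 × (Fin N → X) =>
        ∫ y, gg q0 (t + 1) f y.1 (emp N y.2)
        ∂((p0 s.1 s.2.1 (emp N s.2.2) : Measure X0).prod
          (Measure.pi fun i => (K (s.2.2 i) s.1 s.2.1 (emp N s.2.2) : Measure X)))) Q :=
      hl_integrable hmeas (C := C) fun s => by
        have := norm_integral_le_of_norm_le_const
          (μ := ((p0 s.1 s.2.1 (emp N s.2.2) : Measure X0).prod
            (Measure.pi fun i => (K (s.2.2 i) s.1 s.2.1 (emp N s.2.2) : Measure X))))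
          (f := fun y => gg q0 (t + 1) f y.1 (emp N y.2)) (C := C)
          (Filter.Eventually.of_forall fun y => gg_bdd (t+1) hC y.1 (emp N y.2))
        simpa using this
    have hj2 : Integrable (fun s : X0 × U0 × (Fin N → X) =>
        GG p0 q0 T t f s.1 s.2.1 (emp N s.2.2)) Q :=
      hl_integrable (fN_meas (by positivity) hG N) (C := C') fun s => hC' _ _ _
    have hfirst : |∫ s, (∫ y, gg q0 (t + 1) f y.1 (emp N y.2)
        ∂((p0 s.1 s.2.1 (emp N s.2.2) : Measure X0).prod
          (Measure.pi fun i => (K (s.2.2 i) s.1 s.2.1 (emp N s.2.2) : Measure X)))) ∂Q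
        - ∫ s, GG p0 q0 T t f s.1 s.2.1 (emp N s.2.2) ∂Q| ≤ L * (1 + LPi) * e := by
      rw [← integral_sub hj1 hj2]
      rw [← Real.norm_eq_abs]
      refine (norm_integral_le_of_norm_le_const (C := L * (1 + LPi) * e)
        (Filter.Eventually.of_forall fun s => ?_)).trans ?_
      · rw [Real.norm_eq_abs]; exact hpt s
      · simp
    calc _ ≤ _ := abs_sub_le _ (∫ s, GG p0 q0 T t f s.1 s.2.1 (emp N s.2.2) ∂Q) _
      _ ≤ L * (1 + LPi) * e + hlc (1 + LPi) b t * (L * b) * e := add_le_add hfirst hIH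
      _ = _ := by simp only [hlc]; ring

end HLH
end dyn
/-- uniform convergence of objectives for M3FC. Under Lipschitz `p`, `p⁰`, `r`,
`γ ∈ (0,1)` and equi-Lipschitz policy classes `Π`, `Π⁰`, the `N`-agent objective
`J^N(π,π⁰) = E[Σ_t γ^t r(x⁰_t,u⁰_t,μ^N_t)]` converges to the limiting M3FC objective
`J(Φ⁻¹(π),π⁰) = E[Σ_t γ^t r(x⁰_t,u⁰_t,μ_t)]`, uniformly over `(π,π⁰) ∈ Π × Π⁰`. -/
theorem statement16 {X U X0 U0 : Type*}
    [MetricSpace X] [CompactSpace X] [MeasurableSpace X] [BorelSpace X] [Nonempty X]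
    [MetricSpace U] [CompactSpace U] [MeasurableSpace U] [BorelSpace U]
    [MetricSpace X0] [CompactSpace X0] [MeasurableSpace X0] [BorelSpace X0]
    [MetricSpace U0] [CompactSpace U0] [MeasurableSpace U0] [BorelSpace U0]
    (γ : ℝ) (hγ0 : 0 < γ) (hγ1 : γ < 1) (Lp Lp0 Lr LPi : ℝ)
    (p : X → U → X0 → U0 → ProbabilityMeasure X → ProbabilityMeasure X)
    (hp : ∀ (x x' : X) (u u' : U) (x0 x0' : X0) (u0 u0' : U0)
        (μ μ' : ProbabilityMeasure X) (f : X → ℝ), LipschitzWith 1 f →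
      |∫ y, f y ∂(p x u x0 u0 μ : Measure X) - ∫ y, f y ∂(p x' u' x0' u0' μ' : Measure X)|
        ≤ Lp * (dist x x' + dist u u' + dist x0 x0' + dist u0 u0' + W1 μ μ'))
    (p0 : X0 → U0 → ProbabilityMeasure X → ProbabilityMeasure X0)
    (hp0 : ∀ (x0 x0' : X0) (u0 u0' : U0) (μ μ' : ProbabilityMeasure X) (f : X0 → ℝ),
        LipschitzWith 1 f →
      |∫ y, f y ∂(p0 x0 u0 μ : Measure X0) - ∫ y, f y ∂(p0 x0' u0' μ' : Measure X0)|
        ≤ Lp0 * (dist x0 x0' + dist u0 u0' + W1 μ μ'))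
    (r : X0 → U0 → ProbabilityMeasure X → ℝ)
    (hr : ∀ (x0 x0' : X0) (u0 u0' : U0) (μ μ' : ProbabilityMeasure X),
      |r x0 u0 μ - r x0' u0' μ'| ≤ Lr * (dist x0 x0' + dist u0 u0' + W1 μ μ'))
    (Pi : Set (ℕ → X → X0 → ProbabilityMeasure X → ProbabilityMeasure U))
    (hPi : ∀ π ∈ Pi, ∀ (t : ℕ) (x x' : X) (x0 x0' : X0) (μ μ' : ProbabilityMeasure X)
        (g : U → ℝ), LipschitzWith 1 g →
      |∫ u, g u ∂(π t x x0 μ : Measure U) - ∫ u, g u ∂(π t x' x0' μ' : Measure U)|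
        ≤ LPi * (dist x x' + dist x0 x0' + W1 μ μ'))
    (Pi0 : Set (ℕ → X0 → ProbabilityMeasure X → ProbabilityMeasure U0))
    (hPi0 : ∀ π0 ∈ Pi0, ∀ (t : ℕ) (x0 x0' : X0) (μ μ' : ProbabilityMeasure X) (g : U0 → ℝ),
        LipschitzWith 1 g →
      |∫ u, g u ∂(π0 t x0 μ : Measure U0) - ∫ u, g u ∂(π0 t x0' μ' : Measure U0)|
        ≤ LPi * (dist x0 x0' + W1 μ μ'))
    (μ0 : ProbabilityMeasure X) (x00 : X0)
    (Tcl : (ℕ → X → X0 → ProbabilityMeasure X → ProbabilityMeasure U) →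
      ℕ → X0 → U0 → ProbabilityMeasure X → ProbabilityMeasure X)
    (hTcl : ∀ q ∈ Pi, ∀ (t : ℕ) (x0 : X0) (u0 : U0) (μ : ProbabilityMeasure X),
      (Tcl q t x0 u0 μ : Measure X) = (μ : Measure X).bind fun x =>
        ((q t x x0 μ : Measure U)).bind fun u => (p x u x0 u0 μ : Measure X)) :
    ∀ ε > (0 : ℝ), ∃ N0 : ℕ, ∀ N ≥ N0, ∀ q ∈ Pi, ∀ q0 ∈ Pi0,
      |(∑' t : ℕ, γ ^ t * ∫ s, r s.1 s.2.1 (emp N s.2.2) ∂(m3LawN p p0 q q0 μ0 x00 N t))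
        - ∑' t : ℕ, γ ^ t * ∫ s, r s.1 s.2.1 s.2.2 ∂(m3LimLaw p0 q0 (Tcl q) μ0 x00 t)|
        ≤ ε := by
  intro ε hε
  have hup : ∀ {a L d : ℝ}, 0 ≤ d → a ≤ L * d → a ≤ |L| * d := fun hd h =>
    h.trans (mul_le_mul_of_nonneg_right (le_abs_self _) hd)
  have HH : ∀ q ∈ Pi, ∀ q0 ∈ Pi0, HLH |Lp| |Lp0| |LPi| p p0 q q0 (Tcl q) := by
    intro q hq q0 hq0
    refine ⟨abs_nonneg _, abs_nonneg _, abs_nonneg _, ?_, ?_, ?_, ?_, hTcl q hq⟩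
    · intro x x' u u' x0 x0' u0 u0' μ μ' f hf
      have := hl_W1_nonneg μ μ'
      exact hup (by positivity) (hp x x' u u' x0 x0' u0 u0' μ μ' f hf)
    · intro x0 x0' u0 u0' μ μ' f hf
      have := hl_W1_nonneg μ μ'
      exact hup (by positivity) (hp0 x0 x0' u0 u0' μ μ' f hf)
    · intro t x x' x0 x0' μ μ' f hf
      have := hl_W1_nonneg μ μ'
      exact hup (by positivity) (hPi q hq t x x' x0 x0' μ μ' f hf)
    · intro t x0 x0' μ μ' f hf
      have := hl_W1_nonneg μ μ'
      exact hup (by positivity) (hPi0 q0 hq0 t x0 x0' μ μ' f hf)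
  have Hr : HLS |Lr| r := by
    intro x0 x0' u0 u0' μ μ'
    have := hl_W1_nonneg μ μ'
    exact hup (by positivity) (hr x0 x0' u0 u0' μ μ')
  obtain ⟨R, hR0, hR⟩ := Hr.bdd (abs_nonneg _)
  -- per-time uniform convergence
  have hconv : ∀ (t : ℕ) (δ : ℝ), 0 < δ → ∃ N0 : ℕ, ∀ N ≥ N0, ∀ q ∈ Pi, ∀ q0 ∈ Pi0,
      |∫ s, r s.1 s.2.1 (emp N s.2.2) ∂(m3LawN p p0 q q0 μ0 x00 N t)
        - ∫ s, r s.1 s.2.1 s.2.2 ∂(m3LimLaw p0 q0 (Tcl q) μ0 x00 t)| ≤ δ := by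
    intro t δ hδ
    set c := hlc (1 + |LPi|)
      ((1 + |LPi|) * (1 + |Lp0|) * (1 + |Lp| * (1 + |LPi|) * (1 + 1))) t * |Lr| with hc
    have he : 0 < δ / (|c| + 1) := by positivity
    obtain ⟨N0, hN0, hN⟩ := hl_lln (X := X) he
    refine ⟨N0, fun N hNN q hq q0 hq0 => ?_⟩
    have := (HH q hq q0 hq0).main μ0 x00 (N := N) (by omega) (hN N hNN) t |Lr| (abs_nonneg _) r Hr
    refine this.trans ?_
    rw [← hc]
    calc c * (δ / (|c| + 1)) ≤ (|c| + 1) * (δ / (|c| + 1)) :=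
          mul_le_mul_of_nonneg_right (by linarith [le_abs_self c]) he.le
      _ = δ := by field_simp
  have hA : ∀ (N t : ℕ), ∀ q ∈ Pi, ∀ q0 ∈ Pi0,
      |∫ s, r s.1 s.2.1 (emp N s.2.2) ∂(m3LawN p p0 q q0 μ0 x00 N t)| ≤ R := by
    intro N t q hq q0 hq0
    haveI := (HH q hq q0 hq0).N_prob μ0 x00 N t
    rw [← Real.norm_eq_abs]
    refine (norm_integral_le_of_norm_le_const (C := R)
        (Filter.Eventually.of_forall fun s => ?_)).trans ?_
    · rw [Real.norm_eq_abs]; exact hR _ _ _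
    · simp
  have hB : ∀ (t : ℕ), ∀ q ∈ Pi, ∀ q0 ∈ Pi0,
      |∫ s, r s.1 s.2.1 s.2.2 ∂(m3LimLaw p0 q0 (Tcl q) μ0 x00 t)| ≤ R := by
    intro t q hq q0 hq0
    haveI := (HH q hq q0 hq0).lim_prob μ0 x00 t
    rw [← Real.norm_eq_abs]
    refine (norm_integral_le_of_norm_le_const (C := R)
        (Filter.Eventually.of_forall fun s => ?_)).trans ?_
    · rw [Real.norm_eq_abs]; exact hR _ _ _
    · simp
  have hgeo : ∀ C : ℝ, Summable fun t : ℕ => γ ^ t * C := fun C =>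
    (summable_geometric_of_lt_one hγ0.le hγ1).mul_right C
  have hsum : ∀ (C : ℝ) (a : ℕ → ℝ), (∀ t, |a t| ≤ C) → Summable fun t : ℕ => γ ^ t * a t := by
    intro C a ha
    refine Summable.of_norm_bounded (hgeo C) fun t => ?_
    rw [norm_mul, Real.norm_eq_abs, Real.norm_eq_abs, abs_of_nonneg (by positivity)]
    exact mul_le_mul_of_nonneg_left (ha t) (by positivity)
  let 𝓕 : Filter (ℕ × (ℕ → X → X0 → ProbabilityMeasure X → ProbabilityMeasure U) ×
      (ℕ → X0 → ProbabilityMeasure X → ProbabilityMeasure U0)) :=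
    Filter.atTop ×ˢ Filter.principal (Pi ×ˢ Pi0)
  have hev : ∀ P : ℕ → (ℕ → X → X0 → ProbabilityMeasure X → ProbabilityMeasure U) →
      (ℕ → X0 → ProbabilityMeasure X → ProbabilityMeasure U0) → Prop,
      (∀ᶠ z in 𝓕, P z.1 z.2.1 z.2.2) ↔ ∃ N0, ∀ N ≥ N0, ∀ q ∈ Pi, ∀ q0 ∈ Pi0, P N q q0 := by
    intro P
    simp only [𝓕, Filter.eventually_prod_principal_iff, Filter.eventually_atTop, Prod.forall,
      Set.mem_prod, and_imp]
    exact ⟨fun ⟨a, h⟩ => ⟨a, fun N hN q hq q0 hq0 => h N hN q q0 hq hq0⟩,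
      fun ⟨a, h⟩ => ⟨a, fun N hN q q0 hq hq0 => h N hN q hq q0 hq0⟩⟩
  have hT := tendsto_tsum_of_dominated_convergence (𝓕 := 𝓕) (bound := fun t => γ ^ t * (2 * R))
    (f := fun z t => γ ^ t *
      (∫ s, r s.1 s.2.1 (emp z.1 s.2.2) ∂(m3LawN p p0 z.2.1 z.2.2 μ0 x00 z.1 t)
        - ∫ s, r s.1 s.2.1 s.2.2 ∂(m3LimLaw p0 z.2.2 (Tcl z.2.1) μ0 x00 t)))
    (g := fun _ => (0 : ℝ)) (hgeo _) (by
      intro t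
      rw [← mul_zero (γ ^ t)]
      refine Filter.Tendsto.const_mul _ ?_
      rw [Metric.tendsto_nhds]
      intro δ hδ
      refine (hev (fun N q q0 => dist (∫ s, r s.1 s.2.1 (emp N s.2.2) ∂(m3LawN p p0 q q0 μ0 x00 N t)
        - ∫ s, r s.1 s.2.1 s.2.2 ∂(m3LimLaw p0 q0 (Tcl q) μ0 x00 t)) 0 < δ)).2 ?_
      obtain ⟨N0, h⟩ := hconv t (δ / 2) (by linarith)
      refine ⟨N0, fun N hN q hq q0 hq0 => ?_⟩
      rw [Real.dist_eq, sub_zero]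
      exact (h N hN q hq q0 hq0).trans_lt (by linarith)) (by
      refine (hev (fun N q q0 => ∀ t, ‖γ ^ t * (∫ s, r s.1 s.2.1 (emp N s.2.2) ∂(m3LawN p p0 q q0 μ0 x00 N t)
        - ∫ s, r s.1 s.2.1 s.2.2 ∂(m3LimLaw p0 q0 (Tcl q) μ0 x00 t))‖ ≤ γ ^ t * (2 * R))).2 ?_
      refine ⟨0, fun N _ q hq q0 hq0 t => ?_⟩
      rw [norm_mul, Real.norm_eq_abs, Real.norm_eq_abs, abs_of_nonneg (by positivity)]
      refine mul_le_mul_of_nonneg_left ((abs_sub _ _).trans ?_) (by positivity)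
      linarith [hA N t q hq q0 hq0, hB t q hq q0 hq0])
  rw [tsum_zero, Metric.tendsto_nhds] at hT
  obtain ⟨N0, h⟩ := (hev (fun N q q0 => dist (∑' t : ℕ, γ ^ t *
      (∫ s, r s.1 s.2.1 (emp N s.2.2) ∂(m3LawN p p0 q q0 μ0 x00 N t)
        - ∫ s, r s.1 s.2.1 s.2.2 ∂(m3LimLaw p0 q0 (Tcl q) μ0 x00 t))) 0 < ε)).1 (hT ε hε)
  refine ⟨N0, fun N hN q hq q0 hq0 => ?_⟩
  have h1 := h N hN q hq q0 hq0
  rw [Real.dist_eq, sub_zero] at h1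
  rw [← (hsum R _ fun t => hA N t q hq q0 hq0).tsum_sub (hsum R _ fun t => hB t q hq q0 hq0)]
  simp only [← mul_sub]
  exact h1.le
end
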